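/- Under Conditions (A)–(D) with b_j ≠ 0 for all j ≥ 1, let u₀ be a random variable in H, independent of {η_k}, whose law is supported by 𝒜, and for an integer m ≥ 1 let ζ_k^m = k⁻¹ Σ_{n=0}^{k−1} δ_{(u_n,…,u_{n+m−1})}. Then the family {ζ_k^m, k ≥ 1}, regarded as random probability measures on 𝒜^{(m)}, satisfies the large deviation principle with a good rate function I_m : 𝒫(𝒜^{(m)}) → [0,+∞] which can be written as I_m(σ) = sup_{V ∈ C(𝒜^{(m)})} (⟨V,σ⟩ − Q_m(V)), where Q_m is a 1-Lipschitz convex function on C(𝒜^{(m)}) with Q_m(C) = C for every constant C ∈ ℝ. -/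

import Mathlib

open MeasureTheory ProbabilityTheory Filter Topology BoundedContinuousFunction
open scoped ENNReal NNReal Pointwise

noncomputable section

/-- The sets `𝒜_k(B)`: `𝒜_0(B) = B`, `𝒜_k(B) = S(𝒜_{k-1}(B)) + 𝒦`. -/
def attain {H : Type*} [AddCommGroup H] (S : H → H) (K : Set H) (B : Set H) : ℕ → Set H
  | 0 => B
  | n + 1 => S '' attain S K B n + K

/-- The domain of attainability `𝒜(B)` from `B`: the closure of `⋃_k 𝒜_k(B)`. -/
def attainDom {H : Type*} [AddCommGroup H] [TopologicalSpace H]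
    (S : H → H) (K : Set H) (B : Set H) : Set H :=
  closure (⋃ n, attain S K B n)

variable {H : Type} [NormedAddCommGroup H] [InnerProductSpace ℝ H] [CompleteSpace H]

/-- The orthogonal projection `𝖯_N` onto the span of the first `N` vectors of an orthonormal
basis. -/
def projB (e : HilbertBasis ℕ ℝ H) (N : ℕ) (u : H) : H :=
  ∑ j ∈ Finset.range N, e.repr u j • (e j : H)

/-- Condition (A): regularity and stability. -/
def CondA (S : H → H) : Prop :=
  ContDiff ℝ 1 S ∧
  ∀ R r : ℝ, 0 < r → r < R →
    ∃ C : ℝ, 0 < C ∧ ∃ a : ℝ, 0 < a ∧ a < 1 ∧ ∃ n₀ : ℕ, 1 ≤ n₀ ∧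
      (∀ u₁ ∈ Metric.closedBall (0 : H) R, ∀ u₂ ∈ Metric.closedBall (0 : H) R,
          ‖S u₁ - S u₂‖ ≤ C * ‖u₁ - u₂‖) ∧
      ∀ u ∈ Metric.closedBall (0 : H) R, ∀ n : ℕ, n₀ ≤ n →
          ‖S^[n] u‖ ≤ max (a * ‖u‖) r

/-- Condition (B): dissipativity. -/
def CondB (S : H → H) (K : Set H) : Prop :=
  ∃ ρ : ℝ, 0 < ρ ∧ ∃ k₀ : ℝ → ℕ, Monotone k₀ ∧
    ∀ R : ℝ, 0 ≤ R → ∀ k : ℕ, k₀ R ≤ k →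
      attain S K (Metric.closedBall 0 R) k ⊆ Metric.closedBall (0 : H) ρ

/-- Condition (C): squeezing. -/
def CondC (S : H → H) (e : HilbertBasis ℕ ℝ H) : Prop :=
  ∀ R : ℝ, 0 < R → ∃ γ : ℕ → ℝ, (∀ N, 0 < γ N) ∧ Antitone γ ∧
    Tendsto γ atTop (𝓝 0) ∧
    ∀ N : ℕ, ∀ u₁ ∈ Metric.closedBall (0 : H) R, ∀ u₂ ∈ Metric.closedBall (0 : H) R,
      ‖(S u₁ - S u₂) - projB e N (S u₁ - S u₂)‖ ≤ γ N * ‖u₁ - u₂‖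

/-- Condition (D): structure of the noise, `η_k = ∑_j b_j ξ_{jk} e_j` with `∑ b_j² < ∞`,
independent scalar `ξ_{jk}` whose laws have Lipschitz densities `p_j` with `p_j(0) > 0` and
support in `[-1,1]`. -/
def CondD [MeasurableSpace H] {Ω : Type*} [MeasurableSpace Ω] (P : Measure Ω)
    (e : HilbertBasis ℕ ℝ H) (η : ℕ → Ω → H)
    (b : ℕ → ℝ) (ξ : ℕ → ℕ → Ω → ℝ) (p : ℕ → ℝ → ℝ) : Prop :=
  (∀ j, 0 ≤ b j) ∧ Summable (fun j => (b j) ^ 2) ∧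
  (∀ k ω, HasSum (fun j => (b j * ξ j k ω) • (e j : H)) (η k ω)) ∧
  (∀ j k, Measurable (ξ j k)) ∧
  iIndepFun (fun jk : ℕ × ℕ => ξ jk.1 jk.2) P ∧
  (∀ j k, Measure.map (ξ j k) P
      = (volume : Measure ℝ).withDensity fun x => ENNReal.ofReal (p j x)) ∧
  (∀ j, ∃ L : ℝ≥0, LipschitzWith L (p j)) ∧
  (∀ j, 0 < p j 0) ∧
  (∀ j, Function.support (p j) ⊆ Set.Icc (-1 : ℝ) 1)

/-- The trajectory `u_k = S(u_{k-1}) + η_k` of the random dynamical system issued from `u₀`. -/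
def traj {Ω : Type*} (S : H → H) (η : ℕ → Ω → H) (u₀ : Ω → H) : ℕ → Ω → H
  | 0 => u₀
  | k + 1 => fun ω => S (traj S η u₀ k ω) + η (k + 1) ω

/-- The (topological) support of a measure. -/
def msupp {X : Type*} [TopologicalSpace X] [MeasurableSpace X] (μ : Measure X) : Set X :=
  {x | ∀ U ∈ 𝓝 x, 0 < μ U}

/-- The occupation measures `ζ_k = k⁻¹ ∑_{n=0}^{k-1} δ_{x_n}` of a sequence. -/
def occ {X : Type*} [MeasurableSpace X] (x : ℕ → X) (k : ℕ) : ProbabilityMeasure X :=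
  if hk : k = 0 then ⟨Measure.dirac (x 0), Measure.dirac.isProbabilityMeasure⟩
  else
    ⟨(k : ℝ≥0∞)⁻¹ • ∑ n ∈ Finset.range k, Measure.dirac (x n), by
      refine ⟨?_⟩
      simp only [Measure.smul_apply, Measure.finset_sum_apply, measure_univ,
        Finset.sum_const, Finset.card_range, nsmul_eq_mul, mul_one, smul_eq_mul]
      exact ENNReal.inv_mul_cancel (Nat.cast_ne_zero.mpr hk) (ENNReal.natCast_ne_top k)⟩

/-- Large deviation principle for the sequence of events `prob k` (the laws of random
probability measures in `Z`), with rate function `I`. -/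
def LDPof {Z : Type*} [TopologicalSpace Z] (prob : ℕ → Set Z → ℝ≥0∞) (I : Z → ℝ≥0∞) : Prop :=
  (∀ F : Set Z, IsClosed F →
    Filter.limsup (fun k : ℕ => (((k : ℝ)⁻¹ : ℝ) : EReal) * ENNReal.log (prob k F)) atTop
      ≤ -(⨅ σ ∈ F, (I σ : EReal))) ∧
  (∀ G : Set Z, IsOpen G →
    -(⨅ σ ∈ G, (I σ : EReal))
      ≤ Filter.liminf (fun k : ℕ => (((k : ℝ)⁻¹ : ℝ) : EReal) * ENNReal.log (prob k G)) atTop)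

/-- A good rate function: lower semicontinuous with compact level sets. -/
def GoodRate {Z : Type*} [TopologicalSpace Z] (I : Z → ℝ≥0∞) : Prop :=
  LowerSemicontinuous I ∧ ∀ c : ℝ≥0∞, c ≠ ⊤ → IsCompact {σ : Z | I σ ≤ c}

/-- The set `𝒜^{(m)}` of `m`-segments of trajectories: vectors `(v₁,…,v_m) ∈ H^m` with
`v₁ ∈ 𝒜` and `v_k = S(v_{k-1}) + ζ'_k`, `ζ'_k ∈ 𝒦`, for `2 ≤ k ≤ m`. -/
def attainM {H : Type*} [AddCommGroup H] [TopologicalSpace H]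
    (S : H → H) (K : Set H) (A : Set H) (m : ℕ) : Set (Fin m → H) :=
  {v | (∀ h : 0 < m, v ⟨0, h⟩ ∈ A) ∧
    ∀ i : ℕ, ∀ h : i + 1 < m,
      ∃ z ∈ K, v ⟨i + 1, h⟩ = S (v ⟨i, Nat.lt_of_succ_lt h⟩) + z}


set_option linter.unusedSectionVars false
set_option linter.unusedVariables false
section abstractZ

variable {W G E : Type} [MeasurableSpace W] [MeasurableSpace G]
  [NormedAddCommGroup E]

/-- Feynman-Kac functional. -/
def ZZ (l : Measure G) (nx : W → G → W) (V : W → E) (F : E → ℝ) : ℕ → E → W → ℝ≥0∞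
  | 0, y, _ => ENNReal.ofReal (Real.exp (F y))
  | k + 1, y, w => ∫⁻ h, ZZ l nx V F k (y + V w) (nx w h) ∂l

/-- Markov operator. -/
def TT (l : Measure G) (nx : W → G → W) (f : W → ℝ≥0∞) (w : W) : ℝ≥0∞ := ∫⁻ h, f (nx w h) ∂l

variable (l : Measure G) [IsProbabilityMeasure l] (nx : W → G → W) (V : W → E)

lemma oe_mul (a b : ℝ) : ENNReal.ofReal (Real.exp (a + b)) =
    ENNReal.ofReal (Real.exp a) * ENNReal.ofReal (Real.exp b) := by
  rw [Real.exp_add, ENNReal.ofReal_mul (Real.exp_pos _).le]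

lemma oe_le {a b : ℝ} (h : a ≤ b) : ENNReal.ofReal (Real.exp a) ≤ ENNReal.ofReal (Real.exp b) :=
  ENNReal.ofReal_le_ofReal (Real.exp_le_exp.2 h)

lemma ZZ_measurable [MeasurableSpace E] [BorelSpace E] [SecondCountableTopology E]
    (hnx : Measurable (Function.uncurry nx)) (hV : Measurable V) (F : E → ℝ) (hF : Measurable F)
    (k : ℕ) : Measurable (fun p : E × W => ZZ l nx V F k p.1 p.2) := by
  induction k with
  | zero =>
    simp only [ZZ]
    exact (Real.measurable_exp.comp (hF.comp measurable_fst)).ennreal_ofReal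
  | succ k ih =>
    simp only [ZZ]
    refine Measurable.lintegral_prod_right' (f := fun q : (E × W) × G =>
      ZZ l nx V F k (q.1.1 + V q.1.2) (nx q.1.2 q.2)) ?_
    have h1 : Measurable (fun q : (E × W) × G => (q.1.1 + V q.1.2, nx q.1.2 q.2)) := by
      refine Measurable.prodMk ?_ ?_
      · exact (measurable_fst.comp measurable_fst).add (hV.comp (measurable_snd.comp measurable_fst))
      · exact hnx.comp ((measurable_snd.comp measurable_fst).prodMk measurable_snd)
    exact ih.comp h1

lemma ZZ_shift (F F' : E → ℝ) (c : ℝ) (k : ℕ) (y y' : E) (w : W)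
    (h : ∀ z, F (y + z) ≤ c + F' (y' + z)) :
    ZZ l nx V F k y w ≤ ENNReal.ofReal (Real.exp c) * ZZ l nx V F' k y' w := by
  induction k generalizing y y' w with
  | zero =>
    simp only [ZZ]
    rw [← oe_mul]
    have := h 0
    simp only [add_zero] at this
    exact oe_le this
  | succ k ih =>
    simp only [ZZ]
    rw [← lintegral_const_mul' _ _ ENNReal.ofReal_ne_top]
    refine lintegral_mono fun g => ih _ _ _ ?_
    intro z
    simpa [add_assoc] using h (V w + z)

lemma lip_shift {F : E → ℝ} (hF : LipschitzWith 1 F) (y y' : E) (z : E) :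
    F (y + z) ≤ ‖y - y'‖ + F (y' + z) := by
  have := hF.dist_le_mul (y + z) (y' + z)
  rw [Real.dist_eq] at this
  simp [dist_eq_norm] at this
  linarith [le_abs_self (F (y + z) - F (y' + z))]

lemma ZZ_lip {F : E → ℝ} (hF : LipschitzWith 1 F) (k : ℕ) (y y' : E) (w : W) :
    ZZ l nx V F k y w ≤ ENNReal.ofReal (Real.exp ‖y - y'‖) * ZZ l nx V F k y' w :=
  ZZ_shift l nx V F F _ k y y' w (lip_shift hF y y')

lemma ZZ_succ_ge {F : E → ℝ} (hF : LipschitzWith 1 F) {B : ℝ} (hB : ∀ w, ‖V w‖ ≤ B)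
    (k : ℕ) (y : E) (w : W) :
    ZZ l nx V F k y w ≤ ENNReal.ofReal (Real.exp B) * ZZ l nx V F (k + 1) y w := by
  induction k generalizing y w with
  | zero =>
    simp only [ZZ, lintegral_const, measure_univ, mul_one]
    rw [← oe_mul]
    have := lip_shift hF y (y + V w) 0
    simp at this
    exact oe_le (this.trans (by linarith [hB w]))
  | succ k ih =>
    rw [ZZ, ZZ, ← lintegral_const_mul' _ _ ENNReal.ofReal_ne_top]
    exact lintegral_mono fun g => ih _ _

lemma ZZ_succ_le {F : E → ℝ} (hF : LipschitzWith 1 F) {B : ℝ} (hB : ∀ w, ‖V w‖ ≤ B)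
    (k : ℕ) (y : E) (w : W) :
    ZZ l nx V F (k + 1) y w ≤ ENNReal.ofReal (Real.exp B) * ZZ l nx V F k y w := by
  induction k generalizing y w with
  | zero =>
    simp only [ZZ, lintegral_const, measure_univ, mul_one]
    rw [← oe_mul]
    have := lip_shift hF (y + V w) y 0
    simp at this
    exact oe_le (this.trans (by linarith [hB w]))
  | succ k ih =>
    rw [ZZ, ZZ, ← lintegral_const_mul' _ _ ENNReal.ofReal_ne_top]
    exact lintegral_mono fun g => ih _ _

lemma ZZ_add_le {F : E → ℝ} (hF : LipschitzWith 1 F) {B : ℝ} (hB : ∀ w, ‖V w‖ ≤ B)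
    (k j : ℕ) (y : E) (w : W) :
    ZZ l nx V F (k + j) y w ≤ ENNReal.ofReal (Real.exp (j * B)) * ZZ l nx V F k y w := by
  induction j with
  | zero => simp
  | succ j ih =>
    refine (ZZ_succ_le l nx V hF hB (k + j) y w).trans ?_
    push_cast
    rw [add_mul, one_mul, add_comm (_ * B), oe_mul, mul_assoc]
    gcongr

lemma ZZ_bounds {F : E → ℝ} (hF : LipschitzWith 1 F) {B : ℝ} (hB : ∀ w, ‖V w‖ ≤ B)
    (k : ℕ) (y : E) (w : W) :
    ENNReal.ofReal (Real.exp (F y - k * B)) ≤ ZZ l nx V F k y w ∧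
    ZZ l nx V F k y w ≤ ENNReal.ofReal (Real.exp (F y + k * B)) := by
  constructor
  · induction k with
    | zero => simp [ZZ]
    | succ k ih =>
      have := ih.trans (ZZ_succ_ge l nx V hF hB k y w)
      rw [show F y - k * B = B + (F y - (k + 1 : ℕ) * B) by push_cast; ring, oe_mul] at this
      rwa [ENNReal.mul_le_mul_iff_right] at this
      · simp [Real.exp_pos]
      · simp
  · have := ZZ_add_le l nx V hF hB 0 k y w
    simp only [ZZ, zero_add] at this
    rwa [← oe_mul, add_comm] at this

lemma TT_ZZ {F : E → ℝ} (hF : LipschitzWith 1 F) {B : ℝ} (hB : ∀ w, ‖V w‖ ≤ B)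
    (k j : ℕ) (y : E) (w : W) :
    ((TT l nx)^[j] (ZZ l nx V F k y)) w ≤ ENNReal.ofReal (Real.exp (j * B)) *
      ZZ l nx V F (k + j) y w := by
  induction j generalizing w with
  | zero => simp
  | succ j ih =>
    rw [Function.iterate_succ_apply', TT]
    calc ∫⁻ h, (TT l nx)^[j] (ZZ l nx V F k y) (nx w h) ∂l
        ≤ ∫⁻ h, ENNReal.ofReal (Real.exp ((j + 1 : ℕ) * B)) *
            ZZ l nx V F (k + j) (y + V w) (nx w h) ∂l := by
          refine lintegral_mono fun h => (ih _).trans ?_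
          have := ZZ_lip l nx V hF (k + j) y (y + V w) (nx w h)
          have h2 : ENNReal.ofReal (Real.exp ‖y - (y + V w)‖) ≤ ENNReal.ofReal (Real.exp B) := by
            apply oe_le; simpa using hB w
          push_cast
          rw [add_mul, one_mul, oe_mul, mul_assoc]
          gcongr
          exact this.trans (by gcongr)
      _ = _ := by
          rw [lintegral_const_mul' _ _ ENNReal.ofReal_ne_top]; rfl

lemma ZZ_super {K : Set G} {A : Set W} (hl : ∀ᵐ g ∂l, g ∈ K)
    (hA : ∀ w ∈ A, ∀ g ∈ K, nx w g ∈ A) (F F1 F2 : E → ℝ) (k j : ℕ) (y : E) (w : W) (hw : w ∈ A) (c : ℝ≥0∞)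
    (h : ∀ z z', F1 (y + z) + F2 z' ≤ F (y + z + z')) (hc : ∀ w ∈ A, c ≤ ZZ l nx V F2 j 0 w)
    (hct : c ≠ ⊤) :
    c * ZZ l nx V F1 k y w ≤ ZZ l nx V F (k + j) y w := by
  induction k generalizing y w with
  | zero =>
    rw [mul_comm, zero_add]
    simp only [ZZ]
    calc ENNReal.ofReal (Real.exp (F1 y)) * c ≤ ENNReal.ofReal (Real.exp (F1 y)) *
          ZZ l nx V F2 j 0 w := by gcongr; exact hc w hw
      _ ≤ ENNReal.ofReal (Real.exp (F1 y)) * (ENNReal.ofReal (Real.exp (- F1 y)) *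
          ZZ l nx V F j y w) := by
          gcongr
          apply ZZ_shift
          intro z
          have := h 0 z
          simp only [add_zero] at this
          rw [zero_add]; linarith
      _ = _ := by rw [← mul_assoc, ← oe_mul]; simp
  | succ k ih =>
    rw [show k + 1 + j = (k + j) + 1 by ring]
    simp only [ZZ]
    rw [← lintegral_const_mul' _ _ hct]
    refine lintegral_mono_ae ?_
    filter_upwards [hl] with g hg
    refine ih _ _ (hA w hw g hg) ?_
    intro z z'
    simpa [add_assoc] using h (V w + z) z'

end abstractZ

section harnack

variable {W G E : Type} [MeasurableSpace W] [MeasurableSpace G] [AddCommGroup G] [MeasurableAdd G]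
  [NormedAddCommGroup E] [MeasurableSpace E] [BorelSpace E] [SecondCountableTopology E]

lemma feller (l : Measure G) [IsProbabilityMeasure l] (nx : W → G → W) (V : W → E)
    {K : Set G} {A : Set W} (hl : ∀ᵐ g ∂l, g ∈ K) (hKm : MeasurableSet K)
    (hA : ∀ w ∈ A, ∀ g ∈ K, nx w g ∈ A)
    (hnx : Measurable (Function.uncurry nx)) (hVm : Measurable V)
    {B : ℝ} (hB : ∀ w, ‖V w‖ ≤ B) (D : W → W → ℝ) (hD0 : ∀ w w', 0 ≤ D w w')
    {q C ε Λ : ℝ} (hq0 : 0 ≤ q) (hq1 : q ≤ 1 / 2) (hq2 : q * Real.exp (2 * B) ≤ 1 / 2) (hC : 0 ≤ C)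
    (hΛ : 0 ≤ Λ)
    (hV : ∀ w ∈ A, ∀ w' ∈ A, ‖V w - V w'‖ ≤ ε + Λ * D w w')
    (hcoup : ∀ w ∈ A, ∀ w' ∈ A, ∃ h : G,
      (∀ g ∈ K, g + h ∈ K → D (nx w (g + h)) (nx w' g) ≤ q * D w w') ∧
      ∀ f : G → ℝ≥0∞, Measurable f → ∀ M : ℝ≥0∞, (∀ g, f g ≤ M) →
        ∫⁻ g, f g ∂l ≤ ∫⁻ g, f (g + h) ∂l + ENNReal.ofReal (C * D w w') * M)
    {F : E → ℝ} (hF : LipschitzWith 1 F) (k : ℕ) (y : E) (w w' : W) (hw : w ∈ A) (hw' : w' ∈ A) :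
    ZZ l nx V F k y w ≤ ENNReal.ofReal (Real.exp (2 * Λ * D w w' + k * ε)) * ZZ l nx V F k y w'
      + ENNReal.ofReal (2 * C * Real.exp (2 * B) * D w w') * ⨆ x ∈ A, ZZ l nx V F k y x := by
  induction k generalizing y w w' with
  | zero =>
    refine le_add_right ?_
    simp only [ZZ]
    rw [← oe_mul]
    apply oe_le
    have := mul_nonneg (mul_nonneg zero_le_two hΛ) (hD0 w w')
    simp; linarith
  | succ k ih =>
    set M := ⨆ x ∈ A, ZZ l nx V F (k + 1) y x with hM
    have hMk : ∀ x ∈ A, ZZ l nx V F k (y + V w) x ≤ ENNReal.ofReal (Real.exp (2 * B)) * M := by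
      intro x hx
      have h1 := ZZ_lip l nx V hF k (y + V w) y x
      have h2 := ZZ_succ_ge l nx V hF hB k y x
      have h3 : ZZ l nx V F (k + 1) y x ≤ M := le_iSup₂_of_le x hx le_rfl
      have h4 : ENNReal.ofReal (Real.exp ‖y + V w - y‖) ≤ ENNReal.ofReal (Real.exp B) := by
        apply oe_le; simpa using hB w
      rw [two_mul, oe_mul, mul_assoc]
      exact h1.trans (by gcongr; exact h2.trans (by gcongr))
    obtain ⟨h, hh1, hh2⟩ := hcoup w hw w' hw'
    set d := D w w' with hd
    have hd0 : 0 ≤ d := hD0 w w'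
    set f : G → ℝ≥0∞ := K.indicator fun g => ZZ l nx V F k (y + V w) (nx w g) with hf
    have hfm : Measurable f := by
      refine Measurable.indicator ?_ hKm
      have h1 := ZZ_measurable l nx V hnx hVm F hF.continuous.measurable k
      have h2 : Measurable (fun g : G => (y + V w, nx w g)) :=
        measurable_const.prodMk (hnx.comp (measurable_const.prodMk measurable_id))
      exact h1.comp h2
    have hfM : ∀ g, f g ≤ ENNReal.ofReal (Real.exp (2 * B)) * M := by
      intro g
      by_cases hg : g ∈ K
      · simpa [hf, hg] using hMk _ (hA w hw g hg)
      · simp [hf, hg]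
    have key := hh2 f hfm _ hfM
    have e1 : ZZ l nx V F (k + 1) y w = ∫⁻ g, f g ∂l := by
      rw [ZZ]
      refine lintegral_congr_ae ?_
      filter_upwards [hl] with g hg
      simp [hf, hg]
    have e2 : ∫⁻ g, f (g + h) ∂l ≤
        ENNReal.ofReal (Real.exp (2 * Λ * d + (k + 1 : ℕ) * ε)) * ZZ l nx V F (k + 1) y w'
        + ENNReal.ofReal (C * Real.exp (2 * B) * d) * M := by
      have : ∀ᵐ g ∂l, f (g + h) ≤ ENNReal.ofReal (Real.exp (2 * Λ * d + (k + 1 : ℕ) * ε)) *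
          ZZ l nx V F k (y + V w') (nx w' g) + ENNReal.ofReal (C * Real.exp (2 * B) * d) * M := by
        filter_upwards [hl] with g hg
        by_cases hg' : g + h ∈ K
        · simp only [hf, Set.indicator_of_mem hg']
          refine (ih (y + V w) _ _ (hA w hw _ hg') (hA w' hw' g hg)).trans ?_
          have hDq := hh1 g hg hg'
          have hMs : ⨆ x ∈ A, ZZ l nx V F k (y + V w) x ≤ ENNReal.ofReal (Real.exp (2 * B)) * M :=
            iSup₂_le hMk
          have h5 := ZZ_lip l nx V hF k (y + V w) (y + V w') (nx w' g)
          have h6 : ‖y + V w - (y + V w')‖ ≤ ε + Λ * d := by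
            rw [add_sub_add_left_eq_sub]; exact hV w hw w' hw'
          refine add_le_add ?_ ?_
          · refine (mul_le_mul_right h5 _).trans ?_
            rw [← mul_assoc, ← oe_mul]
            refine mul_le_mul_left (oe_le ?_) _
            push_cast
            have : 2 * Λ * D (nx w (g + h)) (nx w' g) ≤ Λ * d := by
              nlinarith [mul_le_mul_of_nonneg_right hq1 hd0]
            linarith
          · refine (mul_le_mul_right hMs _).trans ?_
            rw [← mul_assoc, ← ENNReal.ofReal_mul' (Real.exp_pos _).le]
            refine mul_le_mul_left (ENNReal.ofReal_le_ofReal ?_) _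
            have h8 : D (nx w (g + h)) (nx w' g) * Real.exp (2 * B) ≤ 1 / 2 * d := by
              calc D (nx w (g + h)) (nx w' g) * Real.exp (2 * B) ≤ (q * d) * Real.exp (2 * B) := by
                    gcongr
                _ = (q * Real.exp (2 * B)) * d := by ring
                _ ≤ _ := by gcongr
            calc 2 * C * Real.exp (2 * B) * D (nx w (g + h)) (nx w' g) * Real.exp (2 * B)
                = (2 * C * Real.exp (2 * B)) * (D (nx w (g + h)) (nx w' g) * Real.exp (2 * B)) := by
                  ring
              _ ≤ (2 * C * Real.exp (2 * B)) * (1 / 2 * d) := by gcongr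
              _ = _ := by ring
        · simp [hf, hg']
      refine (lintegral_mono_ae this).trans ?_
      rw [lintegral_add_right _ measurable_const, lintegral_const_mul' _ _ ENNReal.ofReal_ne_top]
      simp [ZZ]
    rw [e1]
    refine key.trans ((add_le_add_left e2 _).trans ?_)
    rw [add_assoc]
    gcongr
    rw [← mul_assoc, ← add_mul, ← ENNReal.ofReal_mul' (Real.exp_pos _).le,
      ← ENNReal.ofReal_add (by positivity) (by positivity)]
    gcongr
    apply le_of_eq; ring

lemma harnack (l : Measure G) [IsProbabilityMeasure l] (nx : W → G → W) (V : W → E)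
    {K : Set G} {A : Set W} (hl : ∀ᵐ g ∂l, g ∈ K) (hKm : MeasurableSet K)
    (hA : ∀ w ∈ A, ∀ g ∈ K, nx w g ∈ A)
    (hnx : Measurable (Function.uncurry nx)) (hVm : Measurable V)
    {B : ℝ} (hB : ∀ w, ‖V w‖ ≤ B) (D : W → W → ℝ) (hD0 : ∀ w w', 0 ≤ D w w')
    {q C ε Λ : ℝ} (hq0 : 0 ≤ q) (hq1 : q ≤ 1 / 2) (hq2 : q * Real.exp (2 * B) ≤ 1 / 2) (hC : 0 ≤ C)
    (hΛ : 0 ≤ Λ)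
    (hV : ∀ w ∈ A, ∀ w' ∈ A, ‖V w - V w'‖ ≤ ε + Λ * D w w')
    (hcoup : ∀ w ∈ A, ∀ w' ∈ A, ∃ h : G,
      (∀ g ∈ K, g + h ∈ K → D (nx w (g + h)) (nx w' g) ≤ q * D w w') ∧
      ∀ f : G → ℝ≥0∞, Measurable f → ∀ M : ℝ≥0∞, (∀ g, f g ≤ M) →
        ∫⁻ g, f g ∂l ≤ ∫⁻ g, f (g + h) ∂l + ENNReal.ofReal (C * D w w') * M)
    (hirr : ∀ δ : ℝ, 0 < δ → ∃ τ : ℕ, ∃ p : ℝ, 0 < p ∧ ∀ w ∈ A, ∀ w' ∈ A, ∀ f : W → ℝ≥0∞,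
      ∀ c : ℝ≥0∞, (∀ x ∈ A, D w' x < δ → c ≤ f x) → ENNReal.ofReal p * c ≤ ((TT l nx)^[τ] f) w) :
    ∃ C' : ℝ, ∀ F : E → ℝ, LipschitzWith 1 F → ∀ (k : ℕ) (y : E) (w w' : W), w ∈ A → w' ∈ A →
      ZZ l nx V F k y w ≤ ENNReal.ofReal (Real.exp (C' + k * ε)) * ZZ l nx V F k y w' := by
  set b := 2 * C * Real.exp (2 * B) with hb
  have hb0 : 0 ≤ b := by positivity
  set δ : ℝ := 1 / (4 * (b + 1)) with hδ
  have hδ0 : 0 < δ := by positivity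
  have hbδ : b * δ ≤ 1 / 4 := by
    rw [hδ, mul_one_div, div_le_div_iff₀ (by positivity) (by norm_num)]; linarith
  obtain ⟨τ, p, hp, hirr⟩ := hirr δ hδ0
  refine ⟨Real.log 4 + 2 * Λ * δ - Real.log p + 2 * (τ * B), ?_⟩
  intro F hF k y w' w hw' hw
  set M := ⨆ x ∈ A, ZZ l nx V F k y x with hM
  have hMtop : M ≠ ⊤ := by
    refine ne_top_of_le_ne_top ?_ (iSup₂_le fun x _ => (ZZ_bounds l nx V hF hB k y x).2)
    exact ENNReal.ofReal_ne_top
  have hwM : ZZ l nx V F k y w' ≤ M := le_iSup₂_of_le w' hw' le_rfl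
  have hMpos : M ≠ 0 := by
    have h1 := (ZZ_bounds l nx V hF hB k y w').1
    intro h0
    rw [h0] at hwM
    have := h1.trans hwM
    simp at this
    exact absurd this (not_le.2 (Real.exp_pos _))
  obtain ⟨x0, hx0A, hx0⟩ : ∃ x0 ∈ A, M / 2 < ZZ l nx V F k y x0 := by
    have := ENNReal.half_lt_self hMpos hMtop
    rw [hM, lt_iSup_iff] at this
    obtain ⟨x, hx⟩ := this
    rw [lt_iSup_iff] at hx
    obtain ⟨h, hx⟩ := hx
    exact ⟨x, h, hx⟩
  have hlow : ∀ x ∈ A, D x0 x < δ →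
      ENNReal.ofReal (Real.exp (-(Real.log 4 + 2 * Λ * δ + k * ε))) * M ≤ ZZ l nx V F k y x := by
    intro x hx hdx
    have h1 := feller l nx V hl hKm hA hnx hVm hB D hD0 hq0 hq1 hq2 hC hΛ hV hcoup hF k y x0 x
      hx0A hx
    have h2 : ENNReal.ofReal (2 * C * Real.exp (2 * B) * D x0 x) * M ≤ M / 4 := by
      rw [ENNReal.div_eq_inv_mul]
      gcongr
      rw [show (4 : ℝ≥0∞)⁻¹ = ENNReal.ofReal (1 / 4) by
        rw [one_div, ENNReal.ofReal_inv_of_pos (by norm_num)]; simp]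
      apply ENNReal.ofReal_le_ofReal
      refine le_trans ?_ hbδ
      gcongr
    have h3 : M / 2 ≤ ENNReal.ofReal (Real.exp (2 * Λ * δ + k * ε)) * ZZ l nx V F k y x + M / 4 := by
      refine hx0.le.trans (h1.trans (add_le_add ?_ h2))
      gcongr
    have h4 : M / 2 = M / 4 + M / 4 := by
      have h44 : M / 4 = M / 2 / 2 := by
        rw [div_eq_mul_inv, div_eq_mul_inv, div_eq_mul_inv, mul_assoc,
          ← ENNReal.mul_inv (by simp) (by simp)]
        norm_num
      rw [h44, ENNReal.add_halves]
    rw [h4] at h3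
    have h5 : M / 4 ≤ ENNReal.ofReal (Real.exp (2 * Λ * δ + k * ε)) * ZZ l nx V F k y x :=
      (ENNReal.add_le_add_iff_right (ENNReal.div_ne_top hMtop (by norm_num))).1 h3
    have h6 : ENNReal.ofReal (Real.exp (- Real.log 4)) * M = M / 4 := by
      rw [ENNReal.div_eq_inv_mul, Real.exp_neg, Real.exp_log (by norm_num),
        ENNReal.ofReal_inv_of_pos (by norm_num)]
      simp
    rw [show -(Real.log 4 + 2 * Λ * δ + k * ε) = -(2 * Λ * δ + k * ε) + (- Real.log 4) by ring,
      oe_mul, mul_assoc, h6]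
    refine (mul_le_mul_right h5 _).trans ?_
    rw [← mul_assoc, ← oe_mul]
    simp
  have h7 := hirr w hw x0 hx0A _ _ hlow
  have h8 := TT_ZZ l nx V hF hB k τ y w
  have h9 := ZZ_add_le l nx V hF hB k τ y w
  have h10 := h7.trans (h8.trans (mul_le_mul_right h9 _))
  rw [← mul_assoc, ← mul_assoc, ← oe_mul] at h10
  have hp' : ENNReal.ofReal p = ENNReal.ofReal (Real.exp (Real.log p)) := by rw [Real.exp_log hp]
  rw [hp', ← oe_mul] at h10
  have h11 := mul_le_mul_right h10 (ENNReal.ofReal (Real.exp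
    (-(Real.log p + -(Real.log 4 + 2 * Λ * δ + k * ε)))))
  rw [← mul_assoc, ← oe_mul, ← mul_assoc, ← oe_mul] at h11
  simp only [neg_add_cancel, Real.exp_zero, ENNReal.ofReal_one, one_mul] at h11
  refine hwM.trans (h11.trans (le_of_eq ?_))
  congr 3
  ring

end harnack

section analysis

lemma lin_le_of_forall {a b C : ℝ} (h : ∀ k : ℕ, k * a ≤ k * b + C) : a ≤ b := by
  by_contra hab
  push Not at hab
  obtain ⟨k, hk⟩ := exists_nat_gt (C / (a - b))
  rw [div_lt_iff₀ (by linarith)] at hk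
  have := h k
  nlinarith

lemma lin_of_tendsto {a : ℕ → ℝ} {L : ℝ} (h : Tendsto (fun k : ℕ => a k / k) atTop (𝓝 L))
    {ε : ℝ} (hε : 0 < ε) : ∃ C : ℝ, ∀ k : ℕ, |a k - k * L| ≤ ε * k + C := by
  rw [Metric.tendsto_atTop] at h
  obtain ⟨N, hN⟩ := h ε hε
  refine ⟨∑ i ∈ Finset.range (N + 1), |a i - i * L|, fun k => ?_⟩
  by_cases hk : N + 1 ≤ k
  · have h1 := hN k (by omega)
    have hk0 : (0 : ℝ) < k := by exact_mod_cast (by omega : 0 < k)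
    rw [Real.dist_eq] at h1
    have h2 : a k - k * L = k * (a k / k - L) := by field_simp
    have h3 : |a k - k * L| ≤ ε * k := by
      rw [h2, abs_mul, abs_of_pos hk0, mul_comm]
      exact mul_le_mul_of_nonneg_right h1.le hk0.le
    have h4 : 0 ≤ ∑ i ∈ Finset.range (N + 1), |a i - i * L| :=
      Finset.sum_nonneg fun _ _ => abs_nonneg _
    linarith
  · have h4 := Finset.single_le_sum (f := fun i : ℕ => |a i - i * L|) (fun _ _ => abs_nonneg _)
      (Finset.mem_range.2 (by omega : k < N + 1))
    have : 0 ≤ ε * k := by positivity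
    linarith

lemma tendsto_of_lin {a : ℕ → ℝ} {L : ℝ}
    (h : ∀ ε : ℝ, 0 < ε → ∃ C : ℝ, ∀ k : ℕ, |a k - k * L| ≤ ε * k + C) :
    Tendsto (fun k : ℕ => a k / k) atTop (𝓝 L) := by
  rw [Metric.tendsto_atTop]
  intro ε hε
  obtain ⟨C, hC⟩ := h (ε / 2) (by positivity)
  obtain ⟨N, hN⟩ := exists_nat_gt (2 * C / ε)
  refine ⟨N + 1, fun k hk => ?_⟩
  have hk0 : (0 : ℝ) < k := by exact_mod_cast (by omega : 0 < k)
  have hk1 : (N : ℝ) ≤ k := by exact_mod_cast (by omega : N ≤ k)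
  rw [div_lt_iff₀ hε] at hN
  rw [Real.dist_eq, show a k / k - L = (a k - k * L) / k by field_simp, abs_div, abs_of_pos hk0,
    div_lt_iff₀ hk0]
  have := hC k
  nlinarith

lemma seq_limit {a : ℕ → ℝ} {B : ℝ} (hB : ∀ k, |a (k + 1) - a k| ≤ B)
    (hs : ∀ ε : ℝ, 0 < ε → ∃ C : ℝ, ∀ k j : ℕ, a k + a j - C - ε * j ≤ a (k + j)) :
    ∃ L, Tendsto (fun k : ℕ => a k / k) atTop (𝓝 L) := by
  have hB0 : 0 ≤ B := (abs_nonneg _).trans (hB 0)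
  have hstep : ∀ k r : ℕ, |a (k + r) - a k| ≤ r * B := by
    intro k r
    induction r with
    | zero => simp
    | succ r ih =>
      have := hB (k + r)
      rw [← add_assoc]
      push_cast
      have h3 := abs_sub_le (a (k + r + 1)) (a (k + r)) (a k)
      linarith
  have hbd : ∀ k : ℕ, |a k / k| ≤ |a 0| + B := by
    intro k
    rcases Nat.eq_zero_or_pos k with rfl | hk
    · simp; positivity
    have hk1 : (1 : ℝ) ≤ k := by exact_mod_cast hk
    rw [abs_div, Nat.abs_cast, div_le_iff₀ (by linarith)]
    have := hstep 0 k
    rw [zero_add] at this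
    have h3 : |a k| ≤ |a 0| + k * B := by
      have := abs_sub_abs_le_abs_sub (a k) (a 0); linarith
    nlinarith [abs_nonneg (a 0)]
  have hb1 : IsBoundedUnder (· ≤ ·) atTop (fun k : ℕ => a k / k) :=
    isBoundedUnder_of ⟨|a 0| + B, fun k => (abs_le.1 (hbd k)).2⟩
  have hb2 : IsBoundedUnder (· ≥ ·) atTop (fun k : ℕ => a k / k) :=
    isBoundedUnder_of ⟨-(|a 0| + B), fun k => (abs_le.1 (hbd k)).1⟩
  set s := limsup (fun k : ℕ => a k / k) atTop with hsdef
  refine ⟨s, tendsto_of_le_liminf_of_limsup_le ?_ le_rfl hb1 hb2⟩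
  refine le_of_forall_pos_le_add fun ε hε => ?_
  rw [← sub_le_iff_le_add]
  refine le_liminf_of_le hb1.isCoboundedUnder_ge ?_
  obtain ⟨C, hC⟩ := hs (ε / 4) (by positivity)
  have hfr : ∃ᶠ j : ℕ in atTop, s - ε / 4 < a j / j :=
    frequently_lt_of_lt_limsup hb2.isCoboundedUnder_le (by linarith)
  obtain ⟨N, hN⟩ := exists_nat_gt (4 * C / ε)
  obtain ⟨j, hjN, hj⟩ := (frequently_atTop.1 hfr) (N + 1)
  have hj0 : (0 : ℝ) < j := by exact_mod_cast (by omega : 0 < j)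
  have hjN' : (N : ℝ) ≤ j := by exact_mod_cast (by omega : N ≤ j)
  rw [lt_div_iff₀ hj0] at hj
  rw [div_lt_iff₀ hε] at hN
  have hmul : ∀ n : ℕ, a 0 + (n * j : ℕ) * (s - 3 * ε / 4) ≤ a (n * j) := by
    intro n
    induction n with
    | zero => simp
    | succ n ih =>
      have h1 := hC (n * j) j
      rw [show (n + 1) * j = n * j + j by ring]
      push_cast at ih ⊢
      nlinarith
  have hall : ∀ k : ℕ, k * (s - 3 * ε / 4) - (|a 0| + j * B + j * |s - 3 * ε / 4|) ≤ a k := by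
    intro k
    have hk := Nat.div_add_mod k j
    have hr := Nat.mod_lt k (by exact_mod_cast hj0 : 0 < j)
    have h1 := hmul (k / j)
    have h2 := hstep (k / j * j) (k % j)
    rw [mul_comm] at hk
    rw [hk] at h2
    have hkr : (k : ℝ) = (k / j * j : ℕ) + (k % j : ℕ) := by exact_mod_cast hk.symm
    have hr' : ((k % j : ℕ) : ℝ) ≤ j := by exact_mod_cast hr.le
    have h3 : ((k % j : ℕ) : ℝ) * B ≤ j * B := by gcongr
    have h4 : ((k % j : ℕ) : ℝ) * (s - 3 * ε / 4) ≤ j * |s - 3 * ε / 4| :=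
      by
        calc ((k % j : ℕ) : ℝ) * (s - 3 * ε / 4) ≤ ((k % j : ℕ) : ℝ) * |s - 3 * ε / 4| := by
              gcongr; exact le_abs_self _
          _ ≤ _ := by gcongr
    have h5 := (abs_le.1 h2).1
    have h6 := neg_abs_le (a 0)
    rw [hkr, add_mul]
    linarith
  obtain ⟨N2, hN2⟩ := exists_nat_gt (4 * (|a 0| + j * B + j * |s - 3 * ε / 4|) / ε)
  rw [div_lt_iff₀ hε] at hN2
  filter_upwards [eventually_ge_atTop (N2 + 1)] with k hk
  have hk0 : (0 : ℝ) < k := by exact_mod_cast (by omega : 0 < k)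
  have hk1 : (N2 : ℝ) ≤ k := by exact_mod_cast (by omega : N2 ≤ k)
  rw [le_div_iff₀ hk0]
  have := hall k
  nlinarith

variable {E : Type} [NormedAddCommGroup E] [NormedSpace ℝ E]

lemma vec_limit {a : ℕ → E → ℝ} {B : ℝ} (hB : ∀ k y, |a (k + 1) y - a k y| ≤ B)
    (hlip : ∀ k y z, |a k y - a k z| ≤ ‖y - z‖)
    (hs : ∀ ε : ℝ, 0 < ε → ∃ C : ℝ, ∀ (k j : ℕ) (y z : E),
      a k y + a j z - C - ε * j ≤ a (k + j) (y + z)) :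
    ∃ L : E → ℝ, (∀ x, Tendsto (fun k : ℕ => a k ((k : ℝ) • x) / k) atTop (𝓝 (L x))) ∧
      ConcaveOn ℝ Set.univ L ∧ LipschitzWith 1 L := by
  have hex : ∀ x : E, ∃ L, Tendsto (fun k : ℕ => a k ((k : ℝ) • x) / k) atTop (𝓝 L) := by
    intro x
    refine seq_limit (B := B + ‖x‖) ?_ ?_
    · intro k
      have h1 := hB k (((k + 1 : ℕ) : ℝ) • x)
      have h2 := hlip k (((k + 1 : ℕ) : ℝ) • x) ((k : ℝ) • x)
      have h3 : ((k + 1 : ℕ) : ℝ) • x - (k : ℝ) • x = x := by push_cast; module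
      rw [h3] at h2
      have := abs_sub_le (a (k + 1) (((k + 1 : ℕ) : ℝ) • x)) (a k (((k + 1 : ℕ) : ℝ) • x))
        (a k ((k : ℝ) • x))
      linarith
    · intro ε hε
      obtain ⟨C, hC⟩ := hs ε hε
      refine ⟨C, fun k j => ?_⟩
      have := hC k j ((k : ℝ) • x) ((j : ℝ) • x)
      rwa [← add_smul, ← Nat.cast_add] at this
  choose L hL using hex
  refine ⟨L, hL, ⟨convex_univ, ?_⟩, ?_⟩
  · intro x _ x' _ s t hs0 ht0 hst
    simp only [smul_eq_mul]
    refine le_of_forall_pos_le_add fun ε hε => ?_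
    obtain ⟨C, hC⟩ := hs (ε / 4) (by positivity)
    obtain ⟨C1, hC1⟩ := lin_of_tendsto (hL x) (ε := ε / 4) (by positivity)
    obtain ⟨C2, hC2⟩ := lin_of_tendsto (hL x') (ε := ε / 4) (by positivity)
    obtain ⟨C3, hC3⟩ := lin_of_tendsto (hL (s • x + t • x')) (ε := ε / 4) (by positivity)
    refine lin_le_of_forall (C := C + C1 + C2 + C3 + ‖x - x'‖ + |L x - L x'|) fun k => ?_
    set i := ⌊s * k⌋₊ with hi
    have hsk : 0 ≤ s * k := by positivity
    have hi1 : (i : ℝ) ≤ s * k := Nat.floor_le hsk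
    have hi2 : s * k < i + 1 := Nat.lt_floor_add_one _
    have hik : i ≤ k := by
      have : (i : ℝ) ≤ k := hi1.trans (by nlinarith [Nat.cast_nonneg (α := ℝ) k])
      exact_mod_cast this
    clear_value i
    clear hi
    obtain ⟨j, rfl⟩ := Nat.exists_eq_add_of_le hik
    push_cast at *
    have e1 := hC i j ((i : ℝ) • x) ((j : ℝ) • x')
    have e2 := (abs_le.1 (hC1 i)).1
    have e3 := (abs_le.1 (hC2 j)).1
    have e4 := (abs_le.1 (hC3 (i + j))).2
    have e5 := (abs_le.1 (hlip (i + j) ((i : ℝ) • x + (j : ℝ) • x')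
      ((((i + j : ℕ) : ℝ)) • (s • x + t • x')))).2
    have ht : t = 1 - s := by linarith
    have e6 : (i : ℝ) • x + (j : ℝ) • x' - (((i + j : ℕ) : ℝ)) • (s • x + t • x')
        = ((i : ℝ) - s * (i + j)) • (x - x') := by
      subst ht; push_cast; module
    rw [e6, norm_smul, Real.norm_eq_abs] at e5
    have e7 : |(i : ℝ) - s * (i + j)| ≤ 1 := by
      rw [abs_le]; constructor <;> linarith
    have e8 : |(i : ℝ) - s * (i + j)| * ‖x - x'‖ ≤ 1 * ‖x - x'‖ := by gcongr
    have e9 : (s * (i + j) - i) * (L x - L x') ≤ |L x - L x'| := by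
      calc (s * (i + j) - i) * (L x - L x') ≤ |(s * (i + j) - i) * (L x - L x')| := le_abs_self _
        _ = |(i : ℝ) - s * (i + j)| * |L x - L x'| := by rw [abs_mul, abs_sub_comm]
        _ ≤ 1 * |L x - L x'| := by gcongr
        _ = _ := one_mul _
    push_cast at e4 e5
    subst ht
    have e10 : ((i : ℝ) + j) * (s * L x + (1 - s) * L x') = i * L x + j * L x'
      + (s * (i + j) - i) * (L x - L x') := by ring
    have e11 : 0 ≤ ε * i := by positivity
    have e12 : 0 ≤ ε * j := by positivity
    linarith
  · refine LipschitzWith.of_dist_le_mul fun x x' => ?_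
    rw [NNReal.coe_one, one_mul, Real.dist_eq, dist_eq_norm]
    refine le_of_tendsto ((hL x).sub (hL x')).abs ?_
    filter_upwards [eventually_gt_atTop 0] with k hk
    have hk0 : (0 : ℝ) < k := by exact_mod_cast hk
    rw [← sub_div, abs_div, abs_of_pos hk0, div_le_iff₀ hk0]
    refine (hlip k _ _).trans ?_
    rw [← smul_sub, norm_smul, Real.norm_eq_abs, abs_of_pos hk0, mul_comm]

lemma supergrad {L : E → ℝ} (hc : ConcaveOn ℝ Set.univ L) (hl : LipschitzWith 1 L) (x0 : E) :
    ∃ f : E →L[ℝ] ℝ, ∀ x, L x ≤ L x0 + f (x - x0) := by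
  have hconv : Convex ℝ {p : E × ℝ | p.1 ∈ Set.univ ∧ p.2 < L p.1} := hc.convex_strict_hypograph
  have hopen : IsOpen {p : E × ℝ | p.1 ∈ Set.univ ∧ p.2 < L p.1} := by
    simp only [Set.mem_univ, true_and]
    exact isOpen_lt continuous_snd (hl.continuous.comp continuous_fst)
  obtain ⟨g, hg⟩ := geometric_hahn_banach_open_point hconv hopen (x := (x0, L x0)) (by simp)
  set β := g (0, 1) with hβ
  have hsplit : ∀ x r, g (x, r) = g (x, 0) + r * β := by
    intro x r
    rw [hβ, ← smul_eq_mul, ← map_smul, ← map_add]; simp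
  have hβpos : 0 < β := by
    have := hg (x0, L x0 - 1) (by simp)
    rw [hsplit, hsplit x0 (L x0)] at this
    linarith
  have hle : ∀ x, g (x, 0) + L x * β ≤ g (x0, 0) + L x0 * β := by
    intro x
    refine le_of_forall_pos_le_add fun ε hε => ?_
    have := hg (x, L x - ε / β) (by simp; positivity)
    rw [hsplit, hsplit x0] at this
    have h2 : ε / β * β = ε := by field_simp
    nlinarith
  refine ⟨(-β⁻¹) • (g.comp (ContinuousLinearMap.inl ℝ E ℝ)), fun x => ?_⟩
  have h1 : (g.comp (ContinuousLinearMap.inl ℝ E ℝ)) (x - x0) = g (x, 0) - g (x0, 0) := by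
    rw [map_sub]; simp
  rw [_root_.smul_apply, h1, smul_eq_mul]
  have h2 := hle x
  have h3 : L x - L x0 ≤ β⁻¹ * (g (x0, 0) - g (x, 0)) := by
    rw [inv_mul_eq_div, le_div_iff₀ hβpos]; linarith
  linarith

end analysis

section link

variable {W G E Ω : Type} [MeasurableSpace W] [MeasurableSpace G] [MeasurableSpace Ω]
  [NormedAddCommGroup E] [MeasurableSpace E] [BorelSpace E] [SecondCountableTopology E]

lemma link_step (P : Measure Ω) [IsProbabilityMeasure P]
    (l : Measure G) [IsProbabilityMeasure l] (nx : W → G → W) (V : W → E)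
    (hnx : Measurable (Function.uncurry nx)) (hVm : Measurable V)
    (x : ℕ → Ω → W) (g : ℕ → Ω → G) (hx : ∀ n, Measurable (x n)) (hg : ∀ n, Measurable (g n))
    (hrec : ∀ n ω, x (n + 1) ω = nx (x n ω) (g n ω)) (hlaw : ∀ n, Measure.map (g n) P = l)
    (hind : ∀ n, IndepFun (fun ω (i : Fin (n + 1)) => x i ω) (g n) P)
    {F : E → ℝ} (hF : Measurable F) (r j : ℕ) :
    ∫⁻ ω, ZZ l nx V F (r + 1) (∑ n ∈ Finset.range j, V (x n ω)) (x j ω) ∂P =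
    ∫⁻ ω, ZZ l nx V F r (∑ n ∈ Finset.range (j + 1), V (x n ω)) (x (j + 1) ω) ∂P := by
  set U : Ω → E × W := fun ω => (∑ n ∈ Finset.range j, V (x n ω), x j ω) with hU
  have hUm : Measurable U :=
    (Finset.measurable_sum _ fun n _ => hVm.comp (hx n)).prodMk (hx j)
  have hUind : IndepFun U (g j) P := by
    have h1 : U = (fun v : Fin (j + 1) → W => (∑ n : Fin j, V (v n.castSucc), v (Fin.last j))) ∘
        (fun ω (i : Fin (j + 1)) => x i ω) := by
      funext ω
      simp only [hU, Function.comp]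
      rw [Finset.sum_range]
      rfl
    rw [h1, ← Function.id_comp (g j)]
    refine (hind j).comp ?_ measurable_id
    refine Measurable.prodMk ?_ (measurable_pi_apply _)
    exact Finset.measurable_sum _ fun n _ => hVm.comp (measurable_pi_apply _)
  have hmap := (indepFun_iff_map_prod_eq_prod_map_map hUm.aemeasurable (hg j).aemeasurable).1 hUind
  rw [hlaw] at hmap
  have hZm := ZZ_measurable l nx V hnx hVm F hF r
  have hQm : Measurable (fun q : (E × W) × G =>
      ZZ l nx V F r (q.1.1 + V q.1.2) (nx q.1.2 q.2)) := by
    have h1 : Measurable (fun q : (E × W) × G => (q.1.1 + V q.1.2, nx q.1.2 q.2)) := by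
      refine Measurable.prodMk ?_ ?_
      · exact (measurable_fst.comp measurable_fst).add
          (hVm.comp (measurable_snd.comp measurable_fst))
      · exact hnx.comp ((measurable_snd.comp measurable_fst).prodMk measurable_snd)
    exact hZm.comp h1
  have hPU : IsProbabilityMeasure (P.map U) := Measure.isProbabilityMeasure_map hUm.aemeasurable
  calc ∫⁻ ω, ZZ l nx V F (r + 1) (∑ n ∈ Finset.range j, V (x n ω)) (x j ω) ∂P
      = ∫⁻ ω, (fun p : E × W => ∫⁻ h, ZZ l nx V F r (p.1 + V p.2) (nx p.2 h) ∂l) (U ω) ∂P := rfl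
    _ = ∫⁻ p, (∫⁻ h, ZZ l nx V F r (p.1 + V p.2) (nx p.2 h) ∂l) ∂(P.map U) := by
        rw [lintegral_map hQm.lintegral_prod_right' hUm]
    _ = ∫⁻ q, ZZ l nx V F r (q.1.1 + V q.1.2) (nx q.1.2 q.2) ∂((P.map U).prod l) := by
        rw [lintegral_prod _ hQm.aemeasurable]
    _ = ∫⁻ ω, ZZ l nx V F r ((U ω).1 + V (U ω).2) (nx (U ω).2 (g j ω)) ∂P := by
        rw [← hmap, lintegral_map hQm (hUm.prodMk (hg j))]
    _ = _ := by
        refine lintegral_congr fun ω => ?_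
        rw [Finset.sum_range_succ, hrec]

lemma link (P : Measure Ω) [IsProbabilityMeasure P]
    (l : Measure G) [IsProbabilityMeasure l] (nx : W → G → W) (V : W → E)
    (hnx : Measurable (Function.uncurry nx)) (hVm : Measurable V)
    (x : ℕ → Ω → W) (g : ℕ → Ω → G) (hx : ∀ n, Measurable (x n)) (hg : ∀ n, Measurable (g n))
    (hrec : ∀ n ω, x (n + 1) ω = nx (x n ω) (g n ω)) (hlaw : ∀ n, Measure.map (g n) P = l)
    (hind : ∀ n, IndepFun (fun ω (i : Fin (n + 1)) => x i ω) (g n) P)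
    {F : E → ℝ} (hF : Measurable F) (k : ℕ) :
    ∫⁻ ω, ENNReal.ofReal (Real.exp (F (∑ n ∈ Finset.range k, V (x n ω)))) ∂P =
    ∫⁻ ω, ZZ l nx V F k 0 (x 0 ω) ∂P := by
  have : ∀ r j, ∫⁻ ω, ZZ l nx V F r (∑ n ∈ Finset.range j, V (x n ω)) (x j ω) ∂P =
    ∫⁻ ω, ENNReal.ofReal (Real.exp (F (∑ n ∈ Finset.range (j + r), V (x n ω)))) ∂P := by
    intro r
    induction r with
    | zero => intro j; simp [ZZ]
    | succ r ih =>
      intro j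
      rw [link_step P l nx V hnx hVm x g hx hg hrec hlaw hind hF, ih, show j + 1 + r = j + (r + 1) by ring]
  have h := this k 0
  simp only [Finset.range_zero, Finset.sum_empty, zero_add] at h
  exact h.symm

/-- log-Laplace functional -/
def LogE (P : Measure Ω) (X : Ω → ℝ) : ℝ := Real.log (∫ ω, Real.exp (X ω) ∂P)

lemma LE_intble (P : Measure Ω) [IsProbabilityMeasure P] {X : Ω → ℝ} (hX : Measurable X) {b : ℝ}
    (hb : ∀ ω, |X ω| ≤ b) : Integrable (fun ω => Real.exp (X ω)) P := by
  refine Integrable.of_bound (hX.exp.aestronglyMeasurable) (Real.exp b) ?_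
  filter_upwards with ω
  rw [Real.norm_eq_abs, abs_of_pos (Real.exp_pos _)]
  exact Real.exp_le_exp.2 ((le_abs_self _).trans (hb ω))

lemma LE_exp (P : Measure Ω) [IsProbabilityMeasure P] {X : Ω → ℝ} (hX : Measurable X) {b : ℝ}
    (hb : ∀ ω, |X ω| ≤ b) : Real.exp (LogE P X) = ∫ ω, Real.exp (X ω) ∂P := by
  rw [LogE, Real.exp_log]
  exact integral_exp_pos (LE_intble P hX hb)

lemma LE_lintegral (P : Measure Ω) [IsProbabilityMeasure P] {X : Ω → ℝ} (hX : Measurable X) {b : ℝ}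
    (hb : ∀ ω, |X ω| ≤ b) :
    ∫⁻ ω, ENNReal.ofReal (Real.exp (X ω)) ∂P = ENNReal.ofReal (Real.exp (LogE P X)) := by
  rw [LE_exp P hX hb, ofReal_integral_eq_lintegral_ofReal (LE_intble P hX hb)]
  filter_upwards with ω using (Real.exp_pos _).le

lemma LE_mono (P : Measure Ω) [IsProbabilityMeasure P] {X X' : Ω → ℝ} (hX : Measurable X)
    (hX' : Measurable X') {b b' c : ℝ} (hb : ∀ ω, |X ω| ≤ b) (hb' : ∀ ω, |X' ω| ≤ b')
    (h : ∀ᵐ ω ∂P, X ω ≤ X' ω + c) : LogE P X ≤ LogE P X' + c := by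
  rw [← Real.exp_le_exp, Real.exp_add, LE_exp P hX hb, LE_exp P hX' hb', ← integral_mul_const]
  refine integral_mono_ae (LE_intble P hX hb) ((LE_intble P hX' hb').mul_const _) ?_
  filter_upwards [h] with ω hω
  rw [← Real.exp_add]
  exact Real.exp_le_exp.2 hω

lemma LE_abs (P : Measure Ω) [IsProbabilityMeasure P] {X X' : Ω → ℝ} (hX : Measurable X)
    (hX' : Measurable X') {b b' c : ℝ} (hb : ∀ ω, |X ω| ≤ b) (hb' : ∀ ω, |X' ω| ≤ b')
    (h : ∀ᵐ ω ∂P, |X ω - X' ω| ≤ c) : |LogE P X - LogE P X'| ≤ c := by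
  rw [abs_le]
  constructor
  · have := LE_mono P hX' hX (c := c) hb' hb (by
      filter_upwards [h] with ω hω
      linarith [(abs_le.1 hω).1])
    linarith
  · have := LE_mono P hX hX' (c := c) hb hb' (by
      filter_upwards [h] with ω hω
      linarith [(abs_le.1 hω).2])
    linarith

lemma sum_norm_le {V : W → E} {B : ℝ} (hB : ∀ w, ‖V w‖ ≤ B) (x : ℕ → Ω → W) (k : ℕ) (ω : Ω) :
    ‖∑ n ∈ Finset.range k, V (x n ω)‖ ≤ k * B := by
  refine (norm_sum_le_of_le _ fun n _ => hB (x n ω)).trans (le_of_eq ?_)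
  simp

lemma F_bdd {V : W → E} {B : ℝ} (hB : ∀ w, ‖V w‖ ≤ B) (x : ℕ → Ω → W) (k : ℕ)
    {F : E → ℝ} (hF : LipschitzWith 1 F) (ω : Ω) :
    |F (∑ n ∈ Finset.range k, V (x n ω))| ≤ |F 0| + k * B := by
  have h1 := hF.dist_le_mul (∑ n ∈ Finset.range k, V (x n ω)) 0
  rw [Real.dist_eq, dist_zero_right] at h1
  have h2 := sum_norm_le hB x k ω
  simp only [NNReal.coe_one, one_mul] at h1
  have := abs_sub_abs_le_abs_sub (F (∑ n ∈ Finset.range k, V (x n ω))) (F 0)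
  linarith

lemma superadd (P : Measure Ω) [IsProbabilityMeasure P]
    (l : Measure G) [IsProbabilityMeasure l] (nx : W → G → W) (V : W → E)
    (hnx : Measurable (Function.uncurry nx)) (hVm : Measurable V) {B : ℝ} (hB : ∀ w, ‖V w‖ ≤ B)
    {K : Set G} {A : Set W} (hl : ∀ᵐ g ∂l, g ∈ K)
    (hA : ∀ w ∈ A, ∀ g ∈ K, nx w g ∈ A)
    (x : ℕ → Ω → W) (g : ℕ → Ω → G) (hx : ∀ n, Measurable (x n)) (hg : ∀ n, Measurable (g n))
    (hx0 : ∀ᵐ ω ∂P, x 0 ω ∈ A)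
    (hrec : ∀ n ω, x (n + 1) ω = nx (x n ω) (g n ω)) (hlaw : ∀ n, Measure.map (g n) P = l)
    (hind : ∀ n, IndepFun (fun ω (i : Fin (n + 1)) => x i ω) (g n) P) {C ε : ℝ}
    (hharn : ∀ F : E → ℝ, LipschitzWith 1 F → ∀ (k : ℕ) (y : E) (w w' : W), w ∈ A → w' ∈ A →
      ZZ l nx V F k y w ≤ ENNReal.ofReal (Real.exp (C + k * ε)) * ZZ l nx V F k y w')
    (F F1 F2 : E → ℝ) (hF : LipschitzWith 1 F) (hF1 : LipschitzWith 1 F1) (hF2 : LipschitzWith 1 F2)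
    (hsup : ∀ y z, F1 y + F2 z ≤ F (y + z)) (k j : ℕ) :
    LogE P (fun ω => F1 (∑ n ∈ Finset.range k, V (x n ω))) +
    LogE P (fun ω => F2 (∑ n ∈ Finset.range j, V (x n ω))) - C - ε * j ≤
    LogE P (fun ω => F (∑ n ∈ Finset.range (k + j), V (x n ω))) := by
  have hm : ∀ (F : E → ℝ), LipschitzWith 1 F → ∀ k : ℕ,
      Measurable (fun ω => F (∑ n ∈ Finset.range k, V (x n ω))) := fun F hF k =>
    hF.continuous.measurable.comp (Finset.measurable_sum _ fun n _ => hVm.comp (hx n))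
  have hJ : ∀ (F : E → ℝ), LipschitzWith 1 F → ∀ k : ℕ, ∫⁻ ω, ZZ l nx V F k 0 (x 0 ω) ∂P =
      ENNReal.ofReal (Real.exp (LogE P (fun ω => F (∑ n ∈ Finset.range k, V (x n ω))))) := by
    intro F hF k
    rw [← link P l nx V hnx hVm x g hx hg hrec hlaw hind hF.continuous.measurable,
      LE_lintegral P (hm F hF k) (F_bdd hB x k hF)]
  set a1 := LogE P (fun ω => F1 (∑ n ∈ Finset.range k, V (x n ω)))
  set a2 := LogE P (fun ω => F2 (∑ n ∈ Finset.range j, V (x n ω)))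
  have h1 : ∀ w ∈ A, ENNReal.ofReal (Real.exp (a2 - (C + j * ε))) ≤ ZZ l nx V F2 j 0 w := by
    intro w hw
    have h2 : ∫⁻ ω, ZZ l nx V F2 j 0 (x 0 ω) ∂P ≤
        ENNReal.ofReal (Real.exp (C + j * ε)) * ZZ l nx V F2 j 0 w := by
      calc ∫⁻ ω, ZZ l nx V F2 j 0 (x 0 ω) ∂P ≤
          ∫⁻ ω, ENNReal.ofReal (Real.exp (C + j * ε)) * ZZ l nx V F2 j 0 w ∂P := by
            refine lintegral_mono_ae ?_
            filter_upwards [hx0] with ω hω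
            exact hharn F2 hF2 j 0 _ _ hω hw
        _ = _ := by simp
    rw [hJ F2 hF2] at h2
    have h3 := mul_le_mul_right h2 (ENNReal.ofReal (Real.exp (-(C + j * ε))))
    rw [← mul_assoc, ← oe_mul, ← oe_mul] at h3
    simp only [neg_add_cancel, Real.exp_zero, ENNReal.ofReal_one, one_mul] at h3
    rwa [sub_eq_neg_add]
  have h2 : ENNReal.ofReal (Real.exp (a2 - (C + j * ε))) * ENNReal.ofReal (Real.exp a1) ≤
      ENNReal.ofReal (Real.exp (LogE P (fun ω => F (∑ n ∈ Finset.range (k + j), V (x n ω))))) := by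
    rw [← hJ F1 hF1, ← hJ F hF, ← lintegral_const_mul' _ _ ENNReal.ofReal_ne_top]
    refine lintegral_mono_ae ?_
    filter_upwards [hx0] with ω hω
    refine ZZ_super l nx V hl hA F F1 F2 k j 0 _ hω _ ?_ h1 ENNReal.ofReal_ne_top
    intro z z'
    exact hsup _ _
  rw [← oe_mul, ENNReal.ofReal_le_ofReal_iff (Real.exp_pos _).le, Real.exp_le_exp] at h2
  linarith

end link

section absQ

variable {W Ω : Type} [MetricSpace W] [MeasurableSpace W] [BorelSpace W] [MeasurableSpace Ω]

/-- almost superadditivity hypothesis -/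
def SupAdd (P : Measure Ω) (x : ℕ → Ω → W) : Prop :=
  ∀ (E : Type) [NormedAddCommGroup E] [NormedSpace ℝ E] [FiniteDimensional ℝ E]
    [MeasurableSpace E] [BorelSpace E] (V : W →ᵇ E) (ε : ℝ), 0 < ε → ∃ C : ℝ,
    ∀ F F1 F2 : E → ℝ, LipschitzWith 1 F → LipschitzWith 1 F1 → LipschitzWith 1 F2 →
    (∀ y z, F1 y + F2 z ≤ F (y + z)) → ∀ k j : ℕ,
    LogE P (fun ω => F1 (∑ n ∈ Finset.range k, V (x n ω))) +
    LogE P (fun ω => F2 (∑ n ∈ Finset.range j, V (x n ω))) - C - ε * j ≤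
    LogE P (fun ω => F (∑ n ∈ Finset.range (k + j), V (x n ω)))

lemma YY_meas {E : Type} [NormedAddCommGroup E] [MeasurableSpace E] [BorelSpace E]
    [SecondCountableTopology E] (V : W →ᵇ E) {x : ℕ → Ω → W} (hx : ∀ n, Measurable (x n))
    (s : Finset ℕ) : Measurable (fun ω => ∑ n ∈ s, V (x n ω)) :=
  Finset.measurable_sum _ fun n _ => V.continuous.measurable.comp (hx n)

lemma YY_bdd {E : Type} [NormedAddCommGroup E] (V : W →ᵇ E) (x : ℕ → Ω → W)
    (s : Finset ℕ) (ω : Ω) : ‖∑ n ∈ s, V (x n ω)‖ ≤ s.card * ‖V‖ := by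
  refine (norm_sum_le_of_le _ fun n _ => V.norm_coe_le_norm (x n ω)).trans (le_of_eq ?_)
  simp

lemma Q_exists (P : Measure Ω) [IsProbabilityMeasure P] {x : ℕ → Ω → W}
    (hx : ∀ n, Measurable (x n)) (hS : SupAdd P x) (V : W →ᵇ ℝ) :
    ∃ L, Tendsto (fun k : ℕ => LogE P (fun ω => ∑ n ∈ Finset.range k, V (x n ω)) / k) atTop
      (𝓝 L) := by
  refine seq_limit (B := ‖V‖) ?_ ?_
  · intro k
    refine LE_abs P (YY_meas V hx _) (YY_meas V hx _)
      (fun ω => YY_bdd V x _ ω) (fun ω => YY_bdd V x _ ω) ?_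
    filter_upwards with ω
    rw [Finset.sum_range_succ, add_sub_cancel_left]
    exact V.norm_coe_le_norm _
  · intro ε hε
    obtain ⟨C, hC⟩ := hS ℝ V ε hε
    exact ⟨C, fun k j => hC id id id LipschitzWith.id LipschitzWith.id LipschitzWith.id
      (fun y z => le_refl _) k j⟩

/-- pressure -/
def QQ (P : Measure Ω) (x : ℕ → Ω → W) (V : W →ᵇ ℝ) : ℝ :=
  limUnder atTop (fun k : ℕ => LogE P (fun ω => ∑ n ∈ Finset.range k, V (x n ω)) / k)

lemma QQ_tendsto (P : Measure Ω) [IsProbabilityMeasure P] {x : ℕ → Ω → W}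
    (hx : ∀ n, Measurable (x n)) (hS : SupAdd P x) (V : W →ᵇ ℝ) :
    Tendsto (fun k : ℕ => LogE P (fun ω => ∑ n ∈ Finset.range k, V (x n ω)) / k) atTop
      (𝓝 (QQ P x V)) :=
  tendsto_nhds_limUnder (Q_exists P hx hS V)

lemma QQ_tendsto' (P : Measure Ω) [IsProbabilityMeasure P] {x : ℕ → Ω → W}
    (hx : ∀ n, Measurable (x n)) (hS : SupAdd P x) (V : W →ᵇ ℝ) :
    Tendsto (fun k : ℕ => (k : ℝ)⁻¹ * LogE P (fun ω => ∑ n ∈ Finset.Icc 1 k, V (x n ω))) atTop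
      (𝓝 (QQ P x V)) := by
  have h1 : Tendsto (fun k : ℕ => LogE P (fun ω => ∑ n ∈ Finset.Icc 1 k, V (x n ω)) / k) atTop
      (𝓝 (QQ P x V)) := by
    refine tendsto_of_lin fun ε hε => ?_
    obtain ⟨C, hC⟩ := lin_of_tendsto (QQ_tendsto P hx hS V) hε
    refine ⟨C + 2 * ‖V‖, fun k => ?_⟩
    have h2 : |LogE P (fun ω => ∑ n ∈ Finset.Icc 1 k, V (x n ω)) -
        LogE P (fun ω => ∑ n ∈ Finset.range k, V (x n ω))| ≤ 2 * ‖V‖ := by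
      refine LE_abs P (YY_meas V hx _) (YY_meas V hx _)
        (fun ω => YY_bdd V x _ ω) (fun ω => YY_bdd V x _ ω) ?_
      filter_upwards with ω
      have h3 : ∑ n ∈ Finset.Icc 1 k, V (x n ω) + V (x 0 ω) =
          ∑ n ∈ Finset.range k, V (x n ω) + V (x k ω) := by
        rw [← Finset.sum_range_succ, Finset.sum_range_succ', Finset.range_eq_Ico,
          Finset.sum_Ico_add' (fun n => V (x n ω)) 0 k 1]
        congr 1
      have h4 := V.norm_coe_le_norm (x 0 ω)
      have h5 := V.norm_coe_le_norm (x k ω)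
      rw [Real.norm_eq_abs, abs_le] at h4 h5
      rw [abs_le]
      constructor <;> linarith
    have h6 := hC k
    have := abs_sub_le (LogE P (fun ω => ∑ n ∈ Finset.Icc 1 k, V (x n ω)))
      (LogE P (fun ω => ∑ n ∈ Finset.range k, V (x n ω))) (k * QQ P x V)
    linarith
  refine h1.congr fun k => ?_
  rw [div_eq_inv_mul]

lemma LE_convex (P : Measure Ω) [IsProbabilityMeasure P] {X X' : Ω → ℝ} (hX : Measurable X)
    (hX' : Measurable X') {b b' : ℝ} (hb : ∀ ω, |X ω| ≤ b) (hb' : ∀ ω, |X' ω| ≤ b')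
    {s t : ℝ} (hs : 0 ≤ s) (ht : 0 ≤ t) (hst : s + t = 1) :
    LogE P (fun ω => s * X ω + t * X' ω) ≤ s * LogE P X + t * LogE P X' := by
  set α := LogE P X with hα
  set β := LogE P X' with hβ
  have hm : Measurable (fun ω => s * X ω + t * X' ω) := (hX.const_mul s).add (hX'.const_mul t)
  have hbd : ∀ ω, |s * X ω + t * X' ω| ≤ s * b + t * b' := by
    intro ω
    refine (abs_add_le _ _).trans ?_
    rw [abs_mul, abs_mul, abs_of_nonneg hs, abs_of_nonneg ht]
    gcongr
    · exact hb ω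
    · exact hb' ω
  have hi := LE_intble P hX hb
  have hi' := LE_intble P hX' hb'
  have key : ∀ ω, Real.exp (s * X ω + t * X' ω) ≤
      Real.exp (s * α + t * β) * (s * (Real.exp (X ω) * Real.exp (-α)) +
        t * (Real.exp (X' ω) * Real.exp (-β))) := by
    intro ω
    have h := convexOn_exp.2 (Set.mem_univ (X ω - α)) (Set.mem_univ (X' ω - β)) hs ht hst
    simp only [smul_eq_mul] at h
    rw [← Real.exp_add, ← Real.exp_add, ← sub_eq_add_neg, ← sub_eq_add_neg]
    calc _ = Real.exp (s * α + t * β) * Real.exp (s * (X ω - α) + t * (X' ω - β)) := by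
          rw [← Real.exp_add]; congr 1; ring
      _ ≤ _ := by gcongr
  rw [← Real.exp_le_exp, LE_exp P hm hbd]
  have hint : Integrable (fun ω => s * (Real.exp (X ω) * Real.exp (-α)) +
        t * (Real.exp (X' ω) * Real.exp (-β))) P :=
    ((hi.mul_const _).const_mul s).add ((hi'.mul_const _).const_mul t)
  calc ∫ ω, Real.exp (s * X ω + t * X' ω) ∂P ≤ ∫ ω, Real.exp (s * α + t * β) *
        (s * (Real.exp (X ω) * Real.exp (-α)) +
        t * (Real.exp (X' ω) * Real.exp (-β))) ∂P :=
        integral_mono (LE_intble P hm hbd) (hint.const_mul _) key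
    _ = Real.exp (s * α + t * β) := by
        rw [integral_const_mul, integral_add ((hi.mul_const _).const_mul s)
          ((hi'.mul_const _).const_mul t), integral_const_mul, integral_const_mul,
          integral_mul_const, integral_mul_const, ← LE_exp P hX hb, ← LE_exp P hX' hb',
          ← Real.exp_add, ← Real.exp_add, ← hα, ← hβ]
        simp [hst]

lemma QQ_convex (P : Measure Ω) [IsProbabilityMeasure P] {x : ℕ → Ω → W}
    (hx : ∀ n, Measurable (x n)) (hS : SupAdd P x) : ConvexOn ℝ Set.univ (QQ P x) := by
  refine ⟨convex_univ, fun V _ V' _ s t hs ht hst => ?_⟩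
  have h1 := QQ_tendsto P hx hS (s • V + t • V')
  have h2 := ((QQ_tendsto P hx hS V).const_mul s).add ((QQ_tendsto P hx hS V').const_mul t)
  refine le_of_tendsto_of_tendsto' h1 h2 fun k => ?_
  have := LE_convex P (YY_meas V hx (Finset.range k)) (YY_meas V' hx (Finset.range k))
    (fun ω => YY_bdd V x _ ω) (fun ω => YY_bdd V' x _ ω) hs ht hst
  rw [mul_div_assoc', mul_div_assoc', ← add_div]
  refine div_le_div_of_nonneg_right (le_trans (le_of_eq ?_) this) (Nat.cast_nonneg k)
  congr 1
  funext ω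
  simp [Finset.sum_add_distrib, Finset.mul_sum]

lemma QQ_le (P : Measure Ω) [IsProbabilityMeasure P] {x : ℕ → Ω → W}
    (hx : ∀ n, Measurable (x n)) (hS : SupAdd P x) {A : Set W}
    (hA : ∀ᵐ ω ∂P, ∀ n, x n ω ∈ A) (V V' : W →ᵇ ℝ) {c : ℝ} (h : ∀ w ∈ A, V w ≤ V' w + c) :
    QQ P x V ≤ QQ P x V' + c := by
  have h1 := QQ_tendsto P hx hS V
  have h2 := (QQ_tendsto P hx hS V').add_const c
  refine le_of_tendsto_of_tendsto h1 h2 ?_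
  filter_upwards [eventually_ge_atTop 1] with k hk
  have hk0 : (0 : ℝ) < k := by exact_mod_cast hk
  have := LE_mono P (YY_meas V hx (Finset.range k)) (YY_meas V' hx (Finset.range k))
    (fun ω => YY_bdd V x _ ω) (fun ω => YY_bdd V' x _ ω) (c := k * c) (by
      filter_upwards [hA] with ω hω
      calc _ ≤ ∑ n ∈ Finset.range k, (V' (x n ω) + c) := Finset.sum_le_sum fun n _ => h _ (hω n)
        _ = _ := by simp [Finset.sum_add_distrib])
  rw [div_le_iff₀ hk0, add_mul, div_mul_cancel₀ _ hk0.ne']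
  linarith

lemma QQ_lip (P : Measure Ω) [IsProbabilityMeasure P] {x : ℕ → Ω → W}
    (hx : ∀ n, Measurable (x n)) (hS : SupAdd P x) {A : Set W}
    (hA : ∀ᵐ ω ∂P, ∀ n, x n ω ∈ A) (V V' : W →ᵇ ℝ) :
    |QQ P x V - QQ P x V'| ≤ ⨆ y : A, |V (y : W) - V' (y : W)| := by
  have hbdd : BddAbove (Set.range fun y : A => |V (y : W) - V' (y : W)|) := by
    refine ⟨‖V - V'‖, ?_⟩
    rintro _ ⟨y, rfl⟩
    exact (V - V').norm_coe_le_norm y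
  have hle : ∀ w ∈ A, |V w - V' w| ≤ ⨆ y : A, |V (y : W) - V' (y : W)| := fun w hw =>
    le_ciSup hbdd (⟨w, hw⟩ : A)
  have h1 := QQ_le P hx hS hA V V' (c := ⨆ y : A, |V (y : W) - V' (y : W)|)
    (fun w hw => by linarith [(abs_le.1 (hle w hw)).2])
  have h2 := QQ_le P hx hS hA V' V (c := ⨆ y : A, |V (y : W) - V' (y : W)|)
    (fun w hw => by linarith [(abs_le.1 (hle w hw)).1])
  rw [abs_le]
  constructor <;> linarith

lemma QQ_const (P : Measure Ω) [IsProbabilityMeasure P] {x : ℕ → Ω → W}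
    (hx : ∀ n, Measurable (x n)) (hS : SupAdd P x) (c : ℝ) :
    QQ P x (BoundedContinuousFunction.const W c) = c := by
  refine tendsto_nhds_unique (QQ_tendsto P hx hS _) (tendsto_const_nhds.congr' ?_)
  filter_upwards [eventually_ge_atTop 1] with k hk
  have hk0 : (0 : ℝ) < k := by exact_mod_cast hk
  simp [LogE, hk0.ne']

end absQ

section rate

lemma ereal_log_exp (r : ℝ) : ENNReal.log (ENNReal.ofReal (Real.exp r)) = (r : EReal) := by
  rw [← EReal.exp_coe, EReal.log_exp]

lemma ereal_scale {k : ℕ} (hk : 1 ≤ k) (c : ℝ) :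
    (((k : ℝ)⁻¹ : ℝ) : EReal) * ((k * c : ℝ) : EReal) = (c : EReal) := by
  have hk0 : (k : ℝ) ≠ 0 := by exact_mod_cast (by omega : k ≠ 0)
  rw [← EReal.coe_mul]
  congr 1
  field_simp

lemma ldp_up {p : ℕ → ℝ≥0∞} {c : ℝ}
    (h : ∀ᶠ k : ℕ in atTop, p k ≤ ENNReal.ofReal (Real.exp (k * c))) :
    limsup (fun k : ℕ => (((k : ℝ)⁻¹ : ℝ) : EReal) * ENNReal.log (p k)) atTop ≤ (c : EReal) := by
  refine limsup_le_of_le (by isBoundedDefault) ?_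
  filter_upwards [h, eventually_ge_atTop 1] with k h1 hk
  rw [← ereal_scale hk c, ← ereal_log_exp (k * c)]
  refine mul_le_mul_of_nonneg_left (ENNReal.log_monotone h1) ?_
  exact EReal.coe_nonneg.2 (inv_nonneg.2 (Nat.cast_nonneg k))

lemma ldp_lo {p : ℕ → ℝ≥0∞} {c : ℝ}
    (h : ∀ᶠ k : ℕ in atTop, ENNReal.ofReal (Real.exp (k * c)) ≤ p k) :
    (c : EReal) ≤ liminf (fun k : ℕ => (((k : ℝ)⁻¹ : ℝ) : EReal) * ENNReal.log (p k)) atTop := by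
  refine le_liminf_of_le (by isBoundedDefault) ?_
  filter_upwards [h, eventually_ge_atTop 1] with k h1 hk
  rw [← ereal_scale hk c, ← ereal_log_exp (k * c)]
  refine mul_le_mul_of_nonneg_left (ENNReal.log_monotone h1) ?_
  exact EReal.coe_nonneg.2 (inv_nonneg.2 (Nat.cast_nonneg k))

variable {W Ω : Type} [MetricSpace W] [MeasurableSpace W] [BorelSpace W] [MeasurableSpace Ω]

lemma occ_integral (x : ℕ → W) {k : ℕ} (hk : 1 ≤ k) {E : Type} [NormedAddCommGroup E]
    [NormedSpace ℝ E] [CompleteSpace E] [MeasurableSpace E] [BorelSpace E]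
    [SecondCountableTopology E] (V : W →ᵇ E) :
    ∫ w, V w ∂(occ x k : Measure W) = (k : ℝ)⁻¹ • ∑ n ∈ Finset.range k, V (x n) := by
  have hk0 : k ≠ 0 := by omega
  have hs : StronglyMeasurable (fun w => V w) := V.continuous.measurable.stronglyMeasurable
  have : (occ x k : Measure W) = (k : ℝ≥0∞)⁻¹ • ∑ n ∈ Finset.range k, Measure.dirac (x n) := by
    exact congrArg Subtype.val (dif_neg hk0)
  rw [this, integral_smul_measure, integral_finsetSum_measure]
  · simp only [integral_dirac' _ _ hs]
    simp
  · intro i _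
    exact integrable_dirac' hs (by simp)

lemma occ_compl (x : ℕ → W) (k : ℕ) {A : Set W} (hA : MeasurableSet A) (hx : ∀ n, x n ∈ A) :
    (occ x k : Measure W) Aᶜ = 0 := by
  by_cases h : k = 0
  · have : (occ x k : Measure W) = Measure.dirac (x 0) := congrArg Subtype.val (dif_pos h)
    rw [this]
    simp [Measure.dirac_apply' _ hA.compl, hx]
  · have : (occ x k : Measure W) = (k : ℝ≥0∞)⁻¹ • ∑ n ∈ Finset.range k, Measure.dirac (x n) :=
      congrArg Subtype.val (dif_neg h)
    rw [this]
    simp [Measure.dirac_apply' _ hA.compl, hx]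

/-- the rate function -/
def rate (Q : (W →ᵇ ℝ) → ℝ) (σ : ProbabilityMeasure W) : ℝ≥0∞ :=
  ⨆ V : W →ᵇ ℝ, ENNReal.ofReal ((∫ x, V x ∂(σ : Measure W)) - Q V)

lemma rate_lsc (Q : (W →ᵇ ℝ) → ℝ) : LowerSemicontinuous (rate Q) := by
  refine lowerSemicontinuous_iSup fun V => Continuous.lowerSemicontinuous ?_
  exact ENNReal.continuous_ofReal.comp
    ((ProbabilityMeasure.continuous_integral_boundedContinuousFunction V).sub continuous_const)

lemma tight_set {A : Set W} (hA : IsCompact A) :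
    IsCompact (closure {σ : ProbabilityMeasure W | (σ : Measure W) Aᶜ = 0}) := by
  refine isCompact_closure_of_isTightMeasureSet ?_
  rw [isTightMeasureSet_iff_exists_isCompact_measure_compl_le]
  intro ε hε
  refine ⟨A, hA, ?_⟩
  rintro _ ⟨σ, hσ, rfl⟩
  have : (σ : Measure W) Aᶜ = 0 := hσ
  rw [this]; exact hε.le

/-- test function -/
def tst (A : Set W) (t : ℝ) : W →ᵇ ℝ :=
  BoundedContinuousFunction.ofNormedAddCommGroup (fun w => t * min 1 (Metric.infDist w A))
    (by fun_prop) |t| (fun w => by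
      rw [Real.norm_eq_abs, abs_mul]
      have : |min 1 (Metric.infDist w A)| ≤ 1 := by
        rw [abs_of_nonneg (le_min zero_le_one Metric.infDist_nonneg)]
        exact min_le_left _ _
      nlinarith [abs_nonneg t])

lemma rate_supp (Q : (W →ᵇ ℝ) → ℝ) {A : Set W} (hA : IsCompact A) (hne : A.Nonempty)
    (hQ : ∀ V : W →ᵇ ℝ, (∀ w ∈ A, V w = 0) → Q V = 0) {σ : ProbabilityMeasure W}
    (hσ : rate Q σ ≠ ⊤) : (σ : Measure W) Aᶜ = 0 := by
  set r := (rate Q σ).toReal with hr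
  have h1 : ∀ t, ∫ w, tst A t w ∂(σ : Measure W) ≤ r := by
    intro t
    have h2 : Q (tst A t) = 0 := by
      refine hQ _ fun w hw => ?_
      show t * min 1 (Metric.infDist w A) = 0
      rw [Metric.infDist_zero_of_mem hw]; simp
    have h3 : ENNReal.ofReal ((∫ w, tst A t w ∂(σ : Measure W)) - Q (tst A t)) ≤ rate Q σ :=
      le_iSup (fun V : W →ᵇ ℝ => ENNReal.ofReal ((∫ x, V x ∂(σ : Measure W)) - Q V)) (tst A t)
    rw [h2, sub_zero] at h3
    exact ENNReal.ofReal_le_iff_le_toReal hσ |>.1 h3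
  have h4 : ∀ t, ∫ w, tst A t w ∂(σ : Measure W) = t * ∫ w, tst A 1 w ∂(σ : Measure W) := by
    intro t
    rw [← integral_const_mul]
    congr 1
    funext w
    show t * min 1 (Metric.infDist w A) = t * (1 * min 1 (Metric.infDist w A))
    ring
  have hnn : ∀ w, 0 ≤ tst A 1 w := fun w => by
    show 0 ≤ 1 * min 1 (Metric.infDist w A)
    rw [one_mul]; exact (le_min zero_le_one Metric.infDist_nonneg)
  have h5 : ∫ w, tst A 1 w ∂(σ : Measure W) = 0 := by
    refine le_antisymm ?_ (integral_nonneg hnn)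
    by_contra hcon
    push Not at hcon
    have := h1 ((r + 1) / ∫ w, tst A 1 w ∂(σ : Measure W))
    rw [h4, div_mul_cancel₀ _ hcon.ne'] at this
    linarith
  rw [integral_eq_zero_iff_of_nonneg hnn ((tst A 1).integrable _)] at h5
  have h6 : ∀ᵐ w ∂(σ : Measure W), w ∈ A := by
    filter_upwards [h5] with w hw
    have hw' : 1 * min 1 (Metric.infDist w A) = 0 := hw
    rw [one_mul] at hw'
    have : Metric.infDist w A = 0 := by
      rcases min_choice 1 (Metric.infDist w A) with h | h
      · rw [h] at hw'; norm_num at hw'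
      · rw [h] at hw'; exact hw'
    exact (hA.isClosed.mem_iff_infDist_zero hne).2 this
  exact h6

lemma rate_good (Q : (W →ᵇ ℝ) → ℝ) {A : Set W} (hA : IsCompact A) (hne : A.Nonempty)
    (hQ : ∀ V : W →ᵇ ℝ, (∀ w ∈ A, V w = 0) → Q V = 0) : GoodRate (rate Q) := by
  refine ⟨rate_lsc Q, fun c hc => ?_⟩
  refine (tight_set hA).of_isClosed_subset ((rate_lsc Q).isClosed_preimage c) ?_
  intro σ hσ
  refine subset_closure (rate_supp Q hA hne hQ ?_)
  exact ne_top_of_le_ne_top hc hσ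

lemma cheb (P : Measure Ω) [IsProbabilityMeasure P] {X : Ω → ℝ} (hX : Measurable X) {b : ℝ}
    (hb : ∀ ω, |X ω| ≤ b) (a : ℝ) :
    P {ω | a ≤ X ω} ≤ ENNReal.ofReal (Real.exp (LogE P X - a)) := by
  have h := mul_meas_ge_le_lintegral (μ := P) (f := fun ω => ENNReal.ofReal (Real.exp (X ω)))
    (by fun_prop) (ENNReal.ofReal (Real.exp a))
  rw [LE_lintegral P hX hb] at h
  have h2 := mul_le_mul_right h (ENNReal.ofReal (Real.exp (-a)))
  rw [← mul_assoc, ← oe_mul, ← oe_mul] at h2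
  simp only [neg_add_cancel, Real.exp_zero, ENNReal.ofReal_one, one_mul] at h2
  rw [sub_eq_neg_add]
  refine le_trans (measure_mono fun ω hω => ?_) h2
  exact ENNReal.ofReal_le_ofReal (Real.exp_le_exp.2 hω)

lemma upper (P : Measure Ω) [IsProbabilityMeasure P] {x : ℕ → Ω → W}
    (hx : ∀ n, Measurable (x n)) (hS : SupAdd P x) {A : Set W} (hAc : IsCompact A)
    (hA : ∀ᵐ ω ∂P, ∀ n, x n ω ∈ A) (F : Set (ProbabilityMeasure W)) (hF : IsClosed F) :
    limsup (fun k : ℕ => (((k : ℝ)⁻¹ : ℝ) : EReal) *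
      ENNReal.log (P {ω | occ (fun n => x n ω) k ∈ F})) atTop
      ≤ -(⨅ σ ∈ F, (rate (QQ P x) σ : EReal)) := by
  set Q := QQ P x with hQdef
  have hQ0 : Q 0 = 0 := QQ_const P hx hS 0
  refine EReal.le_neg_of_le_neg ?_
  rw [← EReal.ge_of_forall_gt_iff_ge]
  intro c hc
  refine EReal.le_neg_of_le_neg ?_
  obtain ⟨c', hcc', hc'⟩ := EReal.lt_iff_exists_real_btwn.1 hc
  have hcc' : c < c' := by exact_mod_cast hcc'
  have hV : ∀ σ ∈ F, ∃ V : W →ᵇ ℝ, c' < (∫ w, V w ∂(σ : Measure W)) - Q V := by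
    intro σ hσ
    have h1 : (c' : EReal) < (rate Q σ : EReal) := hc'.trans_le (iInf₂_le σ hσ)
    by_cases h0 : c' < 0
    · exact ⟨0, by simpa [hQ0] using h0⟩
    · push Not at h0
      have h2 : ENNReal.ofReal c' < rate Q σ := by
        rw [← EReal.coe_ennreal_lt_coe_ennreal_iff, EReal.coe_ennreal_ofReal, max_eq_left h0]
        exact h1
      obtain ⟨V, hV⟩ := lt_iSup_iff.1 h2
      exact ⟨V, (ENNReal.ofReal_lt_ofReal_iff_of_nonneg h0).1 hV⟩
  set T : Set (ProbabilityMeasure W) := {σ | (σ : Measure W) Aᶜ = 0} with hT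
  have hcomp : IsCompact (F ∩ closure T) := (tight_set hAc).inter_left hF
  obtain ⟨t, ht⟩ := hcomp.elim_finite_subcover
    (fun V : W →ᵇ ℝ => {σ : ProbabilityMeasure W | c' < (∫ w, V w ∂(σ : Measure W)) - Q V})
    (fun V => isOpen_lt continuous_const
      ((ProbabilityMeasure.continuous_integral_boundedContinuousFunction V).sub continuous_const))
    (fun σ hσ => by
      obtain ⟨V, hV⟩ := hV σ hσ.1
      exact Set.mem_iUnion.2 ⟨V, hV⟩)
  set ε := (c' - c) / 2 with hε
  have hε0 : 0 < ε := by rw [hε]; linarith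
  have hterm : ∀ V ∈ t, ∀ᶠ k : ℕ in atTop,
      P {ω | c' < (∫ w, V w ∂(occ (fun n => x n ω) k : Measure W)) - Q V} ≤
      ENNReal.ofReal (Real.exp (k * (ε - c'))) := by
    intro V _
    filter_upwards [(QQ_tendsto P hx hS V).eventually_lt_const (show Q V < Q V + ε by linarith),
      eventually_ge_atTop 1] with k hk1 hk
    have hk0 : (0 : ℝ) < k := by exact_mod_cast hk
    rw [div_lt_iff₀ hk0] at hk1
    calc P {ω | c' < (∫ w, V w ∂(occ (fun n => x n ω) k : Measure W)) - Q V} ≤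
        P {ω | k * (c' + Q V) ≤ ∑ n ∈ Finset.range k, V (x n ω)} := by
          refine measure_mono fun ω hω => ?_
          simp only [Set.mem_ofPred_eq, occ_integral _ hk, smul_eq_mul] at hω ⊢
          have : c' + Q V < (k : ℝ)⁻¹ * ∑ n ∈ Finset.range k, V (x n ω) := by linarith
          rw [← div_eq_inv_mul, lt_div_iff₀ hk0] at this
          linarith
      _ ≤ _ := cheb P (YY_meas V hx _) (fun ω => YY_bdd V x _ ω) _
      _ ≤ _ := by
          refine ENNReal.ofReal_le_ofReal (Real.exp_le_exp.2 ?_)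
          linarith
  have hterm' := (Filter.eventually_all_finset t).2 hterm
  rw [← EReal.coe_neg]
  refine ldp_up ?_
  have hgrow : ∀ᶠ k : ℕ in atTop, (t.card : ℝ) ≤ Real.exp (k * ε) := by
    have : Tendsto (fun k : ℕ => Real.exp (k * ε)) atTop atTop :=
      Real.tendsto_exp_atTop.comp (tendsto_natCast_atTop_atTop.atTop_mul_const hε0)
    exact this.eventually_ge_atTop _
  filter_upwards [hterm', hgrow] with k h1 h2
  calc P {ω | occ (fun n => x n ω) k ∈ F} ≤
      P (⋃ V ∈ t, {ω | c' < (∫ w, V w ∂(occ (fun n => x n ω) k : Measure W)) - Q V}) := by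
        refine measure_mono_ae ?_
        filter_upwards [hA] with ω hω hmem
        have h3 : occ (fun n => x n ω) k ∈ F ∩ closure T :=
          ⟨hmem, subset_closure (occ_compl _ k hAc.measurableSet hω)⟩
        have h4 := ht h3
        simp only [Set.mem_iUnion] at h4
        obtain ⟨V, hV, h5⟩ := h4
        exact Set.mem_iUnion₂.2 ⟨V, hV, h5⟩
    _ ≤ ∑ V ∈ t, P {ω | c' < (∫ w, V w ∂(occ (fun n => x n ω) k : Measure W)) - Q V} :=
        measure_biUnion_finset_le _ _
    _ ≤ ∑ V ∈ t, ENNReal.ofReal (Real.exp (k * (ε - c'))) := Finset.sum_le_sum h1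
    _ = ENNReal.ofReal (t.card * Real.exp (k * (ε - c'))) := by
        rw [Finset.sum_const, ENNReal.ofReal_mul (Nat.cast_nonneg _)]
        simp
    _ ≤ ENNReal.ofReal (Real.exp (k * -c)) := by
        refine ENNReal.ofReal_le_ofReal ?_
        calc _ ≤ Real.exp (k * ε) * Real.exp (k * (ε - c')) := by gcongr
          _ = _ := by rw [← Real.exp_add]; congr 1; rw [hε]; ring

end rate

section lower

variable {W Ω : Type} [MetricSpace W] [MeasurableSpace W] [BorelSpace W] [MeasurableSpace Ω]

lemma weak_nbhd {G : Set (ProbabilityMeasure W)} (hG : IsOpen G) {σ : ProbabilityMeasure W}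
    (hσ : σ ∈ G) : ∃ (ι : Type) (_ : Fintype ι) (U : ι → (W →ᵇ ℝ)),
    ∀ ν : ProbabilityMeasure W, (∀ i, |∫ w, U i w ∂(ν : Measure W) - ∫ w, U i w ∂(σ : Measure W)| < 1)
      → ν ∈ G := by
  set L : Filter (ProbabilityMeasure W) := ⨅ V : W →ᵇ ℝ,
    comap (fun ν : ProbabilityMeasure W => ∫ w, V w ∂(ν : Measure W))
      (𝓝 (∫ w, V w ∂(σ : Measure W))) with hL
  have hle : Tendsto id L (𝓝 σ) := by
    rw [ProbabilityMeasure.tendsto_iff_forall_integral_tendsto]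
    intro V
    exact tendsto_comap.mono_left (iInf_le _ V)
  have hmem : G ∈ L := hle (hG.mem_nhds hσ)
  rw [hL, Filter.mem_iInf] at hmem
  obtain ⟨I, hI, Z, hZ, hGZ⟩ := hmem
  have : ∀ i : I, ∃ ε > 0, ∀ ν : ProbabilityMeasure W,
      |∫ w, (i : W →ᵇ ℝ) w ∂(ν : Measure W) - ∫ w, (i : W →ᵇ ℝ) w ∂(σ : Measure W)| < ε →
      ν ∈ Z i := by
    intro i
    obtain ⟨t, ht, hsub⟩ := Filter.mem_comap.1 (hZ i)
    obtain ⟨ε, hε, hb⟩ := Metric.mem_nhds_iff.1 ht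
    exact ⟨ε, hε, fun ν hν => hsub (hb (by rwa [Metric.mem_ball, Real.dist_eq]))⟩
  choose ε hε hν using this
  refine ⟨I, hI.fintype, fun i => (ε i)⁻¹ • (i : W →ᵇ ℝ), fun ν h => ?_⟩
  rw [hGZ]
  refine Set.mem_iInter.2 fun i => hν i ν ?_
  have h1 := h i
  simp only [BoundedContinuousFunction.coe_smul, smul_eq_mul] at h1
  rw [integral_const_mul, integral_const_mul, ← mul_sub, abs_mul, abs_of_pos (inv_pos.2 (hε i)),
    ← div_eq_inv_mul, div_lt_one (hε i)] at h1
  exact h1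

section fd
variable {E : Type} [NormedAddCommGroup E] [NormedSpace ℝ E] [FiniteDimensional ℝ E]
    [MeasurableSpace E] [BorelSpace E]

lemma negdist_lip (y : E) : LipschitzWith 1 (fun v : E => -‖v - y‖) := by
  refine LipschitzWith.of_dist_le_mul fun u v => ?_
  rw [Real.dist_eq, dist_eq_norm, NNReal.coe_one, one_mul]
  have := abs_norm_sub_norm_le (v - y) (u - y)
  rw [show -‖u - y‖ - -‖v - y‖ = ‖v - y‖ - ‖u - y‖ by ring]
  refine this.trans (le_of_eq ?_)
  rw [show v - y - (u - y) = -(u - v) by abel, norm_neg]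

lemma negdist_meas (V : W →ᵇ E) {x : ℕ → Ω → W} (hx : ∀ n, Measurable (x n)) (k : ℕ) (y : E) :
    Measurable (fun ω => -‖∑ n ∈ Finset.range k, V (x n ω) - y‖) := by
  have : ProperSpace E := FiniteDimensional.proper ℝ E
  have : SecondCountableTopology E := inferInstance
  exact (((YY_meas V hx (Finset.range k)).sub_const y).norm).neg

lemma negdist_bdd (V : W →ᵇ E) (x : ℕ → Ω → W) (k : ℕ) (y : E) (ω : Ω) :
    |(-‖∑ n ∈ Finset.range k, V (x n ω) - y‖)| ≤ (Finset.range k).card * ‖V‖ + ‖y‖ := by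
  rw [abs_neg, abs_norm]
  exact (norm_sub_le _ _).trans (by gcongr; exact YY_bdd V x _ ω)

lemma Lam_exists (P : Measure Ω) [IsProbabilityMeasure P] {x : ℕ → Ω → W}
    (hx : ∀ n, Measurable (x n)) (hS : SupAdd P x) (V : W →ᵇ E) :
    ∃ L : E → ℝ, (∀ y, Tendsto (fun k : ℕ =>
      LogE P (fun ω => -‖∑ n ∈ Finset.range k, V (x n ω) - (k : ℝ) • y‖) / k) atTop (𝓝 (L y))) ∧
      ConcaveOn ℝ Set.univ L ∧ LipschitzWith 1 L := by
  refine vec_limit (a := fun k y => LogE P (fun ω => -‖∑ n ∈ Finset.range k, V (x n ω) - y‖))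
    (B := ‖V‖) ?_ ?_ ?_
  · intro k y
    refine LE_abs P (negdist_meas V hx _ _) (negdist_meas V hx _ _)
      (fun ω => negdist_bdd V x _ _ ω) (fun ω => negdist_bdd V x _ _ ω) ?_
    filter_upwards with ω
    have h := (negdist_lip y).dist_le_mul (∑ n ∈ Finset.range (k + 1), V (x n ω))
      (∑ n ∈ Finset.range k, V (x n ω))
    rw [Real.dist_eq, dist_eq_norm, NNReal.coe_one, one_mul] at h
    refine h.trans ?_
    rw [Finset.sum_range_succ, add_sub_cancel_left]
    exact V.norm_coe_le_norm _
  · intro k y z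
    refine LE_abs P (negdist_meas V hx _ _) (negdist_meas V hx _ _)
      (fun ω => negdist_bdd V x _ _ ω) (fun ω => negdist_bdd V x _ _ ω) ?_
    filter_upwards with ω
    set v := ∑ n ∈ Finset.range k, V (x n ω)
    have := abs_norm_sub_norm_le (v - z) (v - y)
    rw [show -‖v - y‖ - -‖v - z‖ = ‖v - z‖ - ‖v - y‖ by ring]
    refine this.trans (le_of_eq ?_)
    congr 1; abel
  · intro ε hε
    obtain ⟨C, hC⟩ := hS E V ε hε
    refine ⟨C, fun k j y z => ?_⟩
    refine hC (fun v => -‖v - (y + z)‖) (fun v => -‖v - y‖) (fun v => -‖v - z‖)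
      (negdist_lip _) (negdist_lip _) (negdist_lip _) (fun u v => ?_) k j
    have := norm_add_le (u - y) (v - z)
    rw [show u - y + (v - z) = u + v - (y + z) by abel] at this
    linarith

/-- composition of a linear functional with a bounded continuous map -/
def linV (f : E →L[ℝ] ℝ) (V : W →ᵇ E) : W →ᵇ ℝ :=
  BoundedContinuousFunction.ofNormedAddCommGroup (fun w => -f (V w))
    ((f.continuous.comp V.continuous).neg) (‖f‖ * ‖V‖) (fun w => by
      rw [norm_neg]
      exact (f.le_opNorm _).trans (by gcongr; exact V.norm_coe_le_norm w))

lemma Q_le_Lam (P : Measure Ω) [IsProbabilityMeasure P] {x : ℕ → Ω → W}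
    (hx : ∀ n, Measurable (x n)) (hS : SupAdd P x) (V : W →ᵇ E) {L : E → ℝ}
    (hL : ∀ y, Tendsto (fun k : ℕ =>
      LogE P (fun ω => -‖∑ n ∈ Finset.range k, V (x n ω) - (k : ℝ) • y‖) / k) atTop (𝓝 (L y)))
    (f : E →L[ℝ] ℝ) (x0 : E) (hf : ∀ y, L y ≤ L x0 + f (y - x0)) :
    QQ P x (linV f V) ≤ L x0 - f x0 := by
  refine le_of_forall_pos_le_add fun δ' hδ' => ?_
  set δ := δ' / (‖f‖ + 3) with hδdef
  have hfp : 0 < ‖f‖ + 3 := by positivity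
  have hδ : 0 < δ := by positivity
  have : ProperSpace E := FiniteDimensional.proper ℝ E
  obtain ⟨t, -, htf, hcov⟩ := (isCompact_closedBall (0 : E) ‖V‖).finite_cover_balls hδ
  set N := htf.toFinset with hN
  have hev : ∀ y ∈ N, ∀ᶠ k : ℕ in atTop,
      LogE P (fun ω => -‖∑ n ∈ Finset.range k, V (x n ω) - (k : ℝ) • y‖) / k < L y + δ :=
    fun y _ => (hL y).eventually_lt_const (by linarith)
  have hev' := (Filter.eventually_all_finset N).2 hev
  have hgrow : ∀ᶠ k : ℕ in atTop, (N.card : ℝ) ≤ Real.exp (k * δ) := by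
    have : Tendsto (fun k : ℕ => Real.exp (k * δ)) atTop atTop :=
      Real.tendsto_exp_atTop.comp (tendsto_natCast_atTop_atTop.atTop_mul_const hδ)
    exact this.eventually_ge_atTop _
  refine le_of_tendsto (QQ_tendsto P hx hS (linV f V)) ?_
  filter_upwards [hev', hgrow, eventually_ge_atTop 1] with k h1 h2 hk
  have hk0 : (0 : ℝ) < k := by exact_mod_cast hk
  rw [div_le_iff₀ hk0, ← Real.exp_le_exp, LE_exp P (YY_meas (linV f V) hx _)
    (fun ω => YY_bdd (linV f V) x _ ω)]
  have hpt : ∀ ω, Real.exp (∑ n ∈ Finset.range k, linV f V (x n ω)) ≤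
      ∑ y ∈ N, Real.exp (-(k * f y) + k * ((‖f‖ + 1) * δ)) *
        Real.exp (-‖∑ n ∈ Finset.range k, V (x n ω) - (k : ℝ) • y‖) := by
    intro ω
    set Y := ∑ n ∈ Finset.range k, V (x n ω) with hY
    have hYb : ‖Y‖ ≤ k * ‖V‖ := by simpa using YY_bdd V x (Finset.range k) ω
    have hs : ∑ n ∈ Finset.range k, linV f V (x n ω) = -f Y := by
      rw [hY, map_sum, ← Finset.sum_neg_distrib]; rfl
    have hin : (k : ℝ)⁻¹ • Y ∈ Metric.closedBall (0 : E) ‖V‖ := by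
      rw [mem_closedBall_zero_iff, norm_smul, norm_inv, Real.norm_natCast, ← div_eq_inv_mul,
        div_le_iff₀ hk0]
      linarith
    obtain ⟨y, hy, hdy⟩ := Set.mem_iUnion₂.1 (hcov hin)
    rw [Metric.mem_ball, dist_eq_norm] at hdy
    have hd : ‖Y - (k : ℝ) • y‖ ≤ k * δ := by
      have : Y - (k : ℝ) • y = (k : ℝ) • ((k : ℝ)⁻¹ • Y - y) := by
        rw [smul_sub, smul_smul, mul_inv_cancel₀ hk0.ne', one_smul]
      rw [this, norm_smul, Real.norm_natCast]
      exact mul_le_mul_of_nonneg_left hdy.le hk0.le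
    have hyN : y ∈ N := by rw [hN]; simpa using hy
    refine le_trans ?_ (Finset.single_le_sum (f := fun y =>
      Real.exp (-(k * f y) + k * ((‖f‖ + 1) * δ)) * Real.exp (-‖Y - (k : ℝ) • y‖))
      (fun y _ => by positivity) hyN)
    rw [hs, ← Real.exp_add]
    refine Real.exp_le_exp.2 ?_
    have h3 : -f (Y - (k : ℝ) • y) ≤ ‖f‖ * (k * δ) :=
      ((neg_le_abs _).trans (f.le_opNorm _)).trans (by gcongr)
    rw [map_sub, map_smul, smul_eq_mul] at h3
    nlinarith
  have hint : ∀ y ∈ N, Integrable (fun ω => Real.exp (-(k * f y) + k * ((‖f‖ + 1) * δ)) *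
        Real.exp (-‖∑ n ∈ Finset.range k, V (x n ω) - (k : ℝ) • y‖)) P := fun y _ =>
    (LE_intble P (negdist_meas V hx k _) (negdist_bdd V x k _)).const_mul _
  calc ∫ ω, Real.exp (∑ n ∈ Finset.range k, linV f V (x n ω)) ∂P ≤
      ∫ ω, ∑ y ∈ N, Real.exp (-(k * f y) + k * ((‖f‖ + 1) * δ)) *
        Real.exp (-‖∑ n ∈ Finset.range k, V (x n ω) - (k : ℝ) • y‖) ∂P :=
        integral_mono (LE_intble P (YY_meas (linV f V) hx _) (fun ω => YY_bdd (linV f V) x _ ω))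
          (integrable_finsetSum _ hint) hpt
    _ = ∑ y ∈ N, Real.exp (-(k * f y) + k * ((‖f‖ + 1) * δ)) *
        Real.exp (LogE P fun ω => -‖∑ n ∈ Finset.range k, V (x n ω) - (k : ℝ) • y‖) := by
        rw [integral_finsetSum _ hint]
        refine Finset.sum_congr rfl fun y _ => ?_
        rw [integral_const_mul, LE_exp P (negdist_meas V hx k _) (negdist_bdd V x k _)]
    _ ≤ ∑ y ∈ N, Real.exp (k * (L x0 - f x0 + (‖f‖ + 2) * δ)) := by
        refine Finset.sum_le_sum fun y hy => ?_
        rw [← Real.exp_add]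
        refine Real.exp_le_exp.2 ?_
        have h3 := h1 y hy
        rw [div_lt_iff₀ hk0] at h3
        have h4 := hf y
        rw [map_sub] at h4
        nlinarith
    _ ≤ Real.exp (k * δ) * Real.exp (k * (L x0 - f x0 + (‖f‖ + 2) * δ)) := by
        rw [Finset.sum_const, nsmul_eq_mul]
        gcongr
    _ = Real.exp ((L x0 - f x0 + δ') * k) := by
        rw [← Real.exp_add]
        congr 1
        have : δ' = (‖f‖ + 3) * δ := by rw [hδdef]; field_simp
        rw [this]; ring

lemma Lam_ge (P : Measure Ω) [IsProbabilityMeasure P] {x : ℕ → Ω → W}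
    (hx : ∀ n, Measurable (x n)) (hS : SupAdd P x) (V : W →ᵇ E) {L : E → ℝ}
    (hL : ∀ y, Tendsto (fun k : ℕ =>
      LogE P (fun ω => -‖∑ n ∈ Finset.range k, V (x n ω) - (k : ℝ) • y‖) / k) atTop (𝓝 (L y)))
    (hc : ConcaveOn ℝ Set.univ L) (hl : LipschitzWith 1 L) (σ : ProbabilityMeasure W)
    (hσ : rate (QQ P x) σ ≠ ⊤) :
    -(rate (QQ P x) σ).toReal ≤ L (∫ w, V w ∂(σ : Measure W)) := by
  have : ProperSpace E := FiniteDimensional.proper ℝ E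
  have : SecondCountableTopology E := inferInstance
  have : CompleteSpace E := FiniteDimensional.complete ℝ E
  set x0 := ∫ w, V w ∂(σ : Measure W) with hx0
  obtain ⟨f, hf⟩ := supergrad hc hl x0
  have h1 := Q_le_Lam P hx hS V hL f x0 hf
  have h3 : ENNReal.ofReal ((∫ w, linV f V w ∂(σ : Measure W)) - QQ P x (linV f V)) ≤
      rate (QQ P x) σ :=
    le_iSup (fun V : W →ᵇ ℝ => ENNReal.ofReal ((∫ x, V x ∂(σ : Measure W)) - QQ P x V)) (linV f V)
  rw [ENNReal.ofReal_le_iff_le_toReal hσ] at h3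
  have h4 : ∫ w, linV f V w ∂(σ : Measure W) = -f x0 := by
    have : ∀ w, linV f V w = -f (V w) := fun w => rfl
    simp only [this]
    rw [integral_neg, hx0, f.integral_comp_comm (V.integrable _)]
  rw [h4] at h3
  linarith

lemma prob_lower (P : Measure Ω) [IsProbabilityMeasure P] {x : ℕ → Ω → W}
    (hx : ∀ n, Measurable (x n)) (V : W →ᵇ E) {L : E → ℝ}
    (hL : ∀ y, Tendsto (fun k : ℕ =>
      LogE P (fun ω => -‖∑ n ∈ Finset.range k, V (x n ω) - (k : ℝ) • y‖) / k) atTop (𝓝 (L y)))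
    (x0 : E) {z M : ℝ} (hz : z < L x0) (hM : -M ≤ z) :
    ∀ᶠ k : ℕ in atTop, ENNReal.ofReal (Real.exp (k * z)) ≤
      P {ω | ‖∑ n ∈ Finset.range k, V (x n ω) - (k : ℝ) • x0‖ < k * M} := by
  obtain ⟨z', hz1, hz2⟩ := exists_between hz
  have hgrow : ∀ᶠ k : ℕ in atTop, 2 ≤ Real.exp (k * (z' - z)) := by
    have : Tendsto (fun k : ℕ => Real.exp (k * (z' - z))) atTop atTop :=
      Real.tendsto_exp_atTop.comp (tendsto_natCast_atTop_atTop.atTop_mul_const (by linarith))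
    exact this.eventually_ge_atTop _
  filter_upwards [(hL x0).eventually_const_lt hz2, hgrow, eventually_ge_atTop 1] with k h1 h2 hk
  have hk0 : (0 : ℝ) < k := by exact_mod_cast hk
  rw [lt_div_iff₀ hk0] at h1
  set X : Ω → ℝ := fun ω => -‖∑ n ∈ Finset.range k, V (x n ω) - (k : ℝ) • x0‖ with hX
  have hXm : Measurable X := negdist_meas V hx k _
  set D := {ω | ‖∑ n ∈ Finset.range k, V (x n ω) - (k : ℝ) • x0‖ < k * M} with hD
  have hDm : MeasurableSet D := by
    have : D = {ω | -(k * M) < X ω} := by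
      ext ω
      simp only [hD, hX, Set.mem_ofPred_eq]
      constructor <;> intro h <;> linarith
    rw [this]
    exact measurableSet_lt measurable_const hXm
  have h3 : ENNReal.ofReal (Real.exp (LogE P X)) ≤
      P D + ENNReal.ofReal (Real.exp (-(k * M))) := by
    rw [← LE_lintegral P hXm (negdist_bdd V x k _)]
    calc ∫⁻ ω, ENNReal.ofReal (Real.exp (X ω)) ∂P ≤
        ∫⁻ ω, (D.indicator 1 ω + ENNReal.ofReal (Real.exp (-(k * M)))) ∂P := by
          refine lintegral_mono fun ω => ?_
          by_cases hω : ω ∈ D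
          · rw [Set.indicator_of_mem hω]
            refine le_add_right ?_
            simp only [Pi.one_apply, ENNReal.ofReal_le_one]
            exact Real.exp_le_one_iff.2 (by simp [hX])
          · rw [Set.indicator_of_notMem hω, zero_add]
            refine ENNReal.ofReal_le_ofReal (Real.exp_le_exp.2 ?_)
            simp only [hD, Set.mem_ofPred_eq, not_lt] at hω
            simp only [hX]; linarith
      _ = _ := by
          rw [lintegral_add_right _ measurable_const, lintegral_indicator_one hDm]
          simp
  have h4 : Real.exp (k * z) + Real.exp (-(k * M)) ≤ Real.exp (LogE P X) := by
    calc Real.exp (k * z) + Real.exp (-(k * M)) ≤ Real.exp (k * z) + Real.exp (k * z) := by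
          gcongr; nlinarith
      _ = 2 * Real.exp (k * z) := by ring
      _ ≤ Real.exp (k * (z' - z)) * Real.exp (k * z) := by gcongr
      _ = Real.exp (z' * k) := by rw [← Real.exp_add]; congr 1; ring
      _ ≤ _ := Real.exp_le_exp.2 h1.le
  have h5 := (ENNReal.ofReal_le_ofReal h4).trans h3
  rw [ENNReal.ofReal_add (Real.exp_pos _).le (Real.exp_pos _).le] at h5
  exact (ENNReal.add_le_add_iff_right ENNReal.ofReal_ne_top).1 h5

end fd

/-- scaled vector of test functions -/
def vecV {ι : Type} [Fintype ι] (M : ℝ) (U : ι → (W →ᵇ ℝ)) : W →ᵇ (ι → ℝ) :=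
  BoundedContinuousFunction.ofNormedAddCommGroup (fun w i => M * U i w)
    (continuous_pi fun i => (U i).continuous.const_mul M) (∑ i, |M| * ‖U i‖) (fun w => by
      rw [pi_norm_le_iff_of_nonneg (by positivity)]
      intro i
      rw [norm_mul, Real.norm_eq_abs]
      refine le_trans ?_ (Finset.single_le_sum (f := fun i => |M| * ‖U i‖)
        (fun i _ => by positivity) (Finset.mem_univ i))
      gcongr
      exact (U i).norm_coe_le_norm w)

lemma lower (P : Measure Ω) [IsProbabilityMeasure P] {x : ℕ → Ω → W}
    (hx : ∀ n, Measurable (x n)) (hS : SupAdd P x)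
    (G : Set (ProbabilityMeasure W)) (hG : IsOpen G) :
    -(⨅ σ ∈ G, (rate (QQ P x) σ : EReal)) ≤
    liminf (fun k : ℕ => (((k : ℝ)⁻¹ : ℝ) : EReal) *
      ENNReal.log (P {ω | occ (fun n => x n ω) k ∈ G})) atTop := by
  refine EReal.neg_le_of_neg_le ?_
  refine le_iInf₂ fun σ hσ => ?_
  refine EReal.neg_le_of_neg_le ?_
  by_cases htop : rate (QQ P x) σ = ⊤
  · rw [htop]; simp
  set r := (rate (QQ P x) σ).toReal with hr
  have hr' : -((rate (QQ P x) σ : ℝ≥0∞) : EReal) = ((-r : ℝ) : EReal) := by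
    rw [EReal.coe_neg, hr, EReal.coe_ennreal_toReal htop]
  rw [hr', ← EReal.ge_of_forall_gt_iff_ge]
  intro z hz
  have hz : z < -r := by exact_mod_cast hz
  obtain ⟨ι, _, U, hU⟩ := weak_nbhd hG hσ
  set M := |z| + 1 with hM
  have hM0 : 0 < M := by positivity
  have hMz : -M ≤ z := by rw [hM]; linarith [neg_abs_le z]
  set V := vecV M U with hV
  obtain ⟨L, hL, hc, hl⟩ := Lam_exists P hx hS V
  have hge := Lam_ge P hx hS V hL hc hl σ htop
  refine ldp_lo ?_
  filter_upwards [prob_lower P hx V hL (∫ w, V w ∂(σ : Measure W)) (z := z) (M := M)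
    (by linarith) hMz, eventually_ge_atTop 1] with k h1 hk
  refine h1.trans (measure_mono fun ω hω => hU _ fun i => ?_)
  have hk0 : (0 : ℝ) < k := by exact_mod_cast hk
  have hx0 : (∫ w, V w ∂(σ : Measure W)) i = M * ∫ w, U i w ∂(σ : Measure W) := by
    rw [← integral_const_mul]
    exact ((ContinuousLinearMap.proj (R := ℝ) (φ := fun _ : ι => ℝ) i).integral_comp_comm
      (V.integrable _)).symm
  have h2 : |(∑ n ∈ Finset.range k, V (x n ω) - (k : ℝ) • ∫ w, V w ∂(σ : Measure W)) i| < k * M :=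
    lt_of_le_of_lt (norm_le_pi_norm
      (∑ n ∈ Finset.range k, V (x n ω) - (k : ℝ) • ∫ w, V w ∂(σ : Measure W)) i) hω
  rw [Pi.sub_apply, Finset.sum_apply, Pi.smul_apply, hx0] at h2
  have h3 : ∀ n, V (x n ω) i = M * U i (x n ω) := fun n => rfl
  simp only [h3] at h2
  rw [← Finset.mul_sum, smul_eq_mul] at h2
  rw [occ_integral _ hk, smul_eq_mul]
  have h4 : M * ∑ n ∈ Finset.range k, U i (x n ω) - k * (M * ∫ w, U i w ∂(σ : Measure W)) =
      (k * M) * ((k : ℝ)⁻¹ * ∑ n ∈ Finset.range k, U i (x n ω) -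
        ∫ w, U i w ∂(σ : Measure W)) := by
    field_simp
  rw [h4, abs_mul, abs_of_pos (by positivity : (0 : ℝ) < k * M)] at h2
  have h5 : (0 : ℝ) < k * M := by positivity
  by_contra hcon
  push Not at hcon
  nlinarith

end lower

section noise

variable [SecondCountableTopology H] [MeasurableSpace H] [BorelSpace H]

/-- coordinates -/
def crd (e : HilbertBasis ℕ ℝ H) (u : H) : ℕ → ℝ := fun j => e.repr u j

lemma crd_inner (e : HilbertBasis ℕ ℝ H) (u : H) (j : ℕ) : crd e u j = inner ℝ (e j) u :=
  e.repr_apply_apply u j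

lemma crd_cont (e : HilbertBasis ℕ ℝ H) : Continuous (crd e) := by
  refine continuous_pi fun j => ?_
  simp only [crd_inner]
  fun_prop

lemma crd_inj (e : HilbertBasis ℕ ℝ H) : Function.Injective (crd e) := by
  intro u v h
  apply e.repr.injective
  ext j
  exact congrFun h j

lemma crd_emb (e : HilbertBasis ℕ ℝ H) : MeasurableEmbedding (crd e) :=
  (crd_cont e).measurableEmbedding (crd_inj e)

lemma meas_of_crd {Ω : Type} (m : MeasurableSpace Ω) (e : HilbertBasis ℕ ℝ H) {ζ : Ω → H}
    (h : ∀ j, Measurable[m] (fun ω => crd e (ζ ω) j)) : Measurable[m] ζ :=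
  (crd_emb e).measurable_comp_iff.1 (measurable_pi_iff.2 h)

lemma crd_hasSum (e : HilbertBasis ℕ ℝ H) {a : ℕ → ℝ} {u : H}
    (h : HasSum (fun j => a j • (e j : H)) u) (j : ℕ) : crd e u j = a j := by
  rw [crd_inner]
  have h1 := (innerSL ℝ (e j)).hasSum h
  have h2 : HasSum (fun i => innerSL ℝ (e j) (a i • (e i : H))) (a j) := by
    convert hasSum_single (f := fun i => innerSL ℝ (e j) (a i • (e i : H))) j ?_ using 1
    · simp [inner_smul_right, e.orthonormal.1 j]
    · intro i hi
      simp [inner_smul_right, orthonormal_iff_ite.1 e.orthonormal, hi.symm]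
  exact h1.unique h2

lemma crd_normsq (e : HilbertBasis ℕ ℝ H) (u : H) : HasSum (fun j => (crd e u j) ^ 2) (‖u‖ ^ 2) := by
  have h := e.hasSum_inner_mul_inner u u
  rw [real_inner_self_eq_norm_sq] at h
  have h2 : (fun j => (crd e u j) ^ 2) = fun i => inner ℝ u (e i) * inner ℝ (e i) u := by
    funext j
    rw [crd_inner, real_inner_comm (e j) u]; ring
  rw [h2]; exact h

lemma crd_add (e : HilbertBasis ℕ ℝ H) (u v : H) (j : ℕ) :
    crd e (u + v) j = crd e u j + crd e v j := by
  simp only [crd_inner, inner_add_right]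

lemma crd_sub (e : HilbertBasis ℕ ℝ H) (u v : H) (j : ℕ) :
    crd e (u - v) j = crd e u j - crd e v j := by
  simp only [crd_inner, inner_sub_right]

lemma crd_smul_e (e : HilbertBasis ℕ ℝ H) (c : ℝ) (i j : ℕ) :
    crd e (c • (e i : H)) j = if i = j then c else 0 := by
  simp only [crd_inner, inner_smul_right, orthonormal_iff_ite.1 e.orthonormal]
  by_cases h : i = j
  · simp [h]
  · simp [h, Ne.symm h]

lemma abs_crd_le (e : HilbertBasis ℕ ℝ H) (u : H) (j : ℕ) : |crd e u j| ≤ ‖u‖ := by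
  rw [crd_inner]
  have := abs_real_inner_le_norm (e j) u
  rwa [e.orthonormal.1 j, one_mul] at this

variable {Ω : Type} [MeasurableSpace Ω] {P : Measure Ω} [IsProbabilityMeasure P]
  {e : HilbertBasis ℕ ℝ H} {η : ℕ → Ω → H} {b : ℕ → ℝ} {ξ : ℕ → ℕ → Ω → ℝ} {p : ℕ → ℝ → ℝ}

lemma crd_eta (hD : CondD P e η b ξ p) (k : ℕ) (ω : Ω) (j : ℕ) :
    crd e (η k ω) j = b j * ξ j k ω := crd_hasSum e (hD.2.2.1 k ω) j

/-- sigma-algebra generated by a subfamily of the noise coordinates -/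
@[reducible] def sig (ξ : ℕ → ℕ → Ω → ℝ) (T : Set (ℕ × ℕ)) : MeasurableSpace Ω :=
  ⨆ i ∈ T, MeasurableSpace.comap (ξ i.1 i.2) inferInstance

lemma sig_meas {ξ : ℕ → ℕ → Ω → ℝ} {T : Set (ℕ × ℕ)} {j k : ℕ} (h : (j, k) ∈ T) :
    Measurable[sig ξ T] (ξ j k) := by
  rw [measurable_iff_comap_le]
  exact le_iSup₂_of_le (f := fun (i : ℕ × ℕ) (_ : i ∈ T) =>
    MeasurableSpace.comap (ξ i.1 i.2) inferInstance) (j, k) h le_rfl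

lemma sig_indep (hD : CondD P e η b ξ p) {T T' : Set (ℕ × ℕ)} (h : Disjoint T T') :
    Indep (sig ξ T) (sig ξ T') P := by
  refine indep_iSup_of_disjoint (m := fun i : ℕ × ℕ => MeasurableSpace.comap (ξ i.1 i.2)
    inferInstance) ?_ ?_ h
  · intro i
    exact (hD.2.2.2.1 i.1 i.2).comap_le
  · exact hD.2.2.2.2.1

lemma indepFun_of_sig {α β : Type} [MeasurableSpace α] [MeasurableSpace β]
    (hD : CondD P e η b ξ p) {T T' : Set (ℕ × ℕ)} (h : Disjoint T T') {f : Ω → α} {g : Ω → β}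
    (hf : Measurable[sig ξ T] f) (hg : Measurable[sig ξ T'] g) : IndepFun f g P := by
  have := sig_indep hD h
  exact indep_of_indep_of_le_left (indep_of_indep_of_le_right this hg.comap_le) hf.comap_le

lemma eta_sig (hD : CondD P e η b ξ p) (k : ℕ) {T : Set (ℕ × ℕ)} (hT : ∀ j, (j, k) ∈ T) :
    Measurable[sig ξ T] (η k) := by
  refine meas_of_crd _ e fun j => ?_
  simp only [crd_eta hD]
  exact (measurable_const_mul (b j)).comp (sig_meas (hT j))

lemma eta_law (hD : CondD P e η b ξ p) (hη : ∀ k, Measurable (η k)) (k : ℕ) :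
    Measure.map (η k) P = Measure.map (η 1) P := by
  have key : ∀ k, Measure.map (crd e) (Measure.map (η k) P) = Measure.infinitePi (fun j =>
      Measure.map (fun x => b j * x)
        ((volume : Measure ℝ).withDensity fun x => ENNReal.ofReal (p j x))) := by
    intro k
    rw [Measure.map_map (crd_cont e).measurable (hη k)]
    have h1 : crd e ∘ η k = fun ω j => b j * ξ j k ω := by
      funext ω j; exact crd_eta hD k ω j
    have hmeas : ∀ j, Measurable (fun ω => b j * ξ j k ω) := fun j =>
      (hD.2.2.2.1 j k).const_mul (b j)
    have hind : iIndepFun (fun j ω => b j * ξ j k ω) P := by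
      have h2 := hD.2.2.2.2.1.precomp (g := fun j : ℕ => (j, k))
        (fun i j h => (Prod.mk.inj h).1)
      exact h2.comp (fun j x => b j * x) (fun j => measurable_const_mul (b j))
    rw [h1, hind.map_fun_eq_infinitePi_map hmeas]
    congr 1
    funext j
    rw [← hD.2.2.2.2.2.1 j k, Measure.map_map (measurable_const_mul _) (hD.2.2.2.1 j k)]
    rfl
  have h := (key k).trans (key 1).symm
  have := congrArg (Measure.comap (crd e)) h
  rwa [(crd_emb e).comap_map, (crd_emb e).comap_map] at this

lemma shift_1d {q : ℝ → ℝ} {L : ℝ≥0} (hq : LipschitzWith L q)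
    (hs : Function.support q ⊆ Set.Icc (-1 : ℝ) 1) (s : ℝ) {f : ℝ → ℝ≥0∞} (hf : Measurable f)
    {M : ℝ≥0∞} (hM : ∀ x, f x ≤ M) :
    ∫⁻ x, f x ∂((volume : Measure ℝ).withDensity fun x => ENNReal.ofReal (q x)) ≤
    ∫⁻ x, f (x + s) ∂((volume : Measure ℝ).withDensity fun x => ENNReal.ofReal (q x)) +
      ENNReal.ofReal (2 * L * |s|) * M := by
  have hqm : Measurable fun x => ENNReal.ofReal (q x) := hq.continuous.measurable.ennreal_ofReal
  have hf' : Measurable (fun x => f (x + s)) := hf.comp (measurable_add_const s)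
  rw [lintegral_withDensity_eq_lintegral_mul _ hqm hf,
    lintegral_withDensity_eq_lintegral_mul _ hqm hf']
  simp only [Pi.mul_apply]
  have h1 : ∫⁻ x, ENNReal.ofReal (q x) * f (x + s) = ∫⁻ x, ENNReal.ofReal (q (x - s)) * f x := by
    rw [← lintegral_add_right_eq_self (μ := (volume : Measure ℝ))
      (fun x => ENNReal.ofReal (q (x - s)) * f x) s]
    simp
  rw [h1]
  have h2 : ENNReal.ofReal (2 * L * |s|) * M =
      ∫⁻ x, (Set.Icc (-1 : ℝ) 1).indicator (fun _ => ENNReal.ofReal (L * |s|) * M) x := by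
    rw [lintegral_indicator measurableSet_Icc, lintegral_const, Measure.restrict_apply_univ,
      Real.volume_Icc, mul_assoc 2, ENNReal.ofReal_mul zero_le_two]
    norm_num
    ring
  rw [h2, ← lintegral_add_left (by
    have : Measurable fun x => ENNReal.ofReal (q (x - s)) := hqm.comp (measurable_sub_const s)
    exact this.mul hf)]
  refine lintegral_mono fun x => ?_
  by_cases hx : x ∈ Set.Icc (-1 : ℝ) 1
  · rw [Set.indicator_of_mem hx]
    have h3 : q x ≤ q (x - s) + L * |s| := by
      have := hq.dist_le_mul x (x - s)
      rw [Real.dist_eq, Real.dist_eq, sub_sub_cancel] at this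
      linarith [le_abs_self (q x - q (x - s))]
    calc ENNReal.ofReal (q x) * f x ≤
        (ENNReal.ofReal (q (x - s)) + ENNReal.ofReal (L * |s|)) * f x := by
          gcongr
          exact (ENNReal.ofReal_le_ofReal h3).trans ENNReal.ofReal_add_le
      _ = ENNReal.ofReal (q (x - s)) * f x + ENNReal.ofReal (L * |s|) * f x := add_mul _ _ _
      _ ≤ _ := by gcongr; exact hM x
  · have : q x = 0 := by
      by_contra hne
      exact hx (hs hne)
    rw [this]; simp

lemma shift_coord (hD : CondD P e η b ξ p) (hη : ∀ k, Measurable (η k)) (hb : ∀ j, b j ≠ 0)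
    (j : ℕ) : ∃ C : ℝ, 0 ≤ C ∧ ∀ c : ℝ, ∀ f : H → ℝ≥0∞, Measurable f → ∀ M : ℝ≥0∞,
      (∀ g, f g ≤ M) → ∫⁻ g, f g ∂(Measure.map (η 1) P) ≤
      ∫⁻ g, f (g + c • (e j : H)) ∂(Measure.map (η 1) P) + ENNReal.ofReal (C * |c|) * M := by
  obtain ⟨L, hL⟩ := hD.2.2.2.2.2.2.1 j
  have hbj : 0 < b j := lt_of_le_of_ne (hD.1 j) (hb j).symm
  refine ⟨2 * L / b j, by positivity, fun c f hf M hM => ?_⟩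
  set ζ : Ω → H := fun ω => η 1 ω - (b j * ξ j 1 ω) • (e j : H) with hζ
  have hξm := hD.2.2.2.1 j 1
  have hζm : Measurable ζ := (hη 1).sub ((hξm.const_mul (b j)).smul_const _)
  have hind : IndepFun ζ (ξ j 1) P := by
    refine indepFun_of_sig hD (T := {i | i ≠ (j, 1)}) (T' := {(j, 1)}) ?_ ?_ ?_
    · rw [Set.disjoint_singleton_right]; simp
    · refine meas_of_crd _ e fun i => ?_
      simp only [hζ, crd_sub, crd_eta hD, crd_smul_e]
      by_cases hij : j = i
      · subst hij; simp
      · simp only [if_neg hij, sub_zero]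
        refine (measurable_const_mul (b i)).comp (sig_meas ?_)
        simp [Ne.symm hij]
    · exact sig_meas rfl
  set ν := (volume : Measure ℝ).withDensity fun x => ENNReal.ofReal (p j x) with hν
  have hlaw : Measure.map (ξ j 1) P = ν := hD.2.2.2.2.2.1 j 1
  have hνp : IsProbabilityMeasure ν := by
    rw [← hlaw]; exact Measure.isProbabilityMeasure_map hξm.aemeasurable
  have hζp : IsProbabilityMeasure (Measure.map ζ P) :=
    Measure.isProbabilityMeasure_map hζm.aemeasurable
  have hprod : Measure.map (fun ω => (ζ ω, ξ j 1 ω)) P = (Measure.map ζ P).prod ν := by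
    rw [← hlaw]
    exact (indepFun_iff_map_prod_eq_prod_map_map hζm.aemeasurable hξm.aemeasurable).1 hind
  have hrep : ∀ F : H → ℝ≥0∞, Measurable F → ∫⁻ g, F g ∂(Measure.map (η 1) P) =
      ∫⁻ z, ∫⁻ x, F (z + (b j * x) • (e j : H)) ∂ν ∂(Measure.map ζ P) := by
    intro F hF
    have hm : Measurable (fun q : H × ℝ => F (q.1 + (b j * q.2) • (e j : H))) := by
      refine hF.comp ?_
      fun_prop
    rw [lintegral_map hF (hη 1), ← lintegral_prod _ hm.aemeasurable, ← hprod,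
      lintegral_map hm (hζm.prodMk hξm)]
    refine lintegral_congr fun ω => ?_
    simp [hζ]
  rw [hrep f hf, hrep (fun g => f (g + c • (e j : H))) (hf.comp (measurable_add_const _))]
  have hconst : ENNReal.ofReal (2 * L / b j * |c|) * M =
      ∫⁻ z, ENNReal.ofReal (2 * L * |c / b j|) * M ∂(Measure.map ζ P) := by
    rw [lintegral_const, measure_univ, mul_one, abs_div, abs_of_pos hbj]
    congr 2; ring
  rw [hconst, ← lintegral_add_right _ measurable_const]
  refine lintegral_mono fun z => ?_
  have h1 := shift_1d hL (hD.2.2.2.2.2.2.2.2 j) (c / b j)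
    (f := fun x => f (z + (b j * x) • (e j : H))) (by
      refine hf.comp ?_
      fun_prop) (M := M) (fun x => hM _)
  refine h1.trans (le_of_eq ?_)
  congr 1
  refine lintegral_congr fun x => ?_
  congr 1
  rw [mul_add, mul_div_cancel₀ _ hbj.ne', add_smul, add_assoc]

lemma shift_all (hD : CondD P e η b ξ p) (hη : ∀ k, Measurable (η k)) (hb : ∀ j, b j ≠ 0)
    (N : ℕ) : ∃ C : ℝ, 0 ≤ C ∧ ∀ u : H, ∀ f : H → ℝ≥0∞, Measurable f → ∀ M : ℝ≥0∞,
      (∀ g, f g ≤ M) → ∫⁻ g, f g ∂(Measure.map (η 1) P) ≤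
      ∫⁻ g, f (g + projB e N u) ∂(Measure.map (η 1) P) + ENNReal.ofReal (C * ‖u‖) * M := by
  induction N with
  | zero =>
    refine ⟨0, le_rfl, fun u f hf M hM => ?_⟩
    simp [projB]
  | succ N ih =>
    obtain ⟨C, hC0, hC⟩ := ih
    obtain ⟨C', hC0', hC'⟩ := shift_coord hD hη hb N
    refine ⟨C + C', by positivity, fun u f hf M hM => ?_⟩
    have h1 := hC' (crd e u N) f hf M hM
    have h2 := hC u (fun g => f (g + crd e u N • (e N : H))) (hf.comp (measurable_add_const _)) M
      (fun g => hM _)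
    have h3 : ∀ g, g + projB e N u + crd e u N • (e N : H) = g + projB e (N + 1) u := by
      intro g
      rw [projB, projB, Finset.sum_range_succ, add_assoc]; rfl
    simp only [h3] at h2
    refine h1.trans ((add_le_add_left h2 _).trans ?_)
    rw [add_assoc, ← add_mul, ← ENNReal.ofReal_add (by positivity) (by positivity)]
    gcongr
    have := abs_crd_le e u N
    nlinarith

end noise

section noise2

variable [SecondCountableTopology H] [MeasurableSpace H] [BorelSpace H]
variable {Ω : Type} [MeasurableSpace Ω] {P : Measure Ω} [IsProbabilityMeasure P]
  {e : HilbertBasis ℕ ℝ H} {η : ℕ → Ω → H} {b : ℕ → ℝ} {ξ : ℕ → ℕ → Ω → ℝ} {p : ℕ → ℝ → ℝ}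

lemma xi_le_one (hD : CondD P e η b ξ p) (j k : ℕ) : ∀ᵐ ω ∂P, |ξ j k ω| ≤ 1 := by
  have h1 : ∀ᵐ x ∂(Measure.map (ξ j k) P), |x| ≤ 1 := by
    obtain ⟨L, hL⟩ := hD.2.2.2.2.2.2.1 j
    rw [hD.2.2.2.2.2.1 j k, ae_withDensity_iff hL.continuous.measurable.ennreal_ofReal]
    refine Eventually.of_forall fun x hx => ?_
    have : p j x ≠ 0 := by
      intro h; apply hx; rw [h]; simp
    exact abs_le.2 (hD.2.2.2.2.2.2.2.2 j this)
  exact ae_of_ae_map (hD.2.2.2.1 j k).aemeasurable h1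

lemma xi_small (hD : CondD P e η b ξ p) (j k : ℕ) {δ : ℝ} (hδ : 0 < δ) :
    P (ξ j k ⁻¹' Metric.ball 0 δ) ≠ 0 := by
  rw [← Measure.map_apply (hD.2.2.2.1 j k) Metric.isOpen_ball.measurableSet,
    hD.2.2.2.2.2.1 j k]
  obtain ⟨L, hL⟩ := hD.2.2.2.2.2.2.1 j
  rw [Ne, withDensity_apply_eq_zero hL.continuous.measurable.ennreal_ofReal]
  have hopen : IsOpen ({x | 0 < p j x} ∩ Metric.ball (0 : ℝ) δ) :=
    (isOpen_lt continuous_const hL.continuous).inter Metric.isOpen_ball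
  have hpos := hopen.measure_pos (volume : Measure ℝ)
    ⟨0, hD.2.2.2.2.2.2.2.1 j, Metric.mem_ball_self hδ⟩
  intro h0
  refine absurd (measure_mono_null ?_ h0) hpos.ne'
  rintro x ⟨hx, hx'⟩
  refine ⟨?_, hx'⟩
  have : 0 < p j x := hx
  simpa using this

lemma zero_msupp (hD : CondD P e η b ξ p) (hη : ∀ k, Measurable (η k)) :
    (0 : H) ∈ msupp (Measure.map (η 1) P) := by
  intro U hU
  obtain ⟨r, hr, hrU⟩ := Metric.mem_nhds_iff.1 hU
  refine lt_of_lt_of_le ?_ (measure_mono hrU)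
  rw [Measure.map_apply (hη 1) Metric.isOpen_ball.measurableSet]
  have hbs := hD.2.1
  obtain ⟨N, hN⟩ : ∃ N, ∑' j, (b (j + N)) ^ 2 < r ^ 2 / 2 := by
    have := tendsto_sum_nat_add (fun j => (b j) ^ 2)
    have h2 : (0 : ℝ) < r ^ 2 / 2 := by positivity
    exact (this.eventually (gt_mem_nhds h2)).exists
  set s := ∑ j ∈ Finset.range N, (b j) ^ 2 with hs
  have hs0 : 0 ≤ s := Finset.sum_nonneg fun _ _ => sq_nonneg _
  obtain ⟨δ, hδ, hδs⟩ : ∃ δ : ℝ, 0 < δ ∧ δ ^ 2 * s < r ^ 2 / 2 := by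
    have hc : Tendsto (fun δ : ℝ => δ ^ 2 * s) (𝓝[>] 0) (𝓝 0) := by
      have : ContinuousAt (fun δ : ℝ => δ ^ 2 * s) 0 := by fun_prop
      have h := this.tendsto
      simp at h
      exact h.mono_left nhdsWithin_le_nhds
    have h2 : (0 : ℝ) < r ^ 2 / 2 := by positivity
    obtain ⟨δ, h3, h4⟩ := ((hc.eventually (gt_mem_nhds h2)).and self_mem_nhdsWithin).exists
    exact ⟨δ, h4, h3⟩
  have hind : iIndepFun (fun j => ξ j 1) P :=
    hD.2.2.2.2.1.precomp (g := fun j : ℕ => (j, 1)) (fun i j h => (Prod.mk.inj h).1)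
  have hE : P (⋂ j ∈ Finset.range N, ξ j 1 ⁻¹' Metric.ball 0 δ) ≠ 0 := by
    rw [hind.measure_inter_preimage_eq_mul (Finset.range N)
      (sets := fun _ => Metric.ball 0 δ) (fun _ _ => Metric.isOpen_ball.measurableSet)]
    exact Finset.prod_ne_zero_iff.2 fun j _ => xi_small hD j 1 hδ
  refine lt_of_lt_of_le (pos_iff_ne_zero.2 hE) (measure_mono_ae ?_)
  have hall : ∀ᵐ ω ∂P, ∀ j, |ξ j 1 ω| ≤ 1 := ae_all_iff.2 fun j => xi_le_one hD j 1
  filter_upwards [hall] with ω hω hωE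
  have hωE' : ∀ j < N, |ξ j 1 ω| < δ := by
    intro j hj
    have := Set.mem_iInter₂.1 hωE j (Finset.mem_range.2 hj)
    simpa [Real.dist_eq] using this
  change η 1 ω ∈ Metric.ball 0 r
  rw [mem_ball_zero_iff]
  have h1 := crd_normsq e (η 1 ω)
  have h2 : ∀ j, (crd e (η 1 ω) j) ^ 2 = (b j) ^ 2 * (ξ j 1 ω) ^ 2 := by
    intro j; rw [crd_eta hD, mul_pow]
  have h3 := h1.summable.sum_add_tsum_nat_add N
  rw [h1.tsum_eq] at h3
  have h4 : ∑ j ∈ Finset.range N, (crd e (η 1 ω) j) ^ 2 ≤ δ ^ 2 * s := by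
    rw [hs, Finset.mul_sum]
    refine Finset.sum_le_sum fun j hj => ?_
    rw [h2, mul_comm]
    have : (ξ j 1 ω) ^ 2 ≤ δ ^ 2 :=
      sq_le_sq' (by linarith [(abs_lt.1 (hωE' j (Finset.mem_range.1 hj))).1])
        (abs_lt.1 (hωE' j (Finset.mem_range.1 hj))).2.le
    exact mul_le_mul_of_nonneg_right this (sq_nonneg _)
  have h5 : ∑' j, (crd e (η 1 ω) (j + N)) ^ 2 ≤ ∑' j, (b (j + N)) ^ 2 := by
    refine Summable.tsum_le_tsum ?_ ((summable_nat_add_iff (f := fun j => (crd e (η 1 ω) j) ^ 2) N).2 h1.summable)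
      ((summable_nat_add_iff (f := fun j => (b j) ^ 2) N).2 hbs)
    intro j
    rw [h2]
    have : (ξ (j + N) 1 ω) ^ 2 ≤ 1 := by
      rw [sq_le_one_iff_abs_le_one]; exact hω _
    nlinarith [sq_nonneg (b (j + N))]
  have h6 : ‖η 1 ω‖ ^ 2 < r ^ 2 := by linarith
  exact lt_of_pow_lt_pow_left₀ 2 hr.le h6

lemma msupp_ae {X : Type} [TopologicalSpace X] [SecondCountableTopology X] [MeasurableSpace X]
    (μ : Measure X) : ∀ᵐ x ∂μ, x ∈ msupp μ := by
  have h : msupp μ = μ.support := by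
    ext x
    exact (Measure.mem_support_iff_forall x).symm
  rw [h]
  exact Measure.support_mem_ae

lemma indep_assoc {X Y Z : Type} [MeasurableSpace X] [MeasurableSpace Y] [MeasurableSpace Z]
    {a : Ω → X} {c : Ω → Y} {d : Ω → Z} (ha : Measurable a) (hc : Measurable c)
    (hd : Measurable d) (h1 : IndepFun a (fun ω => (c ω, d ω)) P) (h2 : IndepFun c d P) :
    IndepFun (fun ω => (a ω, c ω)) d P := by
  have hpa := Measure.isProbabilityMeasure_map (μ := P) ha.aemeasurable
  have hpc := Measure.isProbabilityMeasure_map (μ := P) hc.aemeasurable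
  have hpd := Measure.isProbabilityMeasure_map (μ := P) hd.aemeasurable
  rw [indepFun_iff_map_prod_eq_prod_map_map (ha.prodMk hc).aemeasurable hd.aemeasurable]
  have h3 : IndepFun a c P := h1.comp measurable_id measurable_fst
  rw [indepFun_iff_map_prod_eq_prod_map_map ha.aemeasurable (hc.prodMk hd).aemeasurable] at h1
  rw [indepFun_iff_map_prod_eq_prod_map_map hc.aemeasurable hd.aemeasurable] at h2
  rw [indepFun_iff_map_prod_eq_prod_map_map ha.aemeasurable hc.aemeasurable] at h3
  rw [h2] at h1
  rw [h3]
  have h4 : Measure.map (fun ω => ((a ω, c ω), d ω)) P =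
      Measure.map (MeasurableEquiv.prodAssoc.symm) (Measure.map (fun ω => (a ω, (c ω, d ω))) P) := by
    rw [Measure.map_map MeasurableEquiv.prodAssoc.symm.measurable (ha.prodMk (hc.prodMk hd))]
    rfl
  rw [h4, h1, ← Measure.prodAssoc_prod,
    Measure.map_map MeasurableEquiv.prodAssoc.symm.measurable MeasurableEquiv.prodAssoc.measurable]
  simp

lemma traj_indep (hD : CondD P e η b ξ p) (hη : ∀ k, Measurable (η k)) {S : H → H}
    (hS : Continuous S) {u₀ : Ω → H} (hu₀ : Measurable u₀)
    (hindep : IndepFun u₀ (fun ω (k : ℕ) => η k ω) P) (m n : ℕ) (hm : 1 ≤ m) :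
    IndepFun (fun ω (i : Fin (n + 1)) => (fun j : Fin m => traj S η u₀ (i + j) ω))
      (η (n + m)) P := by
  set N := n + m with hN
  set c : Ω → (Fin N → H) := fun ω i => η i ω with hc
  have hcm : Measurable c := measurable_pi_iff.2 fun i => hη i
  have h1 : IndepFun u₀ (fun ω => (c ω, η N ω)) P := by
    have hφ : Measurable (fun f : ℕ → H => ((fun i : Fin N => f i), f N)) :=
      (measurable_pi_iff.2 fun i => measurable_pi_apply _).prodMk (measurable_pi_apply _)
    exact hindep.comp measurable_id hφ
  have h2 : IndepFun c (η N) P := by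
    refine indepFun_of_sig hD (T := {i | i.2 < N}) (T' := {i | i.2 = N}) ?_ ?_ ?_
    · rw [Set.disjoint_left]
      intro i hi hi'
      have h3 : i.2 < N := hi
      have h4 : i.2 = N := hi'
      omega
    · refine (@measurable_pi_iff Ω (Fin N) (fun _ => H) (sig ξ {i | i.2 < N}) _ c).2 fun i => ?_
      exact eta_sig hD i (fun j => i.2)
    · exact eta_sig hD N (fun j => rfl)
  have h3 := indep_assoc hu₀ hcm (hη N) h1 h2
  set M := MeasurableSpace.comap (fun ω => (u₀ ω, c ω)) inferInstance with hM
  have hpair : Measurable[M] (fun ω => (u₀ ω, c ω)) := comap_measurable _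
  have htr : ∀ k, k < N → Measurable[M] (traj S η u₀ k) := by
    intro k
    induction k with
    | zero => intro _; exact measurable_fst.comp hpair
    | succ k ih =>
      intro hk
      have h4 := ih (by omega)
      have h5 : Measurable[M] (η (k + 1)) :=
        ((measurable_pi_apply (⟨k + 1, hk⟩ : Fin N)).comp measurable_snd).comp hpair
      exact (hS.measurable.comp h4).add h5
  refine indep_of_indep_of_le_left h3 ?_
  rw [← measurable_iff_comap_le]
  refine measurable_pi_iff.2 fun i => measurable_pi_iff.2 fun j => htr _ ?_
  have := i.2; have := j.2; omega

lemma traj_meas (hη : ∀ k, Measurable (η k)) {S : H → H}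
    (hS : Continuous S) {u₀ : Ω → H} (hu₀ : Measurable u₀) (k : ℕ) :
    Measurable (traj S η u₀ k) := by
  induction k with
  | zero => exact hu₀
  | succ k ih => exact (hS.measurable.comp ih).add (hη _)

end noise2

section det

lemma S_zero {S : H → H} (hA : CondA S) : S 0 = 0 := by
  have hlim : Tendsto (fun n => S^[n] (0 : H)) atTop (𝓝 0) := by
    rw [Metric.tendsto_atTop]
    intro ε hε
    obtain ⟨C, _, a, _, _, n₀, _, _, h⟩ := hA.2 (ε / 2 + 1) (ε / 2) (by linarith) (by linarith)
    refine ⟨n₀, fun n hn => ?_⟩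
    have := h 0 (Metric.mem_closedBall_self (by linarith)) n hn
    rw [norm_zero, mul_zero, max_eq_right (by linarith)] at this
    rw [dist_zero_right]; linarith
  have h1 : Tendsto (fun n => S (S^[n] (0 : H))) atTop (𝓝 (S 0)) :=
    (hA.1.continuous.tendsto 0).comp hlim
  have h2 : Tendsto (fun n => S^[n + 1] (0 : H)) atTop (𝓝 0) :=
    hlim.comp (tendsto_add_atTop_nat 1)
  simp only [Function.iterate_succ_apply'] at h2
  exact tendsto_nhds_unique h1 h2

lemma S_decay {S : H → H} (hA : CondA S) {R r : ℝ} (hr : 0 < r) (hrR : r < R) :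
    ∃ n₀ : ℕ, ∀ n, n₀ ≤ n → ∀ u ∈ Metric.closedBall (0 : H) R, ‖S^[n] u‖ ≤ r := by
  obtain ⟨C, _, a, ha0, ha1, n₀, _, _, h⟩ := hA.2 R r hr hrR
  have key : ∀ J : ℕ, ∀ n, (J + 1) * n₀ ≤ n → ∀ u ∈ Metric.closedBall (0 : H) R,
      ‖S^[n] u‖ ≤ max (a ^ (J + 1) * R) r := by
    intro J
    induction J with
    | zero =>
      intro n hn u hu
      refine (h u hu n (by simpa using hn)).trans (max_le_max ?_ le_rfl)
      rw [zero_add, pow_one]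
      exact mul_le_mul_of_nonneg_left (mem_closedBall_zero_iff.1 hu) ha0.le
    | succ J ih =>
      intro n hn u hu
      have hn2 : (J + 1) * n₀ ≤ n - n₀ := by
        have : (J + 1 + 1) * n₀ = (J + 1) * n₀ + n₀ := by ring
        omega
      have hn3 : n₀ ≤ n := by
        have : (J + 1 + 1) * n₀ = (J + 1) * n₀ + n₀ := by ring
        omega
      have h1 := ih (n - n₀) hn2 u hu
      have h2 : S^[n] u = S^[n₀] (S^[n - n₀] u) := by
        rw [← Function.iterate_add_apply]; congr 1; omega
      rw [h2]
      have hapow : a ^ (J + 1) ≤ 1 := pow_le_one₀ ha0.le ha1.le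
      have hR : 0 < R := hr.trans hrR
      have h3 : S^[n - n₀] u ∈ Metric.closedBall (0 : H) R := by
        rw [mem_closedBall_zero_iff]
        refine h1.trans (max_le ?_ hrR.le)
        nlinarith
      refine (h _ h3 n₀ le_rfl).trans (max_le ?_ (le_max_right _ _))
      calc a * ‖S^[n - n₀] u‖ ≤ a * max (a ^ (J + 1) * R) r :=
            mul_le_mul_of_nonneg_left h1 ha0.le
        _ = max (a * (a ^ (J + 1) * R)) (a * r) := mul_max_of_nonneg _ _ ha0.le
        _ ≤ _ := by
          refine max_le_max ?_ ?_
          · rw [pow_succ' a (J + 1)]; linarith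
          · nlinarith
  have hpow : Tendsto (fun J : ℕ => a ^ (J + 1) * R) atTop (𝓝 0) := by
    have := ((tendsto_pow_atTop_nhds_zero_of_lt_one ha0.le ha1).comp
      (tendsto_add_atTop_nat 1)).mul_const R
    simpa using this
  obtain ⟨J, hJ⟩ := (hpow.eventually (gt_mem_nhds hr)).exists
  refine ⟨(J + 1) * n₀, fun n hn u hu => (key J n hn u hu).trans (max_le hJ.le le_rfl)⟩

lemma attain_mono {S : H → H} {K : Set H} (h0 : S 0 = 0) (hK0 : (0 : H) ∈ K) :
    Monotone (attain S K ({0} : Set H)) := by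
  refine monotone_nat_of_le_succ fun n => ?_
  induction n with
  | zero =>
    intro x hx
    have : x = 0 := hx
    subst this
    exact ⟨0, ⟨0, rfl, h0⟩, 0, hK0, add_zero _⟩
  | succ n ih => exact Set.add_subset_add_right (Set.image_mono ih)

lemma attain_bdd {S : H → H} {K : Set H} (h0 : S 0 = 0) (hK0 : (0 : H) ∈ K) (hB : CondB S K) :
    ∃ ρ : ℝ, 0 < ρ ∧ (⋃ n, attain S K ({0} : Set H) n) ⊆ Metric.closedBall 0 ρ := by
  obtain ⟨ρ, hρ, k₀, _, h⟩ := hB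
  refine ⟨ρ, hρ, Set.iUnion_subset fun n => ?_⟩
  have h1 := h 0 le_rfl (max n (k₀ 0)) (le_max_right _ _)
  rw [Metric.closedBall_zero] at h1
  exact (attain_mono h0 hK0 (le_max_left _ _)).trans h1

lemma projB_tb (e : HilbertBasis ℕ ℝ H) (N : ℕ) (R : ℝ) :
    ∃ T : Set H, IsCompact T ∧ ∀ u, ‖u‖ ≤ R → projB e N u ∈ T := by
  refine ⟨(fun a : ℕ → ℝ => ∑ j ∈ Finset.range N, a j • (e j : H)) ''
    (Set.univ.pi fun _ => Set.Icc (-R) R), ?_, ?_⟩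
  · refine (isCompact_univ_pi fun _ => isCompact_Icc).image ?_
    fun_prop
  · intro u hu
    refine ⟨crd e u, fun j _ => ?_, rfl⟩
    have : |crd e u j| ≤ ‖u‖ := by
      rw [crd, e.repr_apply_apply]
      have := abs_real_inner_le_norm (e j) u
      rwa [e.orthonormal.1 j, one_mul] at this
    exact abs_le.1 (this.trans hu)

lemma S_tb {S : H → H} {e : HilbertBasis ℕ ℝ H} (hA : CondA S) (hC : CondC S e) {R : ℝ}
    (hR : 0 < R) : TotallyBounded (S '' Metric.closedBall 0 R) := by
  have h0 := S_zero hA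
  obtain ⟨γ, hγ0, _, hγ, hsq⟩ := hC R hR
  obtain ⟨L, hL, _, _, _, _, _, hLip, _⟩ := hA.2 R (R / 2) (by linarith) (by linarith)
  rw [Metric.totallyBounded_iff]
  intro ε hε
  obtain ⟨N, hN⟩ : ∃ N, γ N * R < ε / 2 := by
    have : Tendsto (fun N => γ N * R) atTop (𝓝 0) := by simpa using hγ.mul_const R
    exact (this.eventually (gt_mem_nhds (half_pos hε))).exists
  obtain ⟨T, hT, hTm⟩ := projB_tb e N (L * R)
  obtain ⟨t, ht, htc⟩ := Metric.totallyBounded_iff.1 hT.totallyBounded (ε / 2) (half_pos hε)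
  refine ⟨t, ht, ?_⟩
  rintro _ ⟨u, hu, rfl⟩
  have hz : (0 : H) ∈ Metric.closedBall (0 : H) R := Metric.mem_closedBall_self hR.le
  have hun : ‖u‖ ≤ R := mem_closedBall_zero_iff.1 hu
  have h1 := hLip u hu 0 hz
  have h2 := hsq N u hu 0 hz
  rw [h0, sub_zero, sub_zero] at h1 h2
  have h3 := hTm (S u) (h1.trans (mul_le_mul_of_nonneg_left hun hL.le))
  have h4 := htc h3
  rw [Set.mem_iUnion₂] at h4 ⊢
  obtain ⟨y, hy, hy'⟩ := h4
  refine ⟨y, hy, ?_⟩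
  rw [Metric.mem_ball] at hy' ⊢
  have h5 : dist (S u) (projB e N (S u)) ≤ γ N * R := by
    rw [dist_eq_norm]
    exact h2.trans (mul_le_mul_of_nonneg_left hun (hγ0 N).le)
  linarith [dist_triangle (S u) (projB e N (S u)) y]

lemma dom_compact {S : H → H} {e : HilbertBasis ℕ ℝ H} {K : Set H} (hA : CondA S)
    (hB : CondB S K) (hC : CondC S e) (hKc : IsCompact K) (hK0 : (0 : H) ∈ K) :
    IsCompact (attainDom S K ({0} : Set H)) := by
  have h0 := S_zero hA
  obtain ⟨ρ, hρ, hb⟩ := attain_bdd h0 hK0 hB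
  have hT : IsCompact (closure (S '' Metric.closedBall 0 ρ)) :=
    (S_tb hA hC hρ).closure.isCompact_of_isClosed isClosed_closure
  have hc : IsCompact ({0} ∪ (closure (S '' Metric.closedBall 0 ρ) + K)) :=
    isCompact_singleton.union (hT.add hKc)
  refine hc.of_isClosed_subset isClosed_closure (closure_minimal ?_ hc.isClosed)
  refine Set.iUnion_subset fun n => ?_
  cases n with
  | zero => exact Set.subset_union_left
  | succ n =>
    refine Set.subset_union_of_subset_right (Set.add_subset_add_right ?_) _
    exact (Set.image_mono ((Set.subset_iUnion _ n).trans hb)).trans subset_closure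

lemma dom_inv {S : H → H} {K : Set H} (hS : Continuous S) {u z : H}
    (hu : u ∈ attainDom S K ({0} : Set H)) (hz : z ∈ K) :
    S u + z ∈ attainDom S K ({0} : Set H) := by
  refine map_mem_closure (f := fun u => S u + z) (by fun_prop) hu ?_
  intro v hv
  obtain ⟨n, hn⟩ := Set.mem_iUnion.1 hv
  exact Set.mem_iUnion.2 ⟨n + 1, ⟨S v, ⟨v, hn, rfl⟩, z, hz, rfl⟩⟩

lemma dom_zero {S : H → H} {K : Set H} : (0 : H) ∈ attainDom S K ({0} : Set H) :=
  subset_closure (Set.mem_iUnion.2 ⟨0, rfl⟩)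

lemma attM_dom {S : H → H} {K : Set H} (hS : Continuous S) {m : ℕ} {w : Fin (m + 1) → H}
    (hw : w ∈ attainM S K (attainDom S K ({0} : Set H)) (m + 1)) (i : ℕ) (hi : i < m + 1) :
    w ⟨i, hi⟩ ∈ attainDom S K ({0} : Set H) := by
  induction i with
  | zero => exact hw.1 hi
  | succ i ih =>
    obtain ⟨z, hz, h⟩ := hw.2 i hi
    rw [h]
    exact dom_inv hS (ih _) hz

lemma attM_compact {S : H → H} {K : Set H} (hS : Continuous S) (m : ℕ) (hKc : IsCompact K)
    (hAc : IsCompact (attainDom S K ({0} : Set H))) :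
    IsCompact (attainM S K (attainDom S K ({0} : Set H)) (m + 1)) := by
  have h1 : IsCompact (Set.univ.pi fun _ : Fin (m + 1) => attainDom S K ({0} : Set H)) :=
    isCompact_univ_pi fun _ => hAc
  refine h1.of_isClosed_subset ?_ ?_
  · have : attainM S K (attainDom S K ({0} : Set H)) (m + 1) =
        {v | v ⟨0, m.succ_pos⟩ ∈ attainDom S K ({0} : Set H)} ∩
        ⋂ (i : ℕ) (h : i + 1 < m + 1), {v : Fin (m + 1) → H |
          v ⟨i + 1, h⟩ - S (v ⟨i, Nat.lt_of_succ_lt h⟩) ∈ K} := by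
      ext v
      simp only [attainM, Set.mem_ofPred_eq, Set.mem_inter_iff, Set.mem_iInter]
      refine and_congr ⟨fun h => h _, fun h _ => h⟩ ?_
      refine forall_congr' fun i => forall_congr' fun hi => ?_
      constructor
      · rintro ⟨z, hz, h⟩
        rw [h]; simpa using hz
      · intro h
        exact ⟨_, h, by abel⟩
    rw [this]
    refine IsClosed.inter ?_ ?_
    · exact isClosed_closure.preimage (continuous_apply _)
    · refine isClosed_iInter fun i => isClosed_iInter fun h => ?_
      exact hKc.isClosed.preimage (by fun_prop)
  · intro w hw i _
    exact attM_dom hS hw i i.2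

/-- one-step map on segments -/
def nxt (S : H → H) (m : ℕ) (w : Fin (m + 1) → H) (h : H) : Fin (m + 1) → H :=
  fun i => if hi : (i : ℕ) + 1 < m + 1 then w ⟨i + 1, hi⟩ else S (w (Fin.last m)) + h

lemma nxt_cont {S : H → H} (hS : Continuous S) (m : ℕ) :
    Continuous (Function.uncurry (nxt S m)) := by
  refine continuous_pi fun i => ?_
  by_cases hi : (i : ℕ) + 1 < m + 1
  · simp only [Function.uncurry, nxt, dif_pos hi]; fun_prop
  · simp only [Function.uncurry, nxt, dif_neg hi]; fun_prop

lemma nxt_castSucc (S : H → H) (m : ℕ) (w : Fin (m + 1) → H) (h : H) (i : Fin m) :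
    nxt S m w h i.castSucc = w i.succ := by
  have : ((i.castSucc : Fin (m + 1)) : ℕ) + 1 < m + 1 := by simp
  rw [nxt, dif_pos this]; rfl

lemma nxt_last (S : H → H) (m : ℕ) (w : Fin (m + 1) → H) (h : H) :
    nxt S m w h (Fin.last m) = S (w (Fin.last m)) + h := by
  rw [nxt, dif_neg (by simp)]

lemma nxt_seq (S : H → H) (m : ℕ) (t : ℕ → H) (n : ℕ) (h : H)
    (ht : t (n + 1 + m) = S (t (n + m)) + h) :
    (fun i : Fin (m + 1) => t (n + 1 + i)) = nxt S m (fun i : Fin (m + 1) => t (n + i)) h := by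
  funext i
  induction i using Fin.lastCases with
  | last => rw [nxt_last]; simpa using ht
  | cast i => 
    rw [nxt_castSucc]
    simp only [Fin.val_castSucc, Fin.val_succ]
    congr 1; omega

lemma nxt_inv {S : H → H} {K : Set H} (hS : Continuous S) (m : ℕ) {w : Fin (m + 1) → H}
    (hw : w ∈ attainM S K (attainDom S K ({0} : Set H)) (m + 1)) {h : H} (hh : h ∈ K) :
    nxt S m w h ∈ attainM S K (attainDom S K ({0} : Set H)) (m + 1) := by
  constructor
  · intro h0
    rw [nxt]
    split_ifs with hi
    · exact attM_dom hS hw _ _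
    · exact dom_inv hS (attM_dom hS hw m (by omega)) hh
  · intro i hi
    have h1 : nxt S m w h ⟨i, Nat.lt_of_succ_lt hi⟩ = w ⟨i + 1, hi⟩ := by
      rw [nxt, dif_pos hi]
    rw [h1]
    by_cases h2 : i + 1 + 1 < m + 1
    · obtain ⟨z, hz, h3⟩ := hw.2 (i + 1) h2
      refine ⟨z, hz, ?_⟩
      rw [← h3, nxt, dif_pos h2]
    · refine ⟨h, hh, ?_⟩
      rw [nxt, dif_neg h2]
      have : Fin.last m = ⟨i + 1, hi⟩ := by
        ext; simp; omega
      rw [this]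

/-- controlled path -/
def ctr (S : H → H) (c : ℕ → H) (u : H) : ℕ → H
  | 0 => u
  | n + 1 => S (ctr S c u n) + c n

/-- concatenation of controls -/
def cat (k : ℕ) (c d : ℕ → H) : ℕ → H := fun j => if j < k then c j else d (j - k)

lemma cat_mem {K : Set H} {k : ℕ} {c d : ℕ → H} (hc : ∀ j, c j ∈ K) (hd : ∀ j, d j ∈ K) (j : ℕ) :
    cat k c d j ∈ K := by
  unfold cat; split_ifs
  · exact hc _
  · exact hd _

lemma ctr_cat_lt (S : H → H) (k : ℕ) (c d : ℕ → H) (u : H) (i : ℕ) (hi : i ≤ k) :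
    ctr S (cat k c d) u i = ctr S c u i := by
  induction i with
  | zero => rfl
  | succ i ih =>
    rw [ctr, ctr, ih (by omega), cat, if_pos (by omega)]

lemma ctr_cat (S : H → H) (k : ℕ) (c d : ℕ → H) (u : H) (i : ℕ) :
    ctr S (cat k c d) u (k + i) = ctr S d (ctr S c u k) i := by
  induction i with
  | zero => exact ctr_cat_lt S k c d u k le_rfl
  | succ i ih =>
    rw [← add_assoc, ctr, ctr, ih, cat, if_neg (by omega)]
    congr 2; omega

lemma ctr_zero (S : H → H) (u : H) (n : ℕ) : ctr S (fun _ => 0) u n = S^[n] u := by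
  induction n with
  | zero => rfl
  | succ n ih => rw [ctr, ih, Function.iterate_succ_apply', add_zero]

lemma ctr_cont {S : H → H} (hS : Continuous S) (c : ℕ → H) (n : ℕ) :
    Continuous fun u => ctr S c u n := by
  induction n with
  | zero => exact continuous_id
  | succ n ih => exact (hS.comp ih).add continuous_const

lemma attain_ctr {S : H → H} {K : Set H} (hK0 : (0 : H) ∈ K) (k : ℕ) (v : H)
    (hv : v ∈ attain S K ({0} : Set H) k) :
    ∃ c : ℕ → H, (∀ j, c j ∈ K) ∧ ctr S c 0 k = v := by
  induction k generalizing v with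
  | zero => exact ⟨fun _ => 0, fun _ => hK0, hv.symm⟩
  | succ k ih =>
    obtain ⟨_, ⟨v', hv', rfl⟩, z, hz, rfl⟩ := hv
    obtain ⟨c, hc, rfl⟩ := ih v' hv'
    refine ⟨cat k c fun _ => z, cat_mem hc fun _ => hz, ?_⟩
    rw [ctr_cat]; rfl

end det

/-- controlled reachability -/
def Reach {W G : Type} (nx : W → G → W) (K : Set G) : ℕ → W → Set W
  | 0, w => {w}
  | n + 1, w => {y | ∃ h ∈ K, y ∈ Reach nx K n (nx w h)}

lemma reach_seq {W G : Type} (nx : W → G → W) (K : Set G) (X : ℕ → W) (c : ℕ → G) (hc : ∀ n, c n ∈ K)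
    (hX : ∀ n, X (n + 1) = nx (X n) (c n)) (n j : ℕ) : X (j + n) ∈ Reach nx K n (X j) := by
  induction n generalizing j with
  | zero => rfl
  | succ n ih =>
    refine ⟨c j, hc j, ?_⟩
    rw [← hX]
    have := ih (j + 1)
    rwa [add_assoc, add_comm 1 n] at this

section irr

variable {W G : Type} [TopologicalSpace W] [TopologicalSpace G] [MeasurableSpace G]
  [OpensMeasurableSpace G]

lemma reach_prob (l : Measure G) [IsProbabilityMeasure l] (nx : W → G → W) {K : Set G} {A : Set W}
    (hl : ∀ᵐ g ∂l, g ∈ K) (hKs : K = msupp l) (hA : ∀ w ∈ A, ∀ g ∈ K, nx w g ∈ A)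
    (hnx : Continuous (Function.uncurry nx)) {O : Set W} (hO : IsOpen O) (τ : ℕ) (w y : W)
    (hy : y ∈ Reach nx K τ w) (hyO : y ∈ O) :
    ∃ U ∈ 𝓝 w, ∃ p : ℝ, 0 < p ∧ ∀ x ∈ U, x ∈ A → ∀ (f : W → ℝ≥0∞) (c : ℝ≥0∞),
      (∀ y ∈ A, y ∈ O → c ≤ f y) → ENNReal.ofReal p * c ≤ ((TT l nx)^[τ] f) x := by
  induction τ generalizing w with
  | zero =>
    have : y = w := hy
    subst this
    refine ⟨O, hO.mem_nhds hyO, 1, one_pos, fun x hx hxA f c h => ?_⟩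
    simpa using h x hxA hx
  | succ τ ih =>
    obtain ⟨h, hh, hy'⟩ := hy
    obtain ⟨U', hU', p', hp', hprob⟩ := ih (nx w h) hy'
    have hcont : Tendsto (Function.uncurry nx) (𝓝 (w, h)) (𝓝 (nx w h)) := hnx.tendsto (w, h)
    have h1 := hcont hU'
    rw [mem_map, nhds_prod_eq, mem_prod_iff] at h1
    obtain ⟨U, hU, N, hN, hUN⟩ := h1
    obtain ⟨N', hN'N, hN'o, hhN'⟩ := mem_nhds_iff.1 hN
    have hlN : 0 < l N' := by
      rw [hKs] at hh
      exact hh N' (hN'o.mem_nhds hhN')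
    refine ⟨U, hU, p' * (l N').toReal, mul_pos hp' (ENNReal.toReal_pos hlN.ne' (measure_ne_top _ _)),
      fun x hx hxA f c hc => ?_⟩
    rw [Function.iterate_succ_apply', ENNReal.ofReal_mul hp'.le,
      ENNReal.ofReal_toReal (measure_ne_top _ _)]
    calc ENNReal.ofReal p' * l N' * c = ENNReal.ofReal p' * c * l N' := by ring
      _ = ∫⁻ g, N'.indicator (fun _ => ENNReal.ofReal p' * c) g ∂l := by
        rw [lintegral_indicator_const hN'o.measurableSet]
      _ ≤ _ := by
        refine lintegral_mono_ae ?_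
        filter_upwards [hl] with g hg
        by_cases hgN : g ∈ N'
        · rw [Set.indicator_of_mem hgN]
          exact hprob _ (hUN (Set.mk_mem_prod hx (hN'N hgN))) (hA x hxA g hg) f c hc
        · rw [Set.indicator_of_notMem hgN]; exact zero_le

lemma unif_pos {ι : Type} (t : Finset ι) (p : ι → ℝ) (hp : ∀ i ∈ t, 0 < p i) :
    ∃ q : ℝ, 0 < q ∧ ∀ i ∈ t, q ≤ p i := by
  classical
  induction t using Finset.induction_on with
  | empty => exact ⟨1, one_pos, by simp⟩
  | insert a s ha ih =>
    obtain ⟨q, hq, h⟩ := ih fun i hi => hp i (Finset.mem_insert_of_mem hi)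
    refine ⟨min q (p a), lt_min hq (hp a (Finset.mem_insert_self _ _)), fun i hi => ?_⟩
    rcases Finset.mem_insert.1 hi with rfl | hi
    · exact min_le_right _ _
    · exact (min_le_left _ _).trans (h i hi)

lemma irr_abs (l : Measure G) [IsProbabilityMeasure l] (nx : W → G → W) {K : Set G} {A : Set W}
    (hl : ∀ᵐ g ∂l, g ∈ K) (hKs : K = msupp l) (hA : ∀ w ∈ A, ∀ g ∈ K, nx w g ∈ A)
    (hnx : Continuous (Function.uncurry nx)) (hAc : IsCompact A) (D : W → W → ℝ)
    (hDc : ∀ w, Continuous (D w)) (hD0 : ∀ w, D w w = 0) (hDs : ∀ w w', D w w' = D w' w)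
    (hDt : ∀ w w' w'', D w w'' ≤ D w w' + D w' w'')
    (hr : ∀ w' ∈ A, ∀ O ∈ 𝓝 w', ∃ τ₀ : ℕ, ∀ τ, τ₀ ≤ τ → ∀ w ∈ A, ∃ y ∈ Reach nx K τ w, y ∈ O)
    (δ : ℝ) (hδ : 0 < δ) :
    ∃ τ : ℕ, ∃ p : ℝ, 0 < p ∧ ∀ w ∈ A, ∀ w' ∈ A, ∀ f : W → ℝ≥0∞,
      ∀ c : ℝ≥0∞, (∀ x ∈ A, D w' x < δ → c ≤ f x) → ENNReal.ofReal p * c ≤ ((TT l nx)^[τ] f) w := by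
  have hopen : ∀ v, IsOpen {x | D v x < δ / 2} := fun v => isOpen_lt (hDc v) continuous_const
  have hself : ∀ v, v ∈ {x | D v x < δ / 2} := fun v => by
    rw [Set.mem_ofPred_eq, hD0]; linarith
  obtain ⟨t, htA, ht⟩ := hAc.elim_nhds_subcover (fun v => {x | D v x < δ / 2})
    (fun v _ => (hopen v).mem_nhds (hself v))
  choose! τ₀ hτ₀ using fun v (hv : v ∈ A) => hr v hv _ ((hopen v).mem_nhds (hself v))
  set τ := t.sup τ₀ with hτ
  have hp : ∀ v ∈ t, ∃ p : ℝ, 0 < p ∧ ∀ w ∈ A, ∀ (f : W → ℝ≥0∞) (c : ℝ≥0∞),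
      (∀ y ∈ A, y ∈ {x | D v x < δ / 2} → c ≤ f y) →
      ENNReal.ofReal p * c ≤ ((TT l nx)^[τ] f) w := by
    intro v hv
    have h1 : ∀ w ∈ A, ∃ U ∈ 𝓝 w, ∃ p : ℝ, 0 < p ∧ ∀ x ∈ U, x ∈ A →
        ∀ (f : W → ℝ≥0∞) (c : ℝ≥0∞), (∀ y ∈ A, y ∈ {x | D v x < δ / 2} → c ≤ f y) →
        ENNReal.ofReal p * c ≤ ((TT l nx)^[τ] f) x := by
      intro w hw
      obtain ⟨y, hy, hyO⟩ := hτ₀ v (htA v hv) τ (Finset.le_sup hv) w hw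
      exact reach_prob l nx hl hKs hA hnx (hopen v) τ w y hy hyO
    choose! U hU p hp hpr using h1
    obtain ⟨s, hsA, hs⟩ := hAc.elim_nhds_subcover U hU
    obtain ⟨q, hq, hqp⟩ := unif_pos s p fun i hi => hp i (hsA i hi)
    refine ⟨q, hq, fun w hw f c hc => ?_⟩
    obtain ⟨i, hi, hwi⟩ := Set.mem_iUnion₂.1 (hs hw)
    refine le_trans ?_ (hpr i (hsA i hi) w hwi hw f c hc)
    gcongr
    exact hqp i hi
  choose! p hp0 hpp using hp
  obtain ⟨q, hq, hqp⟩ := unif_pos t p hp0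
  refine ⟨τ, q, hq, fun w hw w' hw' f c hc => ?_⟩
  obtain ⟨v, hv, hvw⟩ := Set.mem_iUnion₂.1 (ht hw')
  refine le_trans ?_ (hpp v hv w hw f c fun y hy hyv => hc y hy ?_)
  · gcongr
    exact hqp v hv
  · have h1 : D v w' < δ / 2 := hvw
    have h2 : D v y < δ / 2 := hyv
    have := hDt w' v y
    rw [hDs w' v] at this
    linarith

end irr

lemma reach_ctr (S : H → H) (m : ℕ) {K : Set H} (c : ℕ → H) (hc : ∀ j, c j ∈ K)
    (w : Fin (m + 1) → H) (n : ℕ) :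
    (fun i : Fin (m + 1) => ctr S c (w (Fin.last m)) (n + i)) ∈ Reach (nxt S m) K (n + m) w := by
  set t : ℕ → H := fun j => if hj : j < m then w ⟨j, by omega⟩ else ctr S c (w (Fin.last m)) (j - m)
    with ht
  have ht1 : ∀ n, t (n + m) = ctr S c (w (Fin.last m)) n := by
    intro n
    simp only [ht]
    rw [dif_neg (by omega)]
    congr 1; omega
  have hX := reach_seq (nxt S m) K (fun n (i : Fin (m + 1)) => t (n + i)) c hc
    (fun n => nxt_seq S m t n (c n) (by rw [ht1, ht1]; rfl)) (n + m) 0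
  have h0 : (fun i : Fin (m + 1) => t (0 + i)) = w := by
    funext i
    simp only [ht, zero_add]
    split_ifs with hi
    · rfl
    · have : (i : ℕ) = m := by omega
      have h2 : i = Fin.last m := Fin.ext this
      rw [this, Nat.sub_self, h2]; rfl
  have h1 : (fun i : Fin (m + 1) => t (0 + (n + m) + i)) =
      fun i : Fin (m + 1) => ctr S c (w (Fin.last m)) (n + i) := by
    funext i
    rw [← ht1]
    congr 1; omega
  simp only [h0] at hX
  rwa [h1] at hX

lemma reach_conc {S : H → H} {K : Set H} (hA : CondA S) (hB : CondB S K)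
    (hK0 : (0 : H) ∈ K) (m : ℕ) (w' : Fin (m + 1) → H)
    (hw' : w' ∈ attainM S K (attainDom S K ({0} : Set H)) (m + 1)) (O' : Set (Fin (m + 1) → H))
    (hO' : O' ∈ 𝓝 w') : ∃ τ₀ : ℕ, ∀ τ, τ₀ ≤ τ →
      ∀ w ∈ attainM S K (attainDom S K ({0} : Set H)) (m + 1),
      ∃ y ∈ Reach (nxt S m) K τ w, y ∈ O' := by
  obtain ⟨O, hOO', hOo, hwO⟩ := mem_nhds_iff.1 hO'
  have hO : O ∈ 𝓝 w' := hOo.mem_nhds hwO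
  have hS := hA.1.continuous
  have h0 := S_zero hA
  obtain ⟨ρ, hρ, hb⟩ := attain_bdd h0 hK0 hB
  have hdom : attainDom S K ({0} : Set H) ⊆ Metric.closedBall 0 ρ :=
    closure_minimal hb Metric.isClosed_closedBall
  -- controls realising `w'`
  obtain ⟨z, hz, hzw⟩ : ∃ z : ℕ → H, (∀ j, z j ∈ K) ∧
      ∀ i, ∀ hi : i < m + 1, ctr S z (w' 0) i = w' ⟨i, hi⟩ := by
    have h1 : ∀ i, ∃ z ∈ K, ∀ h : i + 1 < m + 1,
        w' ⟨i + 1, h⟩ = S (w' ⟨i, Nat.lt_of_succ_lt h⟩) + z := by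
      intro i
      by_cases h : i + 1 < m + 1
      · obtain ⟨z, hz, hh⟩ := hw'.2 i h
        exact ⟨z, hz, fun _ => hh⟩
      · exact ⟨0, hK0, fun h' => absurd h' h⟩
    choose z hz hzz using h1
    refine ⟨z, hz, fun i => ?_⟩
    induction i with
    | zero => intro hi; rfl
    | succ i ih =>
      intro hi
      rw [ctr, ih (by omega), hzz i hi]
  have hΦ : Continuous (fun v : H => fun i : Fin (m + 1) => ctr S z v i) :=
    continuous_pi fun i => ctr_cont hS z i
  have hΦ0 : (fun i : Fin (m + 1) => ctr S z (w' 0) i) = w' := by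
    funext i; exact hzw i i.2
  have hpre : (fun v : H => fun i : Fin (m + 1) => ctr S z v i) ⁻¹' O ∈ 𝓝 (w' 0) := by
    apply hΦ.continuousAt
    simp only [hΦ0]
    exact hO
  have hw0 : w' 0 ∈ attainDom S K ({0} : Set H) := hw'.1 (Nat.succ_pos m)
  obtain ⟨v, hvO, hv⟩ := mem_closure_iff_nhds.1 hw0 _ hpre
  obtain ⟨k, hk⟩ := Set.mem_iUnion.1 hv
  obtain ⟨c, hc, hcv⟩ := attain_ctr hK0 k v hk
  -- full control
  set d := cat k c z with hd
  have hdK : ∀ j, d j ∈ K := cat_mem hc hz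
  have hΨ : Continuous (fun s : H => fun i : Fin (m + 1) => ctr S d s (k + i)) :=
    continuous_pi fun i => ctr_cont hS d _
  have hΨ0 : (fun i : Fin (m + 1) => ctr S d 0 (k + i)) = fun i : Fin (m + 1) => ctr S z v i := by
    funext i; rw [hd, ctr_cat, hcv]
  have hpre2 : (fun s : H => fun i : Fin (m + 1) => ctr S d s (k + i)) ⁻¹' O ∈ 𝓝 (0 : H) := by
    apply hΨ.continuousAt
    simp only [hΨ0]
    exact hOo.mem_nhds hvO
  obtain ⟨r, hr, hrO⟩ := Metric.mem_nhds_iff.1 hpre2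
  obtain ⟨n₀, hn₀⟩ := S_decay hA (R := ρ) (r := min (r / 2) (ρ / 2))
    (lt_min (by linarith) (by linarith)) ((min_le_right _ _).trans_lt (by linarith))
  refine ⟨n₀ + k + m, fun τ hτ w hw => ?_⟩
  obtain ⟨n, rfl⟩ : ∃ n, τ = n + k + m := ⟨τ - k - m, by omega⟩
  refine ⟨_, reach_ctr S m (cat n (fun _ => 0) d) (cat_mem (fun _ => hK0) hdK) w (n + k), hOO' ?_⟩
  have hu := attM_dom hS hw m (by omega)
  have h1 := hn₀ n (by omega) _ (hdom hu)
  have h2 : S^[n] (w (Fin.last m)) ∈ Metric.ball (0 : H) r := by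
    rw [mem_ball_zero_iff]
    have := h1.trans (min_le_left _ _)
    change ‖S^[n] (w (Fin.last m))‖ ≤ r / 2 at this
    linarith
  have h3 := hrO h2
  have h4 : (fun i : Fin (m + 1) => ctr S (cat n (fun _ => 0) d) (w (Fin.last m)) (n + k + i)) =
      fun i : Fin (m + 1) => ctr S d (S^[n] (w (Fin.last m))) (k + i) := by
    funext i
    rw [add_assoc, ctr_cat, ctr_zero]
  rw [h4]
  exact h3

section fin

/-- weighted distance on segments -/
def DD (lam : ℝ) (m : ℕ) (w w' : Fin (m + 1) → H) : ℝ :=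
  ∑ i : Fin (m + 1), lam ^ (i : ℕ) * ‖w i - w' i‖

lemma DD_nonneg {lam : ℝ} (hl : 1 ≤ lam) (m : ℕ) (w w' : Fin (m + 1) → H) : 0 ≤ DD lam m w w' :=
  Finset.sum_nonneg fun i _ => by positivity

lemma DD_ge {lam : ℝ} (hl : 1 ≤ lam) (m : ℕ) (w w' : Fin (m + 1) → H) (i : Fin (m + 1)) :
    lam ^ (i : ℕ) * ‖w i - w' i‖ ≤ DD lam m w w' :=
  Finset.single_le_sum (f := fun i : Fin (m + 1) => lam ^ (i : ℕ) * ‖w i - w' i‖)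
    (fun i _ => by positivity) (Finset.mem_univ i)

lemma DD_ge' {lam : ℝ} (hl : 1 ≤ lam) (m : ℕ) (w w' : Fin (m + 1) → H) (i : Fin (m + 1)) :
    ‖w i - w' i‖ ≤ DD lam m w w' := by
  refine le_trans ?_ (DD_ge hl m w w' i)
  exact le_mul_of_one_le_left (norm_nonneg _) (one_le_pow₀ hl)

lemma DD_dist {lam : ℝ} (hl : 1 ≤ lam) (m : ℕ) (w w' : Fin (m + 1) → H) :
    dist w w' ≤ DD lam m w w' := by
  rw [dist_pi_le_iff (DD_nonneg hl m w w')]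
  intro i
  rw [dist_eq_norm]; exact DD_ge' hl m w w' i

lemma DD_contr {lam : ℝ} (hl : 1 ≤ lam) {S : H → H} (m : ℕ) (w w' : Fin (m + 1) → H) (g g' : H)
    {γ : ℝ} (hγ : 0 ≤ γ)
    (h : ‖S (w (Fin.last m)) + g - (S (w' (Fin.last m)) + g')‖ ≤
      γ * ‖w (Fin.last m) - w' (Fin.last m)‖) :
    DD lam m (nxt S m w g) (nxt S m w' g') ≤ (lam⁻¹ + γ) * DD lam m w w' := by
  have hl0 : 0 < lam := by linarith
  rw [DD, Fin.sum_univ_castSucc, add_mul]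
  simp only [nxt_castSucc, nxt_last]
  refine add_le_add ?_ ?_
  · rw [DD, Fin.sum_univ_succ, mul_add, Finset.mul_sum]
    refine le_add_of_nonneg_of_le (by positivity) (Finset.sum_le_sum fun i _ => le_of_eq ?_)
    simp only [Fin.val_castSucc, Fin.val_succ]
    rw [pow_succ', ← mul_assoc, ← mul_assoc, inv_mul_cancel₀ hl0.ne', one_mul]
  · have h1 := DD_ge hl m w w' (Fin.last m)
    calc lam ^ ((Fin.last m : Fin (m + 1)) : ℕ) *
          ‖S (w (Fin.last m)) + g - (S (w' (Fin.last m)) + g')‖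
        ≤ lam ^ ((Fin.last m : Fin (m + 1)) : ℕ) * (γ * ‖w (Fin.last m) - w' (Fin.last m)‖) :=
          mul_le_mul_of_nonneg_left h (by positivity)
      _ = γ * (lam ^ ((Fin.last m : Fin (m + 1)) : ℕ) * ‖w (Fin.last m) - w' (Fin.last m)‖) := by
          ring
      _ ≤ _ := mul_le_mul_of_nonneg_left h1 hγ

variable [SecondCountableTopology H] [MeasurableSpace H] [BorelSpace H]
variable {Ω : Type} [MeasurableSpace Ω] {P : Measure Ω} [IsProbabilityMeasure P]
  {e : HilbertBasis ℕ ℝ H} {η : ℕ → Ω → H} {b : ℕ → ℝ} {ξ : ℕ → ℕ → Ω → ℝ} {p : ℕ → ℝ → ℝ}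

lemma traj_A (hD : CondD P e η b ξ p) (hη : ∀ k, Measurable (η k)) {S : H → H}
    (hS : Continuous S) {K : Set H} (hK : K = msupp (Measure.map (η 1) P))
    {u₀ : Ω → H} (hu₀ : Measurable u₀)
    (hsupp : Measure.map u₀ P (attainDom S K {0}) = 1) (m : ℕ) :
    ∀ᵐ ω ∂P, ∀ n, (fun i : Fin (m + 1) => traj S η u₀ (n + i) ω) ∈
      attainM S K (attainDom S K ({0} : Set H)) (m + 1) := by
  have h1 : ∀ᵐ ω ∂P, ∀ k, η k ω ∈ K := by
    refine ae_all_iff.2 fun k => ?_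
    have : ∀ᵐ u ∂(Measure.map (η k) P), u ∈ K := by
      rw [eta_law hD hη k, hK]; exact msupp_ae _
    exact ae_of_ae_map (hη k).aemeasurable this
  have h2 : ∀ᵐ ω ∂P, u₀ ω ∈ attainDom S K ({0} : Set H) := by
    have hp := Measure.isProbabilityMeasure_map (μ := P) hu₀.aemeasurable
    have : ∀ᵐ u ∂(Measure.map u₀ P), u ∈ attainDom S K ({0} : Set H) := by
      have hc : IsClosed (attainDom S K ({0} : Set H)) := isClosed_closure
      exact (mem_ae_iff_prob_eq_one₀ hc.measurableSet.nullMeasurableSet).2 hsupp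
    exact ae_of_ae_map hu₀.aemeasurable this
  filter_upwards [h1, h2] with ω h1 h2 n
  have h3 : ∀ k, traj S η u₀ k ω ∈ attainDom S K ({0} : Set H) := by
    intro k
    induction k with
    | zero => exact h2
    | succ k ih => exact dom_inv hS ih (h1 (k + 1))
  exact ⟨fun _ => h3 _, fun i hi => ⟨η (n + i + 1) ω, h1 _, rfl⟩⟩

lemma supAdd_conc {S : H → H} (hη : ∀ k, Measurable (η k)) {K : Set H}
    (hK : K = msupp (Measure.map (η 1) P)) (hKc : IsCompact K)
    (hA : CondA S) (hB : CondB S K) (hC : CondC S e) (hD : CondD P e η b ξ p)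
    (hb : ∀ j, b j ≠ 0) {u₀ : Ω → H} (hu₀ : Measurable u₀)
    (hindep : IndepFun u₀ (fun ω (k : ℕ) => η k ω) P)
    (hsupp : Measure.map u₀ P (attainDom S K {0}) = 1) (m : ℕ) :
    SupAdd P (fun n ω => fun i : Fin (m + 1) => traj S η u₀ (n + i) ω) := by
  intro E _ _ _ _ _ V ε hε
  have hS := hA.1.continuous
  have h0 := S_zero hA
  have hK0 : (0 : H) ∈ K := hK ▸ zero_msupp hD hη
  obtain ⟨ρ, hρ, hbd⟩ := attain_bdd h0 hK0 hB
  have hdom : attainDom S K ({0} : Set H) ⊆ Metric.closedBall 0 ρ :=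
    closure_minimal hbd Metric.isClosed_closedBall
  have hAc := attM_compact hS m hKc (dom_compact hA hB hC hKc hK0)
  set A := attainM S K (attainDom S K ({0} : Set H)) (m + 1) with hAdef
  have hlast : ∀ w ∈ A, w (Fin.last m) ∈ Metric.closedBall (0 : H) ρ := fun w hw =>
    hdom (attM_dom hS hw m (by omega))
  set l := Measure.map (η 1) P with hl
  have hlp : IsProbabilityMeasure l := Measure.isProbabilityMeasure_map (hη 1).aemeasurable
  have hlK : ∀ᵐ g ∂l, g ∈ K := by rw [hK]; exact msupp_ae l
  have hinv : ∀ w ∈ A, ∀ g ∈ K, nxt S m w g ∈ A := fun w hw g hg => nxt_inv hS m hw hg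
  have hnxc := nxt_cont hS m
  have hB' : ∀ w, ‖V w‖ ≤ ‖V‖ := V.norm_coe_le_norm
  have hVm : Measurable V := V.continuous.measurable
  -- constants
  set q : ℝ := Real.exp (-(2 * ‖V‖)) / 2 with hq
  have hq0 : 0 < q := by positivity
  have hq1 : q ≤ 1 / 2 := by
    have : Real.exp (-(2 * ‖V‖)) ≤ 1 := Real.exp_le_one_iff.2 (by linarith [norm_nonneg V])
    rw [hq]; linarith
  have hq2 : q * Real.exp (2 * ‖V‖) ≤ 1 / 2 := by
    rw [hq, div_mul_eq_mul_div, ← Real.exp_add]; simp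
  set lam : ℝ := 2 / q with hlam
  have hlam1 : 1 ≤ lam := by
    rw [hlam, le_div_iff₀ hq0]; linarith
  obtain ⟨γ, hγ0, _, hγ, hsq⟩ := hC ρ hρ
  obtain ⟨L, hL, _, _, _, _, _, hLip, _⟩ := hA.2 ρ (ρ / 2) (by linarith) (by linarith)
  obtain ⟨N, hN⟩ := (hγ.eventually (gt_mem_nhds (half_pos hq0))).exists
  have hcon : lam⁻¹ + γ N ≤ q := by
    rw [hlam, inv_div]; linarith
  obtain ⟨C, hC0, hshift⟩ := shift_all hD hη hb N
  -- modulus of continuity of V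
  obtain ⟨δ, hδ, hVδ⟩ : ∃ δ > 0, ∀ w ∈ A, ∀ w' ∈ A, dist w w' < δ → ‖V w - V w'‖ < ε := by
    have huc := hAc.uniformContinuousOn_of_continuous V.continuous.continuousOn
    obtain ⟨δ, hδ, h⟩ := Metric.uniformContinuousOn_iff.1 huc ε hε
    refine ⟨δ, hδ, fun w hw w' hw' hd => ?_⟩
    rw [← dist_eq_norm]; exact h w hw w' hw' hd
  have hV : ∀ w ∈ A, ∀ w' ∈ A, ‖V w - V w'‖ ≤ ε + (2 * ‖V‖ / δ) * DD lam m w w' := by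
    intro w hw w' hw'
    have hdd := DD_dist hlam1 m w w'
    have hnn := DD_nonneg hlam1 m w w'
    by_cases hd : dist w w' < δ
    · have := (hVδ w hw w' hw' hd).le
      have h2 : 0 ≤ (2 * ‖V‖ / δ) * DD lam m w w' := by positivity
      linarith
    · have h1 : ‖V w - V w'‖ ≤ 2 * ‖V‖ := by
        have := norm_sub_le (V w) (V w')
        linarith [hB' w, hB' w']
      have h2 : 2 * ‖V‖ ≤ (2 * ‖V‖ / δ) * DD lam m w w' := by
        rw [div_mul_eq_mul_div, le_div_iff₀ hδ]
        exact mul_le_mul_of_nonneg_left ((not_lt.1 hd).trans hdd) (by positivity)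
      linarith
  have hcoup : ∀ w ∈ A, ∀ w' ∈ A, ∃ h : H,
      (∀ g ∈ K, g + h ∈ K → DD lam m (nxt S m w (g + h)) (nxt S m w' g) ≤ q * DD lam m w w') ∧
      ∀ f : H → ℝ≥0∞, Measurable f → ∀ M : ℝ≥0∞, (∀ g, f g ≤ M) →
        ∫⁻ g, f g ∂l ≤ ∫⁻ g, f (g + h) ∂l + ENNReal.ofReal (C * L * DD lam m w w') * M := by
    intro w hw w' hw'
    refine ⟨projB e N (S (w' (Fin.last m)) - S (w (Fin.last m))), fun g _ _ => ?_,
      fun f hf M hM => ?_⟩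
    · refine (DD_contr hlam1 m w w' _ _ (hγ0 N).le ?_).trans
        (mul_le_mul_of_nonneg_right hcon (DD_nonneg hlam1 m w w'))
      have := hsq N _ (hlast w' hw') _ (hlast w hw)
      rw [norm_sub_rev (w' _)] at this
      refine le_trans (le_of_eq ?_) this
      rw [← norm_neg]
      congr 1; abel
    · refine (hshift (S (w' (Fin.last m)) - S (w (Fin.last m))) f hf M hM).trans ?_
      refine add_le_add le_rfl (mul_le_mul' (ENNReal.ofReal_le_ofReal ?_) le_rfl)
      rw [mul_assoc]
      refine mul_le_mul_of_nonneg_left ?_ hC0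
      refine (hLip _ (hlast w' hw') _ (hlast w hw)).trans (mul_le_mul_of_nonneg_left ?_ hL.le)
      rw [norm_sub_rev]
      exact DD_ge' hlam1 m w w' _
  have hirr := irr_abs l (nxt S m) hlK hK hinv hnxc hAc (DD lam m)
    (fun w => by unfold DD; fun_prop) (fun w => by simp [DD])
    (fun w w' => by simp only [DD, norm_sub_rev])
    (fun w w' w'' => by
      simp only [DD]
      rw [← Finset.sum_add_distrib]
      refine Finset.sum_le_sum fun i _ => ?_
      rw [← mul_add]
      exact mul_le_mul_of_nonneg_left (norm_sub_le_norm_sub_add_norm_sub _ _ _) (by positivity))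
    (fun w' hw' O hO => reach_conc hA hB hK0 m w' hw' O hO)
  have hprop : ProperSpace E := FiniteDimensional.proper_real E
  have hsc : SecondCountableTopology E := inferInstance
  obtain ⟨C', hC'⟩ := harnack l (nxt S m) V hlK hKc.isClosed.measurableSet hinv hnxc.measurable hVm
    hB' (DD lam m) (DD_nonneg hlam1 m) hq0.le hq1 hq2 (mul_nonneg hC0 hL.le) (by positivity) hV hcoup
    hirr
  refine ⟨C', fun F F1 F2 hF hF1 hF2 hsup k j => ?_⟩
  have htm := fun k => traj_meas hη hS hu₀ k
  refine superadd P l (nxt S m) V hnxc.measurable hVm hB' hlK hinv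
    (fun n ω => fun i : Fin (m + 1) => traj S η u₀ (n + i) ω) (fun n => η (n + (m + 1)))
    (fun n => measurable_pi_iff.2 fun i => htm _) (fun n => hη _) ?_ ?_ (fun n => eta_law hD hη _)
    (fun n => traj_indep hD hη hS hu₀ hindep (m + 1) n (by omega)) hC' F F1 F2 hF hF1 hF2 hsup k j
  · filter_upwards [traj_A hD hη hS hK hu₀ hsupp m] with ω hω
    exact hω 0
  · intro n ω
    refine nxt_seq S m (fun j => traj S η u₀ j ω) n _ ?_
    have : n + 1 + m = n + m + 1 := by omega
    simp only [this]
    rfl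

end fin

/-- **Theorem 2.6**: under Conditions (A)–(D) with `b_j ≠ 0`, for any initial state whose law
is supported by `𝒜`, the occupation measures
`ζ_k^m = k⁻¹ ∑_{n=0}^{k-1} δ_{(u_n,…,u_{n+m-1})}`, concentrated on `𝒜^{(m)}`, satisfy the LDP
with a good rate function `I_m(σ) = sup_V (⟨V,σ⟩ - Q_m(V))`, where `Q_m` is a `1`-Lipschitz
convex function with `Q_m(C) = C` on constants. -/
theorem statement3
    {H : Type} [NormedAddCommGroup H] [InnerProductSpace ℝ H] [CompleteSpace H]
    [SecondCountableTopology H] [MeasurableSpace H] [BorelSpace H]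
    {Ω : Type} [MeasurableSpace Ω] (P : Measure Ω) [IsProbabilityMeasure P]
    (S : H → H) (e : HilbertBasis ℕ ℝ H)
    (η : ℕ → Ω → H) (hηmeas : ∀ k, Measurable (η k))
    (b : ℕ → ℝ) (ξ : ℕ → ℕ → Ω → ℝ) (p : ℕ → ℝ → ℝ)
    (K : Set H) (hK : K = msupp (Measure.map (η 1) P)) (hKcomp : IsCompact K)
    (hA : CondA S) (hB : CondB S K) (hC : CondC S e) (hD : CondD P e η b ξ p)
    (hb : ∀ j, b j ≠ 0)
    (u₀ : Ω → H) (hu₀ : Measurable u₀)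
    (hindep : IndepFun u₀ (fun ω (k : ℕ) => η k ω) P)
    (hsupp : Measure.map u₀ P (attainDom S K {0}) = 1)
    (m : ℕ) (hm : 1 ≤ m) :
    ∃ Qm : ((Fin m → H) →ᵇ ℝ) → ℝ,
      -- `Q_m` is the limit of `k⁻¹ log 𝔼 exp(∑_{n=1}^k V(𝐮_n))`
      (∀ V : (Fin m → H) →ᵇ ℝ,
        Tendsto (fun k : ℕ => (k : ℝ)⁻¹ *
            Real.log (∫ ω, Real.exp (∑ n ∈ Finset.Icc 1 k,
              V (fun i : Fin m => traj S η u₀ (n + i) ω)) ∂P))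
          atTop (𝓝 (Qm V))) ∧
      ConvexOn ℝ Set.univ Qm ∧
      (∀ V₁ V₂ : (Fin m → H) →ᵇ ℝ,
        |Qm V₁ - Qm V₂| ≤
          ⨆ y : attainM S K (attainDom S K ({0} : Set H)) m,
            |V₁ (y : Fin m → H) - V₂ (y : Fin m → H)|) ∧
      (∀ c : ℝ, Qm (BoundedContinuousFunction.const (Fin m → H) c) = c) ∧
      GoodRate (fun σ : ProbabilityMeasure (Fin m → H) =>
        ⨆ V : (Fin m → H) →ᵇ ℝ,
          ENNReal.ofReal ((∫ x, V x ∂(σ : Measure (Fin m → H))) - Qm V)) ∧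
      LDPof
        (fun k F =>
          P {ω | occ (fun n (i : Fin m) => traj S η u₀ (n + i) ω) k ∈ F})
        (fun σ : ProbabilityMeasure (Fin m → H) =>
          ⨆ V : (Fin m → H) →ᵇ ℝ,
            ENNReal.ofReal ((∫ x, V x ∂(σ : Measure (Fin m → H))) - Qm V)) := by
  obtain ⟨m, rfl⟩ : ∃ n, m = n + 1 := ⟨m - 1, by omega⟩
  have hS := hA.1.continuous
  have hK0 : (0 : H) ∈ K := hK ▸ zero_msupp hD hηmeas
  have hAc := attM_compact hS m hKcomp (dom_compact hA hB hC hKcomp hK0)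
  have hxm : ∀ n, Measurable (fun ω => fun i : Fin (m + 1) => traj S η u₀ (n + i) ω) :=
    fun n => measurable_pi_iff.2 fun i => traj_meas hηmeas hS hu₀ _
  have hSA := supAdd_conc hηmeas hK hKcomp hA hB hC hD hb hu₀ hindep hsupp m
  have hAA := traj_A hD hηmeas hS hK hu₀ hsupp m
  have hne : (attainM S K (attainDom S K ({0} : Set H)) (m + 1)).Nonempty := by
    obtain ⟨ω, hω⟩ := hAA.exists
    exact ⟨_, hω 0⟩
  refine ⟨QQ P (fun n ω => fun i : Fin (m + 1) => traj S η u₀ (n + i) ω),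
    fun V => QQ_tendsto' P hxm hSA V, QQ_convex P hxm hSA, fun V V' => QQ_lip P hxm hSA hAA V V',
    fun c => QQ_const P hxm hSA c, ?_, ?_, ?_⟩
  · refine rate_good _ hAc hne fun V hV => ?_
    have h0 := QQ_const P hxm hSA 0
    have h1 := QQ_le P hxm hSA hAA V (BoundedContinuousFunction.const _ 0) (c := 0)
      (fun w hw => by simp [hV w hw])
    have h2 := QQ_le P hxm hSA hAA (BoundedContinuousFunction.const _ 0) V (c := 0)
      (fun w hw => by simp [hV w hw])
    linarith
  · exact fun F hF => upper P hxm hSA hAc hAA F hF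
  · exact fun G hG => lower P hxm hSA G hG
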